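/- arXiv:1305.6162 — 2 statements merged into one kernel-verified Lean document; each statement's English description precedes it below -/
import Mathlib

section
/- The assignment C_i ↦ Ȟ_i + q·id defines an isomorphism of ℂ(q)-algebras STL_n ≅ End_{U_q(gl(1|1))}(V^{⊗n}); equivalently, the operators C_i = Ȟ_i + q·id on V^{⊗n} satisfy the relations of STL_n, and the kernel of the surjection H_n → End_{U_q(gl(1|1))}(V^{⊗n}), H_i ↦ Ȟ_i, is generated as a two-sided ideal by the elements C_{i-1}C_{i+1}C_i((q+q^{-1})-C_{i-1})((q+q^{-1})-C_{i+1}) and ((q+q^{-1})-C_{i-1})((q+q^{-1})-C_{i+1})C_iC_{i-1}C_{i+1} for i = 2,...,n-2, where C_i = H_i + q. -/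
open scoped Classical

set_option maxHeartbeats 1000000
set_option synthInstance.maxHeartbeats 200000

noncomputable section

abbrev K : Type := RatFunc ℂ

noncomputable def q : K := RatFunc.X

/-- The quantum integer `[k] = (q^k - q^{-k})/(q - q^{-1})`. -/
noncomputable def qnum (k : ℕ) : K := (q ^ k - q⁻¹ ^ k) / (q - q⁻¹)

/-- The quantum factorial `[k]! = [k][k-1]⋯[1]`. -/
noncomputable def qfact : ℕ → K
  | 0 => 1
  | k + 1 => qnum (k + 1) * qfact k

/-- The underlying vector space of `V(a_1) ⊗ ⋯ ⊗ V(a_n)`, with standard basis indexed by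
sequences `η ∈ {0,1}^n`. -/
abbrev V (n : ℕ) : Type := (Fin n → Fin 2) → K

/-- The standard basis vector `v_η`. -/
noncomputable def eb {n : ℕ} (η : Fin n → Fin 2) : V n := fun γ => if γ = η then 1 else 0

/-- The number of `1`s in `γ` strictly before position `i` (the Koszul sign exponent). -/
def onesBefore {n : ℕ} (γ : Fin n → Fin 2) (i : Fin n) : ℕ :=
  (Finset.univ.filter (fun k => k < i ∧ γ k = 1)).card

/-- The action of `E` on `V(a_1) ⊗ ⋯ ⊗ V(a_n)` (via the iterated comultiplication
`Δ(E) = E ⊗ K⁻¹ + 1 ⊗ E`, with the Koszul sign rule). -/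
noncomputable def Eop (a : ℕ → ℕ) (n : ℕ) : Module.End K (V n) where
  toFun f := fun γ => ∑ i : Fin n,
    if γ i = 0 then
      ((-1 : K) ^ onesBefore γ i) * qnum (a i)
        * q ^ (-((∑ j ∈ Finset.univ.filter (fun j => i < j), a j : ℕ) : ℤ))
        * f (Function.update γ i 1)
    else 0
  map_add' f g := by
    funext γ
    simp only [Pi.add_apply, ← Finset.sum_add_distrib]
    refine Finset.sum_congr rfl fun i _ => ?_
    split_ifs <;> ring
  map_smul' c f := by
    funext γ
    simp only [Pi.smul_apply, smul_eq_mul, RingHom.id_apply, Finset.mul_sum]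
    refine Finset.sum_congr rfl fun i _ => ?_
    split_ifs <;> ring

/-- The action of `F` on `V(a_1) ⊗ ⋯ ⊗ V(a_n)` (via the iterated comultiplication
`Δ(F) = F ⊗ 1 + K ⊗ F`, with the Koszul sign rule). -/
noncomputable def Fop (a : ℕ → ℕ) (n : ℕ) : Module.End K (V n) where
  toFun f := fun γ => ∑ i : Fin n,
    if γ i = 1 then
      ((-1 : K) ^ onesBefore γ i)
        * q ^ (∑ j ∈ Finset.univ.filter (fun j => j < i), a j)
        * f (Function.update γ i 0)
    else 0
  map_add' f g := by
    funext γ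
    simp only [Pi.add_apply, ← Finset.sum_add_distrib]
    refine Finset.sum_congr rfl fun i _ => ?_
    split_ifs <;> ring
  map_smul' c f := by
    funext γ
    simp only [Pi.smul_apply, smul_eq_mul, RingHom.id_apply, Finset.mul_sum]
    refine Finset.sum_congr rfl fun i _ => ?_
    split_ifs <;> ring

/-- The action of `q^h` for `h = c·h₁ + d·h₂` on `V(a_1) ⊗ ⋯ ⊗ V(a_n)`:
the basis vector `v^{a_i}_0` has weight `a_i ε₁` and `v^{a_i}_1` has weight
`(a_i - 1) ε₁ + ε₂`. -/
noncomputable def Kop (a : ℕ → ℕ) (n : ℕ) (c d : ℤ) : Module.End K (V n) where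
  toFun f := fun γ =>
    q ^ (∑ i : Fin n, (if γ i = 0 then c * (a i : ℤ) else c * ((a i : ℤ) - 1) + d)) * f γ
  map_add' f g := by
    funext γ
    simp only [Pi.add_apply]
    ring
  map_smul' c' f := by
    funext γ
    simp only [Pi.smul_apply, smul_eq_mul, RingHom.id_apply]
    ring

/-- The endomorphism `Ȟ_i` of `V^{⊗n}` (acting on the `i`-th and `(i+1)`-st tensor
factors, 0-based). -/
noncomputable def Hop (n : ℕ) (i : ℕ) (hi : i + 1 < n) : Module.End K (V n) where
  toFun f := fun γ =>
    if γ ⟨i, by omega⟩ = 0 ∧ γ ⟨i + 1, hi⟩ = 0 then q⁻¹ * f γ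
    else if γ ⟨i, by omega⟩ = 1 ∧ γ ⟨i + 1, hi⟩ = 1 then (-q) * f γ
    else if γ ⟨i, by omega⟩ = 0 ∧ γ ⟨i + 1, hi⟩ = 1 then
      f (fun k => γ (Equiv.swap ⟨i, by omega⟩ ⟨i + 1, hi⟩ k))
    else (q⁻¹ - q) * f γ + f (fun k => γ (Equiv.swap ⟨i, by omega⟩ ⟨i + 1, hi⟩ k))
  map_add' f g := by
    funext γ
    simp only [Pi.add_apply]
    split_ifs <;> ring
  map_smul' c f := by
    funext γ
    simp only [Pi.smul_apply, smul_eq_mul, RingHom.id_apply]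
    split_ifs <;> ring

/-- The constant sequence `(1,1,…)`: all tensor factors are the vector representation. -/
def one' : ℕ → ℕ := fun _ => 1

/-!
STATEMENT 8: `C_i ↦ Ȟ_i + q·id` defines an isomorphism of `ℂ(q)`-algebras
`STL_n ≅ End_{U_q(gl(1|1))}(V^{⊗n})`; equivalently, the kernel of the surjection
`H_n → End_{U_q(gl(1|1))}(V^{⊗n})`, `H_i ↦ Ȟ_i`, is generated as a two-sided ideal by
the elements `C_{i-1}C_{i+1}C_i((q+q⁻¹)-C_{i-1})((q+q⁻¹)-C_{i+1})` and
`((q+q⁻¹)-C_{i-1})((q+q⁻¹)-C_{i+1})C_iC_{i-1}C_{i+1}` (`C_i = H_i + q`).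

The Hecke algebra `H_n` and the super Temperley–Lieb algebra `STL_n` are presented
concretely as quotients (`RingQuot`) of the free algebra on `n-1` generators by their
defining relations.
-/

/-- The defining relations of the Hecke algebra `H_n`. -/
inductive heckeRel (n : ℕ) : FreeAlgebra K (Fin (n - 1)) → FreeAlgebra K (Fin (n - 1)) → Prop
  | comm (i j : Fin (n - 1)) (h : (i : ℕ) + 1 < j ∨ (j : ℕ) + 1 < i) :
      heckeRel n (FreeAlgebra.ι K i * FreeAlgebra.ι K j)
        (FreeAlgebra.ι K j * FreeAlgebra.ι K i)
  | braid (i j : Fin (n - 1)) (h : (j : ℕ) = (i : ℕ) + 1) :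
      heckeRel n (FreeAlgebra.ι K i * FreeAlgebra.ι K j * FreeAlgebra.ι K i)
        (FreeAlgebra.ι K j * FreeAlgebra.ι K i * FreeAlgebra.ι K j)
  | quad (i : Fin (n - 1)) :
      heckeRel n (FreeAlgebra.ι K i * FreeAlgebra.ι K i)
        ((q⁻¹ - q) • FreeAlgebra.ι K i + 1)

/-- The Hecke algebra `H_n` of the symmetric group `S_n`, presented by generators and
relations. -/
abbrev HeckeAlg (n : ℕ) : Type := RingQuot (heckeRel n)

/-- The standard generator `H_i` of the Hecke algebra. -/
noncomputable def Hgen (n : ℕ) (i : Fin (n - 1)) : HeckeAlg n :=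
  RingQuot.mkAlgHom K (heckeRel n) (FreeAlgebra.ι K i)

/-- The defining relations of the super Temperley–Lieb algebra `STL_n`. -/
inductive stlRel (n : ℕ) : FreeAlgebra K (Fin (n - 1)) → FreeAlgebra K (Fin (n - 1)) → Prop
  | sq (i : Fin (n - 1)) :
      stlRel n (FreeAlgebra.ι K i * FreeAlgebra.ι K i) ((q + q⁻¹) • FreeAlgebra.ι K i)
  | comm (i j : Fin (n - 1)) (h : (i : ℕ) + 1 < j ∨ (j : ℕ) + 1 < i) :
      stlRel n (FreeAlgebra.ι K i * FreeAlgebra.ι K j)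
        (FreeAlgebra.ι K j * FreeAlgebra.ι K i)
  | braid (i j : Fin (n - 1)) (h : (j : ℕ) = (i : ℕ) + 1) :
      stlRel n (FreeAlgebra.ι K i * FreeAlgebra.ι K j * FreeAlgebra.ι K i - FreeAlgebra.ι K i)
        (FreeAlgebra.ι K j * FreeAlgebra.ι K i * FreeAlgebra.ι K j - FreeAlgebra.ι K j)
  | z1 (a b c : Fin (n - 1)) (hb : (b : ℕ) = (a : ℕ) + 1) (hc : (c : ℕ) = (a : ℕ) + 2) :
      stlRel n (FreeAlgebra.ι K a * FreeAlgebra.ι K c * FreeAlgebra.ι K b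
          * ((q + q⁻¹) • 1 - FreeAlgebra.ι K a) * ((q + q⁻¹) • 1 - FreeAlgebra.ι K c)) 0
  | z2 (a b c : Fin (n - 1)) (hb : (b : ℕ) = (a : ℕ) + 1) (hc : (c : ℕ) = (a : ℕ) + 2) :
      stlRel n (((q + q⁻¹) • 1 - FreeAlgebra.ι K a) * ((q + q⁻¹) • 1 - FreeAlgebra.ι K c)
          * FreeAlgebra.ι K b * FreeAlgebra.ι K a * FreeAlgebra.ι K c) 0

/-- The super Temperley–Lieb algebra `STL_n`, presented by generators and relations. -/
abbrev STL (n : ℕ) : Type := RingQuot (stlRel n)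

/-- The generator `C_i` of `STL_n`. -/
noncomputable def Cgen (n : ℕ) (i : Fin (n - 1)) : STL n :=
  RingQuot.mkAlgHom K (stlRel n) (FreeAlgebra.ι K i)

/-- The algebra `End_{U_q(gl(1|1))}(V^{⊗n})` of endomorphisms of `V^{⊗n}` commuting with
the action of `E`, `F` and all `q^h`. -/
noncomputable def EndUq (n : ℕ) : Subalgebra K (Module.End K (V n)) :=
  Subalgebra.centralizer K
    ({Eop one' n, Fop one' n} ∪ {X | ∃ c d : ℤ, X = Kop one' n c d})

/-- `C_i` in the Hecke algebra: `C_i = H_i + q`. -/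
noncomputable def CH (n : ℕ) (i : Fin (n - 1)) : HeckeAlg n := Hgen n i + q • 1

set_option linter.unusedSimpArgs false
set_option linter.unusedSectionVars false
set_option linter.unusedVariables false

set_option linter.unusedSimpArgs false
namespace STLaux
section local_lemmas
variable {F : Type*} [Field F] {A : Type*} [Ring A] [Algebra F A]

/-- next occupation-number idempotent -/
def fN (l u : F) (N D : A) : A := l⁻¹ • ((1 - N) * D * (1 - N) + N * D * N - u • N)

/-- local seminormal relation -/
structure PRel (l u : F) (N D : A) : Prop where
  idem : N * N = N
  sq : D * D = (l + u) • D
  rel : D * N * D - u • D = (l + u) • (N * D * N - u • N)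

variable {l u : F} {N D : A}

theorem PRel.idem' (h : PRel l u N D) (x : A) : N * (N * x) = N * x := by
  rw [← mul_assoc, h.idem]
theorem PRel.sq' (h : PRel l u N D) (x : A) : D * (D * x) = (l + u) • (D * x) := by
  rw [← mul_assoc, h.sq, smul_mul_assoc]
theorem PRel.rel1 (h : PRel l u N D) :
    D * (N * D) = u • D + (l + u) • (N * (D * N)) - ((l + u) * u) • N := by
  have := h.rel
  simp only [mul_assoc] at this
  rw [sub_eq_iff_eq_add] at this
  rw [this]
  module
theorem PRel.rel1' (h : PRel l u N D) (x : A) :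
    D * (N * (D * x)) = u • (D * x) + (l + u) • (N * (D * (N * x))) - ((l + u) * u) • (N * x) := by
  have := congrArg (· * x) h.rel1
  simpa only [mul_assoc, add_mul, sub_mul, smul_mul_assoc] using this

theorem PRel.fN_idem (h : PRel l u N D) (hl : l ≠ 0) :
    fN l u N D * fN l u N D = fN l u N D := by
  simp only [fN, mul_add, add_mul, mul_sub, sub_mul, mul_one, one_mul, smul_mul_assoc,
    mul_smul_comm, smul_add, smul_sub, mul_assoc, h.idem, h.idem', h.sq, h.sq', h.rel1, h.rel1']
  match_scalars <;> field_simp <;> ring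

theorem PRel.fN_comm (h : PRel l u N D) : fN l u N D * N = N * fN l u N D := by
  simp only [fN, mul_add, add_mul, mul_sub, sub_mul, mul_one, one_mul, smul_mul_assoc,
    mul_smul_comm, smul_add, smul_sub, mul_assoc, h.idem, h.idem', h.sq, h.sq', h.rel1, h.rel1']
  module

theorem PRel.fN_sum (h : PRel l u N D) (hl : l ≠ 0) :
    D * (N + fN l u N D) = (N + fN l u N D) * D := by
  simp only [fN, mul_add, add_mul, mul_sub, sub_mul, mul_one, one_mul, smul_mul_assoc,
    mul_smul_comm, smul_add, smul_sub, mul_assoc, h.idem, h.idem', h.sq, h.sq', h.rel1, h.rel1']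
  match_scalars <;> field_simp <;> ring

theorem PRel.D11 (h : PRel l u N D) (hl : l ≠ 0) :
    D * (N * fN l u N D) = (l + u) • (N * fN l u N D) := by
  simp only [fN, mul_add, add_mul, mul_sub, sub_mul, mul_one, one_mul, smul_mul_assoc,
    mul_smul_comm, smul_add, smul_sub, mul_assoc, h.idem, h.idem', h.sq, h.sq', h.rel1, h.rel1']
  match_scalars <;> field_simp <;> ring

theorem PRel.D11' (h : PRel l u N D) (hl : l ≠ 0) :
    N * fN l u N D * D = (l + u) • (N * fN l u N D) := by
  simp only [fN, mul_add, add_mul, mul_sub, sub_mul, mul_one, one_mul, smul_mul_assoc,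
    mul_smul_comm, smul_add, smul_sub, mul_assoc, h.idem, h.idem', h.sq, h.sq', h.rel1, h.rel1']
  match_scalars <;> field_simp <;> ring

theorem PRel.D00 (h : PRel l u N D) (hl : l ≠ 0) :
    D * ((1 - N) * (1 - fN l u N D)) = 0 := by
  simp only [fN, mul_add, add_mul, mul_sub, sub_mul, mul_one, one_mul, smul_mul_assoc,
    mul_smul_comm, smul_add, smul_sub, mul_assoc, h.idem, h.idem', h.sq, h.sq', h.rel1, h.rel1']
  match_scalars <;> field_simp <;> ring

theorem PRel.D00' (h : PRel l u N D) (hl : l ≠ 0) :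
    (1 - N) * (1 - fN l u N D) * D = 0 := by
  simp only [fN, mul_add, add_mul, mul_sub, sub_mul, mul_one, one_mul, smul_mul_assoc,
    mul_smul_comm, smul_add, smul_sub, mul_assoc, h.idem, h.idem', h.sq, h.sq', h.rel1, h.rel1']
  match_scalars <;> field_simp <;> ring

/-- the block of `D` with `N = 0` on both sides -/
theorem PRel.b00 (h : PRel l u N D) (hl : l ≠ 0) :
    (1 - N) * D * (1 - N) = l • ((1 - N) * fN l u N D) := by
  simp only [fN, mul_add, add_mul, mul_sub, sub_mul, mul_one, one_mul, smul_mul_assoc,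
    mul_smul_comm, smul_add, smul_sub, mul_assoc, h.idem, h.idem', h.sq, h.sq', h.rel1, h.rel1']
  match_scalars <;> field_simp <;> ring

theorem PRel.b11 (h : PRel l u N D) (hl : l ≠ 0) :
    N * D * N = l • (N * fN l u N D) + u • N := by
  simp only [fN, mul_add, add_mul, mul_sub, sub_mul, mul_one, one_mul, smul_mul_assoc,
    mul_smul_comm, smul_add, smul_sub, mul_assoc, h.idem, h.idem', h.sq, h.sq', h.rel1, h.rel1']
  match_scalars <;> field_simp <;> ring

theorem e10_of_Z {N D B : A} (δ : F) (hN : N * N = N) (hNB : B * N = N * B)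
    (hbr : D * B * D - D = B * D * B - B)
    (hZ : B * (N * D * (1 - N)) * (δ • 1 - B) = 0) :
    δ • (B * (N * D * (1 - N))) = N * D * (1 - N) * B * ((1 - N) * D * (1 - N))
      + N * D * N * B * (N * D * (1 - N)) - N * D * (1 - N) := by
  have hN' : ∀ x : A, N * (N * x) = N * x := fun x => by rw [← mul_assoc, hN]
  have hNB' : ∀ x : A, B * (N * x) = N * (B * x) := fun x => by rw [← mul_assoc, hNB, mul_assoc]
  have h1 := congrArg (fun z => N * z * (1 - N)) hbr
  simp only [mul_add, add_mul, mul_sub, sub_mul, mul_one, one_mul, smul_mul_assoc,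
    mul_smul_comm, smul_add, smul_sub, mul_assoc, hN, hN', hNB, hNB', sub_self] at h1 hZ ⊢
  linear_combination (norm := module) hZ - h1

theorem e01_of_Z {N D B : A} (δ : F) (hN : N * N = N) (hNB : B * N = N * B)
    (hbr : D * B * D - D = B * D * B - B)
    (hZ : (δ • 1 - B) * ((1 - N) * D * N) * B = 0) :
    δ • (((1 - N) * D * N) * B) = ((1 - N) * D * (1 - N)) * B * ((1 - N) * D * N)
      + ((1 - N) * D * N) * B * (N * D * N) - (1 - N) * D * N := by
  have hN' : ∀ x : A, N * (N * x) = N * x := fun x => by rw [← mul_assoc, hN]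
  have hNB' : ∀ x : A, B * (N * x) = N * (B * x) := fun x => by rw [← mul_assoc, hNB, mul_assoc]
  have h1 := congrArg (fun z => (1 - N) * z * N) hbr
  simp only [mul_add, add_mul, mul_sub, sub_mul, mul_one, one_mul, smul_mul_assoc,
    mul_smul_comm, smul_add, smul_sub, mul_assoc, hN, hN', hNB, hNB', sub_self] at h1 hZ ⊢
  linear_combination (norm := module) hZ - h1

/-- products of off-diagonal blocks -/
theorem PRel.a01a10 (h : PRel l u N D) (hl : l ≠ 0) :
    ((1 - N) * D * N) * (N * D * (1 - N)) = (l * u) • ((1 - N) * fN l u N D) := by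
  simp only [fN, mul_add, add_mul, mul_sub, sub_mul, mul_one, one_mul, smul_mul_assoc,
    mul_smul_comm, smul_add, smul_sub, mul_assoc, h.idem, h.idem', h.sq, h.sq', h.rel1, h.rel1']
  match_scalars <;> field_simp <;> ring

theorem PRel.a10a01 (h : PRel l u N D) (hl : l ≠ 0) :
    (N * D * (1 - N)) * ((1 - N) * D * N) = (l * u) • (N * (1 - fN l u N D)) := by
  simp only [fN, mul_add, add_mul, mul_sub, sub_mul, mul_one, one_mul, smul_mul_assoc,
    mul_smul_comm, smul_add, smul_sub, mul_assoc, h.idem, h.idem', h.sq, h.sq', h.rel1, h.rel1']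
  match_scalars <;> field_simp <;> ring

theorem PRel.a10p (h : PRel l u N D) (hl : l ≠ 0) :
    (N * D * (1 - N)) * fN l u N D = N * D * (1 - N) := by
  simp only [fN, mul_add, add_mul, mul_sub, sub_mul, mul_one, one_mul, smul_mul_assoc,
    mul_smul_comm, smul_add, smul_sub, mul_assoc, h.idem, h.idem', h.sq, h.sq', h.rel1, h.rel1']
  match_scalars <;> field_simp <;> ring

theorem PRel.pa10 (h : PRel l u N D) (hl : l ≠ 0) :
    fN l u N D * (N * D * (1 - N)) = 0 := by
  simp only [fN, mul_add, add_mul, mul_sub, sub_mul, mul_one, one_mul, smul_mul_assoc,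
    mul_smul_comm, smul_add, smul_sub, mul_assoc, h.idem, h.idem', h.sq, h.sq', h.rel1, h.rel1']
  match_scalars <;> field_simp <;> ring

theorem PRel.pa01 (h : PRel l u N D) (hl : l ≠ 0) :
    fN l u N D * ((1 - N) * D * N) = (1 - N) * D * N := by
  simp only [fN, mul_add, add_mul, mul_sub, sub_mul, mul_one, one_mul, smul_mul_assoc,
    mul_smul_comm, smul_add, smul_sub, mul_assoc, h.idem, h.idem', h.sq, h.sq', h.rel1, h.rel1']
  match_scalars <;> field_simp <;> ring

theorem PRel.a01p (h : PRel l u N D) (hl : l ≠ 0) :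
    ((1 - N) * D * N) * fN l u N D = 0 := by
  simp only [fN, mul_add, add_mul, mul_sub, sub_mul, mul_one, one_mul, smul_mul_assoc,
    mul_smul_comm, smul_add, smul_sub, mul_assoc, h.idem, h.idem', h.sq, h.sq', h.rel1, h.rel1']
  match_scalars <;> field_simp <;> ring

/-- Induction step for the relation `PRel`. -/
theorem PRel.step {B : A} {l' u' : F} (h : PRel l u N D) (hl : l ≠ 0) (hd : l' + u' = l + u)
    (hu : u' * l = 1) (hB : B * B = (l + u) • B) (hNB : B * N = N * B)
    (hbr : D * B * D - D = B * D * B - B)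
    (hZ : B * (N * D * (1 - N)) * ((l + u) • 1 - B) = 0) :
    PRel l' u' (fN l u N D) B := by
  have hu' : u' = l⁻¹ := by field_simp; linear_combination hu
  have e10 := e10_of_Z (l + u) h.idem hNB hbr hZ
  have hN := h.idem
  have hN' := h.idem'
  have hNB' : ∀ x : A, B * (N * x) = N * (B * x) := fun x => by rw [← mul_assoc, hNB, mul_assoc]
  have e00 := congrArg (fun z => (1 - N) * z * (1 - N)) hbr
  have e11 := congrArg (fun z => N * z * N) hbr
  have f00 : (1 - N) * (D * B * D) * (1 - N) = ((1 - N) * D * (1 - N)) * B * ((1 - N) * D * (1 - N))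
      + ((1 - N) * D * N) * B * (N * D * (1 - N)) := by
    simp only [mul_add, add_mul, mul_sub, sub_mul, mul_one, one_mul, mul_assoc, hN, hN', hNB, hNB']
    abel
  have f11 : N * (D * B * D) * N = (N * D * (1 - N)) * B * ((1 - N) * D * N)
      + (N * D * N) * B * (N * D * N) := by
    simp only [mul_add, add_mul, mul_sub, sub_mul, mul_one, one_mul, mul_assoc, hN, hN', hNB, hNB']
    abel
  have g00 : (1 - N) * (B * D * B) * (1 - N) = B * ((1 - N) * D * (1 - N)) * B := by
    simp only [mul_add, add_mul, mul_sub, sub_mul, mul_one, one_mul, mul_assoc, hN, hN', hNB, hNB']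
  have g11 : N * (B * D * B) * N = B * (N * D * N) * B := by
    simp only [mul_add, add_mul, mul_sub, sub_mul, mul_one, one_mul, mul_assoc, hN, hN', hNB, hNB']
  have i0 := congrArg (fun z => ((1 - N) * D * N) * z) e10
  have i1 := congrArg (fun z => z * ((1 - N) * D * N)) e10
  simp only [mul_sub (1 - N), sub_mul _ _ (1 - N), f00, g00] at e00
  simp only [mul_sub N, sub_mul _ _ N, f11, g11] at e11
  have k1 := h.a01a10 hl
  have k2 := h.a10a01 hl
  have k3 := h.a10p hl
  have k4 := h.pa10 hl
  have k5 := h.pa01 hl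
  have k6 := h.a01p hl
  have c := h.fN_comm
  have pp := h.fN_idem hl
  have b00 := h.b00 hl
  have b11 := h.b11 hl
  have hNx : N * ((1 - N) * D * N) = 0 := by
    simp only [mul_add, add_mul, mul_sub, sub_mul, mul_one, one_mul, mul_assoc, hN, hN', sub_self]
  have hxN : ((1 - N) * D * N) * N = (1 - N) * D * N := by
    simp only [mul_assoc, hN]
  have hyN : (N * D * (1 - N)) * N = 0 := by
    simp only [mul_add, add_mul, mul_sub, sub_mul, mul_one, one_mul, mul_assoc, hN, hN', sub_self]
  have hNy : N * (N * D * (1 - N)) = (N * D * (1 - N)) := by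
    simp only [mul_assoc, hN, hN']
  simp only [b00, b11] at e00 e11 i0 i1
  clear f00 f11 g00 g11 e10 b00 b11
  generalize (1 - N) * D * N = x at *
  generalize N * D * (1 - N) = y at *
  generalize fN l u N D = p at *
  have k1' : ∀ z, x * (y * z) = (l * u) • ((1 - N) * p) * z := fun z => by rw [← mul_assoc, k1]
  have k3' : ∀ z, y * (p * z) = y * z := fun z => by rw [← mul_assoc, k3]
  have k5' : ∀ z, p * (x * z) = x * z := fun z => by rw [← mul_assoc, k5]
  have k6' : ∀ z, x * (p * z) = 0 := fun z => by rw [← mul_assoc, k6, zero_mul]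
  have c' : ∀ z, p * (N * z) = N * (p * z) := fun z => by rw [← mul_assoc, c, mul_assoc]
  have pp' : ∀ z, p * (p * z) = p * z := fun z => by rw [← mul_assoc, pp]
  have hxN' : ∀ z, x * (N * z) = x * z := fun z => by rw [← mul_assoc, hxN]
  have hyN' : ∀ z, y * (N * z) = 0 := fun z => by rw [← mul_assoc, hyN, zero_mul]
  have T0 : (1 - N) * (B * p * B - u' • B - (l' + u') • (p * B * p - u' • p)) = 0 := by
    subst hu'
    simp only [mul_add, add_mul, mul_sub, sub_mul, mul_one, one_mul, smul_mul_assoc,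
      mul_smul_comm, smul_add, smul_sub, mul_assoc, hN, hN', hNB, hNB', c, c', pp, pp', k1, k1',
      hxN, hxN', k6, k6', smul_zero, mul_zero, zero_mul, sub_zero, hd, add_zero, zero_add] at i0 e00 ⊢
    linear_combination (norm := skip) (-l⁻¹) • e00 + (l⁻¹ * l⁻¹) • i0
    match_scalars <;> field_simp <;> ring
  have T1 : N * (B * p * B - u' • B - (l' + u') • (p * B * p - u' • p)) = 0 := by
    subst hu'
    simp only [mul_add, add_mul, mul_sub, sub_mul, mul_one, one_mul, smul_mul_assoc,
      mul_smul_comm, smul_add, smul_sub, mul_assoc, hN, hN', hNB, hNB', c, c', pp, pp', k2, k5, k5',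
      hNx, hyN, hyN', hNy,
      smul_zero, mul_zero, zero_mul, sub_zero, hB, hd, add_zero, zero_add] at i1 e11 ⊢
    linear_combination (norm := skip) (-l⁻¹) • e11 - (l⁻¹ * l⁻¹) • i1
    match_scalars <;> field_simp <;> ring
  refine ⟨pp, by rw [hB, hd], ?_⟩
  have := congrArg₂ (· + ·) T0 T1
  simp only [← add_mul, sub_add_cancel, one_mul, add_zero] at this
  exact sub_eq_zero.mp this

end local_lemmas
end STLaux

namespace STLaux
section zstep
variable {F : Type*} [Field F] {A : Type*} [Ring A] [Algebra F A]
variable {l u : F} {N D B G : A}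

theorem fN_commute {x : A} (h1 : Commute x N) (h2 : Commute x D) : Commute x (fN l u N D) := by
  have h3 : Commute x (1 - N) := (Commute.one_right x).sub_right h1
  unfold fN
  exact ((((h3.mul_right h2).mul_right h3).add_right
    ((h1.mul_right h2).mul_right h1)).sub_right (h1.smul_right u)).smul_right _

theorem PRel.zstep1 (h : PRel l u N D) (hl : l ≠ 0) (hd : l + u ≠ 0)
    (hNB : Commute N B) (hNG : Commute N G) (hDG : Commute D G)
    (hz : D * G * B * ((l + u) • 1 - D) * ((l + u) • 1 - G) = 0) :
    G * (fN l u N D * B * (1 - fN l u N D)) * ((l + u) • 1 - G) * (1 - N) = 0 := by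
  have pp := h.fN_idem hl
  have hNp : Commute N (fN l u N D) := h.fN_comm.symm
  have hpG : Commute G (fN l u N D) := fN_commute hNG.symm hDG.symm
  have k00 := h.D00 hl
  have b00 := h.b00 hl
  have hN := h.idem
  generalize fN l u N D = p at *
  have iM : (1 - N) * (1 - N) = 1 - N := by
    simp only [mul_sub, sub_mul, mul_one, one_mul, hN]; abel
  have hMB : Commute (1 - N) B := (Commute.one_left _).sub_left hNB
  have hMG : Commute (1 - N) G := (Commute.one_left _).sub_left hNG
  have hMp : Commute (1 - N) p := (Commute.one_left _).sub_left hNp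
  have hMC : Commute (1 - N) ((l + u) • 1 - G) :=
    ((Commute.one_right _).smul_right _).sub_right hMG
  have hMp' : Commute (1 - N) (1 - p) := (Commute.one_right _).sub_right hMp
  have hDMp : D * (1 - N) * p = D * (1 - N) := by
    have := k00
    rw [← mul_assoc, mul_sub, mul_one, sub_eq_zero] at this
    exact this.symm
  have hpC : Commute (1 - p) ((l + u) • 1 - G) :=
    ((Commute.one_right _).smul_right _).sub_right
      ((Commute.one_left _).sub_left hpG.symm)
  set M := 1 - N with hM
  set C := (l + u) • (1 : A) - G with hC
  set y := G * (p * B * (1 - p)) * C * M with hy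
  have y1 : M * y = y := by
    have : Commute M (G * (p * B * (1 - p)) * C) :=
      (hMG.mul_right ((hMp.mul_right hMB).mul_right hMp')).mul_right hMC
    rw [hy, ← mul_assoc, this.eq, mul_assoc, iM]
  have y2 : p * y = y := by
    rw [hy]
    simp only [← mul_assoc]
    rw [← hpG.eq, mul_assoc G p p, pp]
  have e1 : D * y = D * G * B * (M * (1 - p)) * C := by
    rw [← y1, hy]
    have a1 : G * (p * B * (1 - p)) * C * M = p * (G * B * (1 - p) * C * M) := by
      simp only [← mul_assoc]; rw [hpG.eq]
    have a2 : M * (G * B * (1 - p) * C * M) = G * B * (M * (1 - p)) * C := by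
      have a3 : Commute M (G * B) := hMG.mul_right hMB
      have a4 : Commute M ((1 - p) * C) := hMp'.mul_right hMC
      calc M * (G * B * (1 - p) * C * M) = (M * (G * B)) * (((1 - p) * C) * M) := by
            simp only [mul_assoc]
        _ = G * B * (M * M) * ((1 - p) * C) := by
            rw [a3.eq, ← a4.eq]; simp only [mul_assoc]
        _ = _ := by rw [iM]; simp only [mul_assoc]
    rw [a1, ← mul_assoc M p, ← mul_assoc D, ← mul_assoc D, hDMp, mul_assoc D, a2]
    simp only [mul_assoc]
  have e2 : (l + u) • (M * (1 - p)) = ((l + u) • 1 - D) * (M * (1 - p)) := by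
    rw [sub_mul ((l + u) • 1), k00, sub_zero, smul_mul_assoc, one_mul]
  have e3 : (l + u) • (D * y) = 0 := by
    have : Commute (M * (1 - p)) C := hMC.mul_left hpC
    rw [e1, ← smul_mul_assoc, ← mul_smul_comm, e2]
    calc D * G * B * (((l + u) • 1 - D) * (M * (1 - p))) * C
        = D * G * B * ((l + u) • 1 - D) * (M * (1 - p) * C) := by simp only [mul_assoc]
      _ = D * G * B * ((l + u) • 1 - D) * C * (M * (1 - p)) := by
          rw [this.eq]; simp only [mul_assoc]
      _ = 0 := by rw [hz, zero_mul]
  have e4 : D * y = 0 := (smul_eq_zero_iff_right hd).mp e3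
  have e5 : l • y = 0 := by
    calc l • y = (l • (M * p)) * y := by rw [smul_mul_assoc, mul_assoc, y2, y1]
      _ = M * D * M * y := by rw [b00]
      _ = M * (D * y) := by rw [mul_assoc, y1, mul_assoc]
      _ = 0 := by rw [e4, mul_zero]
  exact (smul_eq_zero_iff_right hl).mp e5

theorem PRel.zstep2 (h : PRel l u N D) (hl : l ≠ 0) (hd : l + u ≠ 0) (hu : u ≠ 0 ∨ N = 0)
    (hNB : Commute N B) (hNG : Commute N G) (hDG : Commute D G)
    (hz : D * G * B * ((l + u) • 1 - D) * ((l + u) • 1 - G) = 0) :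
    G * (fN l u N D * B * (1 - fN l u N D)) * ((l + u) • 1 - G) * N = 0 := by
  rcases hu with hu | hu
  swap
  · rw [hu, mul_zero]
  have pp := h.fN_idem hl
  have hNp : Commute N (fN l u N D) := h.fN_comm.symm
  have hpG : Commute G (fN l u N D) := fN_commute hNG.symm hDG.symm
  have k11 := h.D11' hl
  have b11 := h.b11 hl
  have k4 := h.pa10 hl
  have hN := h.idem
  have hsq := h.sq
  generalize fN l u N D = p at *
  have hNp' : Commute N (1 - p) := (Commute.one_right _).sub_right hNp
  have hNC : Commute N ((l + u) • 1 - G) :=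
    ((Commute.one_right _).smul_right _).sub_right hNG
  have hDC : Commute D ((l + u) • 1 - G) :=
    ((Commute.one_right _).smul_right _).sub_right hDG
  have hpC : Commute (1 - p) ((l + u) • 1 - G) :=
    ((Commute.one_right _).smul_right _).sub_right
      ((Commute.one_left _).sub_left hpG.symm)
  have hz' : D * G * B * D * ((l + u) • 1 - G) = (l + u) • (D * G * B * ((l + u) • 1 - G)) := by
    rw [mul_sub (D * G * B), sub_mul, sub_eq_zero] at hz
    rw [← hz, mul_smul_comm, mul_one, smul_mul_assoc]
  have hNN : N * (1 - N) = 0 := by rw [mul_sub, mul_one, hN, sub_self]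
  set C := (l + u) • (1 : A) - G with hC
  set y := G * (p * B * (1 - p)) * C * N with hy
  have y0 : y = G * p * B * C * ((1 - p) * N) := by
    rw [hy]
    calc G * (p * B * (1 - p)) * C * N = G * p * B * ((1 - p) * C) * N := by
          simp only [mul_assoc]
      _ = _ := by rw [hpC.eq]; simp only [mul_assoc]
  have qp : (1 - p) * p = 0 := by rw [sub_mul, one_mul, pp, sub_self]
  have e1 : y * D * N = u • y := by
    have : (1 - p) * N * D * N = u • ((1 - p) * N) := by
      rw [mul_assoc (1 - p), mul_assoc (1 - p), b11, mul_add, mul_smul_comm, mul_smul_comm,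
        hNp.eq, ← mul_assoc, qp, zero_mul, smul_zero, zero_add]
    rw [y0]
    calc G * p * B * C * ((1 - p) * N) * D * N = G * p * B * C * ((1 - p) * N * D * N) := by
          simp only [mul_assoc]
      _ = _ := by rw [this, mul_smul_comm]
  have e2 : y * D * (1 - N) = 0 := by
    have t1 : (1 - p) * N * D * (1 - N) = N * D * (1 - N) := by
      have : (1 - p) * N * D * (1 - N) = N * D * (1 - N) - p * (N * D * (1 - N)) := by
        rw [mul_assoc (1 - p), mul_assoc (1 - p), sub_mul, one_mul]
      rw [this, k4, sub_zero]
    have t2 : y * D * (1 - N) = N * p * (G * B * C * D * (1 - N)) := by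
      rw [y0]
      have cN : Commute N (p * (G * B * C)) :=
        hNp.mul_right ((hNG.mul_right hNB).mul_right hNC)
      calc G * p * B * C * ((1 - p) * N) * D * (1 - N)
          = (G * p) * B * C * ((1 - p) * N * D * (1 - N)) := by simp only [mul_assoc]
        _ = p * (G * B * C) * N * D * (1 - N) := by
            rw [t1, hpG.eq]; simp only [mul_assoc]
        _ = _ := by rw [← cN.eq]; simp only [mul_assoc]
    have t3 : (l + u) • (y * D * (1 - N)) = 0 := by
      rw [t2, ← smul_mul_assoc, ← k11]
      calc N * p * D * (G * B * C * D * (1 - N))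
          = N * p * (D * G * B * (C * D) * (1 - N)) := by simp only [mul_assoc]
        _ = N * p * ((D * G * B * D * C) * (1 - N)) := by
            rw [← hDC.eq]; simp only [mul_assoc]
        _ = (l + u) • (N * p * D * (G * B * C * (1 - N))) := by
            rw [hz', smul_mul_assoc, mul_smul_comm]; simp only [mul_assoc]
        _ = (l + u) • ((l + u) • (p * ((N * (G * B * C)) * (1 - N)))) := by
            rw [k11, smul_mul_assoc, hNp.eq]; simp only [mul_assoc]
        _ = 0 := by
            rw [((hNG.mul_right hNB).mul_right hNC).eq, mul_assoc, hNN]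
            simp
    exact (smul_eq_zero_iff_right hd).mp t3
  have e3 : y * D = u • y := by
    rw [mul_sub, mul_one, e1, sub_eq_zero] at e2
    exact e2
  have e4 : (u * l) • y = 0 := by
    have h1 : y * D * D = (u * u) • y := by rw [e3, smul_mul_assoc, e3, smul_smul]
    have h2 : y * D * D = ((l + u) * u) • y := by
      rw [mul_assoc, hsq, mul_smul_comm, e3, smul_smul]
    have h3 := h2.symm.trans h1
    linear_combination (norm := module) h3
  exact (smul_eq_zero_iff_right (mul_ne_zero hu hl)).mp e4

theorem PRel.zstep (h : PRel l u N D) (hl : l ≠ 0) (hd : l + u ≠ 0) (hu : u ≠ 0 ∨ N = 0)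
    (hNB : Commute N B) (hNG : Commute N G) (hDG : Commute D G)
    (hz : D * G * B * ((l + u) • 1 - D) * ((l + u) • 1 - G) = 0) :
    G * (fN l u N D * B * (1 - fN l u N D)) * ((l + u) • 1 - G) = 0 := by
  have h1 := h.zstep1 hl hd hNB hNG hDG hz
  have h2 := h.zstep2 hl hd hu hNB hNG hDG hz
  rw [mul_sub, mul_one, sub_eq_zero] at h1
  rw [h1, h2]

open MulOpposite in
theorem prel_op (h : PRel l u N D) : PRel l u (op N) (op D) := by
  refine ⟨?_, ?_, ?_⟩
  · rw [← op_mul, h.idem]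
  · rw [← op_mul, h.sq, op_smul]
  · have := congrArg op h.rel
    simpa only [op_sub, op_smul, op_mul, mul_assoc] using this

open MulOpposite in
theorem fN_op : fN l u (op N) (op D) = op (fN l u N D) := by
  simp only [fN, op_sub, op_add, op_smul, op_mul, op_one, mul_assoc]

open MulOpposite in
theorem PRel.zstep' (h : PRel l u N D) (hl : l ≠ 0) (hd : l + u ≠ 0) (hu : u ≠ 0 ∨ N = 0)
    (hNB : Commute N B) (hNG : Commute N G) (hDG : Commute D G)
    (hz : ((l + u) • 1 - D) * ((l + u) • 1 - G) * B * D * G = 0) :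
    ((l + u) • 1 - G) * ((1 - fN l u N D) * B * fN l u N D) * G = 0 := by
  have cc : Commute ((l + u) • 1 - D) ((l + u) • 1 - G) := by
    refine Commute.sub_left ((Commute.one_left _).smul_left _) ?_
    exact Commute.sub_right ((Commute.one_right _).smul_right _) hDG
  have hz2 : op D * op G * op B * ((l + u) • 1 - op D) * ((l + u) • 1 - op G) = 0 := by
    have : ((l + u) • 1 - G) * ((l + u) • 1 - D) * B * G * D = 0 := by
      rw [← cc.eq, mul_assoc _ G D, ← hDG.eq, ← mul_assoc, hz]
    have := congrArg op this
    simpa only [op_sub, op_smul, op_mul, op_one, op_zero, mul_assoc] using this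
  have := (prel_op h).zstep (B := op B) (G := op G) hl hd (by simpa using hu)
    hNB.op hNG.op hDG.op hz2
  rw [fN_op] at this
  apply op_injective
  simpa only [op_sub, op_smul, op_mul, op_one, op_zero, mul_assoc] using this

theorem PRel.comm10 {l' u' : F} (h : PRel l u N D) (hl : l ≠ 0) (hl' : l' ≠ 0)
    (hu : u' * l = 1) (hNB : B * N = N * B)
    (hbr : D * B * D - D = B * D * B - B)
    (hZ : B * (N * D * (1 - N)) * ((l + u) • 1 - B) = 0) :
    fN l' u' (fN l u N D) B * (N * D * (1 - N)) = (N * D * (1 - N)) * fN l' u' (fN l u N D) B := by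
  have hu' : u' = l⁻¹ := by field_simp; linear_combination hu
  have e10 := e10_of_Z (l + u) h.idem hNB hbr hZ
  rw [h.b00 hl, h.b11 hl] at e10
  have k3 := h.a10p hl
  have k4 := h.pa10 hl
  have hN := h.idem
  have c := h.fN_comm
  have pp := h.fN_idem hl
  have hNB' : ∀ x : A, B * (N * x) = N * (B * x) := fun x => by rw [← mul_assoc, hNB, mul_assoc]
  have hyN : (N * D * (1 - N)) * N = 0 := by
    simp only [mul_add, add_mul, mul_sub, sub_mul, mul_one, one_mul, mul_assoc, hN, sub_self]
  have hNy : N * (N * D * (1 - N)) = (N * D * (1 - N)) := by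
    simp only [← mul_assoc, hN]
  rw [fN]
  generalize N * D * (1 - N) = y at *
  generalize fN l u N D = p at *
  have k3' : ∀ z, y * (p * z) = y * z := fun z => by rw [← mul_assoc, k3]
  have c' : ∀ z, p * (N * z) = N * (p * z) := fun z => by rw [← mul_assoc, c, mul_assoc]
  have hyN' : ∀ z, y * (N * z) = 0 := fun z => by rw [← mul_assoc, hyN, zero_mul]
  have s1 : N * (B * y) = B * y := by rw [← hNB', hNy]
  have s2 : N * (p * (B * y)) = p * (B * y) := by rw [← c', s1]
  subst hu'
  simp only [mul_add, add_mul, mul_sub, sub_mul, mul_one, one_mul, smul_mul_assoc,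
      mul_smul_comm, smul_add, smul_sub, mul_assoc, hNB, hNB', k3, k3', k4, hyN, hyN', s1, s2,
      smul_zero, mul_zero, zero_mul, sub_zero, add_zero, zero_add] at e10 ⊢
  linear_combination (norm := skip) (l'⁻¹ * l⁻¹) • e10
  match_scalars <;> field_simp <;> ring

open MulOpposite in
theorem PRel.comm01 {l' u' : F} (h : PRel l u N D) (hl : l ≠ 0) (hl' : l' ≠ 0)
    (hu : u' * l = 1) (hNB : B * N = N * B)
    (hbr : D * B * D - D = B * D * B - B)
    (hZ : ((l + u) • 1 - B) * ((1 - N) * D * N) * B = 0) :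
    fN l' u' (fN l u N D) B * ((1 - N) * D * N) = ((1 - N) * D * N) * fN l' u' (fN l u N D) B := by
  have := (prel_op h).comm10 (B := op B) hl hl' hu (by rw [← op_mul, ← op_mul, hNB])
    (by have := congrArg op hbr
        simpa only [op_sub, op_mul, mul_assoc] using this)
    (by have := congrArg op hZ
        simpa only [op_sub, op_smul, op_mul, op_one, op_zero, mul_assoc] using this)
  rw [fN_op, fN_op] at this
  apply op_injective
  simpa only [op_sub, op_smul, op_mul, op_one, op_zero, mul_assoc] using this.symm

theorem PRel.commNN {l' u' : F} (h : PRel l u N D) (h' : PRel l' u' (fN l u N D) B)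
    (hl : l ≠ 0) (hl' : l' ≠ 0)
    (hu : u' * l = 1) (hNB : B * N = N * B)
    (hbr : D * B * D - D = B * D * B - B)
    (hZ : B * (N * D * (1 - N)) * ((l + u) • 1 - B) = 0)
    (hZ' : ((l + u) • 1 - B) * ((1 - N) * D * N) * B = 0) :
    Commute (fN l' u' (fN l u N D) B) D := by
  have c10 : Commute _ _ := h.comm10 hl hl' hu hNB hbr hZ
  have c01 : Commute _ _ := h.comm01 hl hl' hu hNB hbr hZ'
  have c1 : Commute (fN l' u' (fN l u N D) B) (fN l u N D) := h'.fN_comm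
  have c2 : Commute (fN l' u' (fN l u N D) B) N :=
    (fN_commute (show Commute N _ from h.fN_comm.symm) (show Commute N B from hNB.symm)).symm
  have hD : D = l • ((1 - N) * fN l u N D) + (l • (N * fN l u N D) + u • N)
      + (1 - N) * D * N + N * D * (1 - N) := by
    rw [← h.b00 hl, ← h.b11 hl]
    noncomm_ring
  have c3 : Commute (fN l' u' (fN l u N D) B) (1 - N) := (Commute.one_right _).sub_right c2
  have : Commute (fN l' u' (fN l u N D) B) (l • ((1 - N) * fN l u N D) + (l • (N * fN l u N D) + u • N)
      + (1 - N) * D * N + N * D * (1 - N)) :=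
    ((((c3.mul_right c1).smul_right l).add_right
      (((c2.mul_right c1).smul_right l).add_right (c2.smul_right u))).add_right c01).add_right c10
  rwa [← hD] at this

end zstep
end STLaux

namespace STLaux
section global
variable {F : Type*} [Field F] {A : Type*} [Ring A] [Algebra F A]

/-- scalars of the seminormal form -/
structure Scal (l u : ℕ → F) (δ : F) : Prop where
  sum : ∀ k, l k + u k = δ
  u0 : u 0 = 0
  ul : ∀ k, u (k + 1) * l k = 1
  lne : ∀ k, l k ≠ 0
  dne : δ ≠ 0

/-- the defining relations of the super Temperley-Lieb algebra, in terms of `D = δ - C` -/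
structure Sys (δ : F) (m : ℕ) (D : ℕ → A) : Prop where
  sq : ∀ k < m, D k * D k = δ • D k
  comm : ∀ i j, i + 1 < j → j < m → Commute (D i) (D j)
  braid : ∀ k, k + 1 < m →
    D k * D (k + 1) * D k - D k = D (k + 1) * D k * D (k + 1) - D (k + 1)
  z1 : ∀ k, k + 2 < m →
    D k * D (k + 2) * D (k + 1) * (δ • 1 - D k) * (δ • 1 - D (k + 2)) = 0
  z2 : ∀ k, k + 2 < m →
    (δ • 1 - D k) * (δ • 1 - D (k + 2)) * D (k + 1) * D k * D (k + 2) = 0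

/-- the occupation numbers -/
def Nop (l u : ℕ → F) (D : ℕ → A) : ℕ → A
  | 0 => 0
  | k + 1 => fN (l k) (u k) (Nop l u D k) (D k)

variable {l u : ℕ → F} {δ : F} {m : ℕ} {D : ℕ → A}

theorem Sys.main (hs : Scal l u δ) (h : Sys δ m D) (k : ℕ) (hk : k < m) :
    PRel (l k) (u k) (Nop l u D k) (D k) ∧
    (∀ j, k + 1 ≤ j → j < m → Commute (Nop l u D k) (D j)) ∧
    (k + 1 < m →
      D (k + 1) * (Nop l u D k * D k * (1 - Nop l u D k)) * (δ • 1 - D (k + 1)) = 0 ∧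
      (δ • 1 - D (k + 1)) * ((1 - Nop l u D k) * D k * Nop l u D k) * D (k + 1) = 0) := by
  induction k with
  | zero =>
    refine ⟨⟨by simp [Nop], ?_, by simp [Nop, hs.u0]⟩, fun j _ _ => Commute.zero_left _, fun _ => ?_⟩
    · rw [hs.sum]; exact h.sq 0 hk
    · simp [Nop]
  | succ k ih =>
    obtain ⟨p, c, z⟩ := ih (by omega)
    obtain ⟨z1, z2⟩ := z hk
    have hc : ∀ j, k + 1 + 1 ≤ j → j < m → Commute (Nop l u D (k + 1)) (D j) := fun j hj hjm =>
      (fN_commute (c j (by omega) hjm).symm (h.comm k j (by omega) hjm).symm).symm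
    have hcB := c (k + 1) (by omega) hk
    refine ⟨?_, hc, fun hk2 => ⟨?_, ?_⟩⟩
    · exact p.step (hs.lne k) (by rw [hs.sum, hs.sum]) (hs.ul k)
        (by rw [hs.sum]; exact h.sq _ hk) hcB.symm (h.braid k hk) (by rw [hs.sum]; exact z1)
    · have := p.zstep (B := D (k + 1)) (G := D (k + 2)) (hs.lne k) (by rw [hs.sum]; exact hs.dne)
        (by
          rcases k with _ | k
          · right; rfl
          · left; intro h0; have := hs.ul k; rw [h0, zero_mul] at this; exact zero_ne_one this)
        hcB (c (k + 2) (by omega) hk2) (h.comm k (k + 2) (by omega) hk2)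
        (by rw [hs.sum]; exact h.z1 k hk2)
      rw [hs.sum] at this
      exact this
    · have := p.zstep' (B := D (k + 1)) (G := D (k + 2)) (hs.lne k) (by rw [hs.sum]; exact hs.dne)
        (by
          rcases k with _ | k
          · right; rfl
          · left; intro h0; have := hs.ul k; rw [h0, zero_mul] at this; exact zero_ne_one this)
        hcB (c (k + 2) (by omega) hk2) (h.comm k (k + 2) (by omega) hk2)
        (by rw [hs.sum]; exact h.z2 k hk2)
      rw [hs.sum] at this
      exact this

theorem Sys.prel (hs : Scal l u δ) (h : Sys δ m D) {k : ℕ} (hk : k < m) :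
    PRel (l k) (u k) (Nop l u D k) (D k) := (h.main hs k hk).1

theorem Sys.comm_hi (hs : Scal l u δ) (h : Sys δ m D) {k j : ℕ} (hk : k + 1 ≤ j) (hj : j < m) :
    Commute (Nop l u D k) (D j) := (h.main hs k (by omega)).2.1 j hk hj

theorem Sys.comm_lo (hs : Scal l u δ) (h : Sys δ m D) {k j : ℕ} (hk : k + 2 ≤ j) (hj : j ≤ m) :
    Commute (Nop l u D j) (D k) := by
  induction j, hk using Nat.le_induction with
  | base =>
    obtain ⟨p, c, z⟩ := h.main hs k (by omega)
    obtain ⟨z1, z2⟩ := z (by omega)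
    have p' := h.prel hs (k := k + 1) (by omega)
    exact p.commNN p' (hs.lne k) (hs.lne _) (hs.ul k) (c _ le_rfl (by omega)).symm
      (h.braid k (by omega)) (by rw [hs.sum]; exact z1) (by rw [hs.sum]; exact z2)
  | succ j hkj ih =>
    exact (fN_commute (ih (by omega)).symm (h.comm k j (by omega) (by omega))).symm

theorem Sys.comm_NN (hs : Scal l u δ) (h : Sys δ m D) {i j : ℕ} (hi : i ≤ j) (hj : j ≤ m) :
    Commute (Nop l u D i) (Nop l u D j) := by
  induction j with
  | zero => obtain rfl : i = 0 := by omega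
            exact Commute.refl _
  | succ j ih =>
    rcases Nat.lt_or_ge j i with h1 | h1
    · obtain rfl : i = j + 1 := by omega
      exact Commute.refl _
    · rcases Nat.lt_or_ge i j with h2 | h2
      · exact fN_commute (ih h1 (by omega)) (h.comm_hi hs (by omega) (by omega))
      · obtain rfl : i = j := by omega
        exact (h.prel hs (by omega)).fN_comm.symm

theorem Sys.comm_N (hs : Scal l u δ) (h : Sys δ m D) {i j : ℕ} (hi : i ≤ m) (hj : j ≤ m) :
    Commute (Nop l u D i) (Nop l u D j) := by
  rcases le_total i j with hij | hij
  · exact h.comm_NN hs hij hj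
  · exact (h.comm_NN hs hij hi).symm

theorem Sys.idem (hs : Scal l u δ) (h : Sys δ m D) {i : ℕ} (hi : i < m) :
    Nop l u D (i + 1) * Nop l u D (i + 1) = Nop l u D (i + 1) :=
  (h.prel hs hi).fN_idem (hs.lne i)

/-! ### weights -/
variable {M : Type*} [AddCommGroup M] [Module A M] [Module F M] [IsScalarTower F A M]

/-- `x` has occupied modes `S` -/
def Wt (l u : ℕ → F) (m : ℕ) (D : ℕ → A) (S : Finset ℕ) (x : M) : Prop :=
  ∀ k < m, Nop l u D (k + 1) • x = if k ∈ S then x else 0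

theorem two11 {l u : F} {N D : A} {x : M} (h : PRel l u N D)
    (hl : l ≠ 0) (h1 : N • x = x)
    (h2 : fN l u N D • x = x) : D • x = (l + u) • x := by
  have := congrArg (· • x) (h.D11 hl)
  simpa only [mul_smul, smul_assoc, h1, h2] using this

theorem two00 {l u : F} {N D : A} {x : M} (h : PRel l u N D)
    (hl : l ≠ 0) (h1 : N • x = 0)
    (h2 : fN l u N D • x = 0) : D • x = 0 := by
  have := congrArg (· • x) (h.D00 hl)
  simpa only [mul_smul, sub_smul, one_smul, sub_zero, smul_assoc, h1, h2, zero_smul] using this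

theorem two10 {l u : F} {N D : A} {x : M} (h : PRel l u N D)
    (hl : l ≠ 0) (h1 : N • x = x) (h2 : fN l u N D • x = 0) :
    N • (D • x - u • x) = 0 ∧ fN l u N D • (D • x - u • x) = D • x - u • x := by
  have a := congrArg (· • x) (h.b11 hl)
  simp only [mul_smul, add_smul, smul_assoc, h1, h2, smul_zero, zero_add] at a
  have b := congrArg (· • x) (h.fN_sum hl)
  simp only [mul_smul, add_smul, smul_add, smul_assoc, h1, h2, smul_zero, add_zero, a] at b
  have c : ∀ (c : F) (y : A), y • (c • x) = c • (y • x) := fun c y => by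
    rw [← algebraMap_smul A c x, ← mul_smul, ← Algebra.commutes, mul_smul, algebraMap_smul]
  constructor
  · rw [smul_sub, a, c, h1, sub_self]
  · rw [smul_sub, c, h2, smul_zero, sub_zero]
    exact (sub_eq_of_eq_add' b).symm

theorem two01 {l u : F} {N D : A} {x : M} (h : PRel l u N D)
    (hl : l ≠ 0) (h1 : N • x = 0) (h2 : fN l u N D • x = x) :
    N • (D • x - l • x) = D • x - l • x ∧ fN l u N D • (D • x - l • x) = 0 := by
  have a := congrArg (· • x) (h.b00 hl)
  simp only [mul_smul, add_smul, sub_smul, smul_sub, one_smul, smul_assoc, h1, h2, smul_zero,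
    zero_add, sub_zero] at a
  have b := congrArg (· • x) (h.fN_sum hl)
  simp only [mul_smul, add_smul, smul_add, smul_assoc, h1, h2, smul_zero, zero_add] at b
  have c : ∀ (c : F) (y : A), y • (c • x) = c • (y • x) := fun c y => by
    rw [← algebraMap_smul A c x, ← mul_smul, ← Algebra.commutes, mul_smul, algebraMap_smul]
  have e : N • (D • x) = D • x - l • x := by rw [← a]; abel
  constructor
  · rw [smul_sub, c, h1, smul_zero, sub_zero, e]
  · rw [smul_sub, c, h2]
    rw [e] at b
    have : fN l u N D • D • x = D • x - (D • x - l • x) := by rw [eq_sub_iff_add_eq, add_comm]; exact b.symm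
    rw [this]; abel

theorem smul_comm_alg (c : F) (y : A) (x : M) : y • (c • x) = c • (y • x) := by
  rw [← algebraMap_smul A c x, ← mul_smul, ← Algebra.commutes, mul_smul, algebraMap_smul]

/-- move a particle up -/
def up (S : Finset ℕ) (j : ℕ) : Finset ℕ := insert (j + 1) (S.erase j)
/-- move a particle down -/
def dn (S : Finset ℕ) (j : ℕ) : Finset ℕ := insert j (S.erase (j + 1))

variable {S : Finset ℕ} {x : M}

theorem Wt.smul {S : Finset ℕ} {x : M} (hx : Wt l u m D S x) (c : F) : Wt l u m D S (c • x) := by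
  intro k hk
  rw [smul_comm_alg, hx k hk]
  split_ifs <;> simp

theorem Wt.add {S : Finset ℕ} {x y : M} (hx : Wt l u m D S x) (hy : Wt l u m D S y) :
    Wt l u m D S (x + y) := by
  intro k hk
  rw [smul_add, hx k hk, hy k hk]
  split_ifs <;> simp

theorem Wt.other (hs : Scal l u δ) (h : Sys δ m D) {j : ℕ} (hj : j + 1 < m) (hx : Wt l u m D S x)
    (c : F) {k : ℕ} (hk : k < m) (h1 : k ≠ j) (h2 : k ≠ j + 1) :
    Nop l u D (k + 1) • (D (j + 1) • x - c • x) = if k ∈ S then D (j + 1) • x - c • x else 0 := by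
  have cc : Commute (Nop l u D (k + 1)) (D (j + 1)) := by
    rcases Nat.lt_or_ge k j with h3 | h3
    · exact h.comm_hi hs (by omega) hj
    · exact h.comm_lo hs (by omega) (by omega)
  rw [smul_sub, smul_comm_alg, ← mul_smul, cc.eq, mul_smul, hx k hk]
  split_ifs <;> simp

theorem Wt.D_up (hs : Scal l u δ) (h : Sys δ m D) {j : ℕ} (hj : j + 1 < m) (hx : Wt l u m D S x)
    (h1 : j ∈ S) (h2 : j + 1 ∉ S) : Wt l u m D (up S j) (D (j + 1) • x - u (j + 1) • x) := by
  have a1 := hx j (by omega)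
  have a2 := hx (j + 1) hj
  rw [if_pos h1] at a1
  rw [if_neg h2] at a2
  obtain ⟨b1, b2⟩ := two10 (h.prel hs hj) (hs.lne _) a1 a2
  intro k hk
  by_cases e1 : k = j
  · subst e1
    rw [if_neg (by simp [up]), b1]
  by_cases e2 : k = j + 1
  · subst e2
    rw [if_pos (by simp [up])]; exact b2
  rw [hx.other hs h hj _ hk e1 e2]
  simp [up, e1, e2]

theorem Wt.D_dn (hs : Scal l u δ) (h : Sys δ m D) {j : ℕ} (hj : j + 1 < m) (hx : Wt l u m D S x)
    (h1 : j ∉ S) (h2 : j + 1 ∈ S) : Wt l u m D (dn S j) (D (j + 1) • x - l (j + 1) • x) := by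
  have a1 := hx j (by omega)
  have a2 := hx (j + 1) hj
  rw [if_neg h1] at a1
  rw [if_pos h2] at a2
  obtain ⟨b1, b2⟩ := two01 (h.prel hs hj) (hs.lne _) a1 a2
  intro k hk
  by_cases e1 : k = j
  · subst e1
    rw [if_pos (by simp [dn]), b1]
  by_cases e2 : k = j + 1
  · subst e2
    rw [if_neg (by simp [dn])]; exact b2
  rw [hx.other hs h hj _ hk e1 e2]
  simp [dn, e1, e2]

theorem Wt.D_11 (hs : Scal l u δ) (h : Sys δ m D) {j : ℕ} (hj : j + 1 < m) (hx : Wt l u m D S x)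
    (h1 : j ∈ S) (h2 : j + 1 ∈ S) : D (j + 1) • x = δ • x := by
  have a1 := hx j (by omega)
  have a2 := hx (j + 1) hj
  rw [if_pos h1] at a1
  rw [if_pos h2] at a2
  rw [two11 (h.prel hs hj) (hs.lne _) a1 a2, hs.sum]

theorem Wt.D_00 (hs : Scal l u δ) (h : Sys δ m D) {j : ℕ} (hj : j + 1 < m) (hx : Wt l u m D S x)
    (h1 : j ∉ S) (h2 : j + 1 ∉ S) : D (j + 1) • x = 0 := by
  have a1 := hx j (by omega)
  have a2 := hx (j + 1) hj
  rw [if_neg h1] at a1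
  rw [if_neg h2] at a2
  exact two00 (h.prel hs hj) (hs.lne _) a1 a2

theorem Wt.D_zero (hs : Scal l u δ) (h : Sys δ m D) (hj : 0 < m) (hx : Wt l u m D S x) :
    D 0 • x = if 0 ∈ S then l 0 • x else 0 := by
  have a1 := hx 0 hj
  have : D 0 = l 0 • Nop l u D 1 := by
    simp [Nop, fN, hs.u0, smul_smul, mul_inv_cancel₀ (hs.lne 0)]
  rw [this, smul_assoc]
  simp only [zero_add] at a1
  rw [a1]
  split_ifs <;> simp

theorem up_dn (hs : Scal l u δ) (h : Sys δ m D) {j : ℕ} (hj : j + 1 < m) :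
    (D (j + 1) - l (j + 1) • 1) * (D (j + 1) - u (j + 1) • 1) = (l (j + 1) * u (j + 1)) • 1 := by
  simp only [sub_mul, mul_sub, h.sq _ hj, ← hs.sum (j + 1), smul_mul_assoc, mul_smul_comm, one_mul,
    mul_one]
  module

theorem dn_up (hs : Scal l u δ) (h : Sys δ m D) {j : ℕ} (hj : j + 1 < m) :
    (D (j + 1) - u (j + 1) • 1) * (D (j + 1) - l (j + 1) • 1) = (l (j + 1) * u (j + 1)) • 1 := by
  simp only [sub_mul, mul_sub, h.sq _ hj, ← hs.sum (j + 1), smul_mul_assoc, mul_smul_comm, one_mul,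
    mul_one]
  module

theorem Scal.une (hs : Scal l u δ) (j : ℕ) : u (j + 1) ≠ 0 := by
  intro h0
  have := hs.ul j
  rw [h0, zero_mul] at this
  exact zero_ne_one this

end global
end STLaux

namespace STLaux
section paths
variable {F : Type*} [Field F] {A : Type*} [Ring A] [Algebra F A]
variable {l u : ℕ → F} {δ : F} {m : ℕ} {D : ℕ → A}
variable {M : Type*} [AddCommGroup M] [Module A M] [Module F M] [IsScalarTower F A M]

/-- words creating the weight `S` from the lowest weight -/
inductive Path (u : ℕ → F) (m : ℕ) (D : ℕ → A) (r : ℕ) : Finset ℕ → A → Prop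
  | base : Path u m D r (Finset.range r) 1
  | step (S : Finset ℕ) (w : A) (j : ℕ) (h : Path u m D r S w) (h1 : j ∈ S) (h2 : j + 1 ∉ S)
      (h3 : j + 1 < m) : Path u m D r (up S j) ((D (j + 1) - u (j + 1) • 1) * w)

variable {r : ℕ} {S : Finset ℕ} {w : A}

theorem dn_up_eq {S : Finset ℕ} {j : ℕ} (h1 : j ∈ S) (h2 : j + 1 ∉ S) : dn (up S j) j = S := by
  ext k
  simp only [dn, up, Finset.mem_insert, Finset.mem_erase]
  by_cases e1 : k = j
  · subst e1; simp [h1]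
  by_cases e2 : k = j + 1
  · subst e2; simp [h2]
  simp [e1, e2]

theorem up_dn_eq {S : Finset ℕ} {j : ℕ} (h1 : j ∉ S) (h2 : j + 1 ∈ S) : up (dn S j) j = S := by
  ext k
  simp only [dn, up, Finset.mem_insert, Finset.mem_erase]
  by_cases e1 : k = j
  · subst e1; simp [h1]
  by_cases e2 : k = j + 1
  · subst e2; simp [h2]
  simp [e1, e2]

theorem mem_up {S : Finset ℕ} {j k : ℕ} : k ∈ up S j ↔ k = j + 1 ∨ (k ≠ j ∧ k ∈ S) := by
  simp [up]
theorem mem_dn {S : Finset ℕ} {j k : ℕ} : k ∈ dn S j ↔ k = j ∨ (k ≠ j + 1 ∧ k ∈ S) := by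
  simp [dn]

theorem Path.sub (hp : Path u m D r S w) (hr : r ≤ m) : S ⊆ Finset.range m := by
  induction hp with
  | base => exact Finset.range_subset_range.mpr hr
  | step S w j hw h1 h2 h3 ih =>
    intro k hk
    rcases mem_up.mp hk with h' | h'
    · rw [h']; exact Finset.mem_range.mpr h3
    · exact ih h'.2

theorem Path.last (h : Sys δ m D) (hr : r ≤ m) (hp : Path u m D r S w) :
    ∀ j, j ∉ S → j + 1 ∈ S →
      ∃ w', Path u m D r (dn S j) w' ∧ w = (D (j + 1) - u (j + 1) • 1) * w' := by
  induction hp with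
  | base =>
    intro j h1 h2
    simp only [Finset.mem_range] at h1 h2
    omega
  | step S w i hw h1 h2 h3 ih =>
    intro j k1 k2
    by_cases e : i = j
    · subst e
      exact ⟨w, by rw [dn_up_eq h1 h2]; exact hw, rfl⟩
    have i1 : i ∉ up S i := by simp [mem_up]
    have i2 : i + 1 ∈ up S i := by simp [mem_up]
    have n1 : j + 1 ≠ i := fun e' => i1 (e' ▸ k2)
    have n2 : i + 1 ≠ j := fun e' => k1 (e' ▸ i2)
    have k1' : j ∉ S := fun h' => k1 (mem_up.mpr (Or.inr ⟨Ne.symm e, h'⟩))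
    have k2' : j + 1 ∈ S := by
      rcases mem_up.mp k2 with h' | h'
      · exact absurd (by omega) e
      · exact h'.2
    obtain ⟨w', hw', rfl⟩ := ih j k1' k2'
    have hc : Commute (D (i + 1)) (D (j + 1)) := by
      have hj : j + 1 < m := Finset.mem_range.mp (hw.sub hr k2')
      rcases Nat.lt_or_ge i j with h' | h'
      · exact h.comm _ _ (by omega) hj
      · exact (h.comm _ _ (by omega) h3).symm
    have hset : dn (up S i) j = up (dn S j) i := by
      ext k
      simp only [mem_up, mem_dn]
      by_cases k = i <;> by_cases k = j <;> by_cases k = i + 1 <;> by_cases k = j + 1 <;>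
        simp_all <;> omega
    refine ⟨(D (i + 1) - u (i + 1) • 1) * w', ?_, ?_⟩
    · rw [hset]
      refine Path.step _ _ i hw' (mem_dn.mpr (Or.inr ⟨by omega, h1⟩)) ?_ h3
      intro h'
      rcases mem_dn.mp h' with h' | h'
      · exact n2 h'
      · exact h2 h'.2
    · have : Commute (D (i + 1) - u (i + 1) • 1) (D (j + 1) - u (j + 1) • (1 : A)) := by
        refine Commute.sub_left ?_ ((Commute.one_left _).smul_left _)
        exact Commute.sub_right hc ((Commute.one_right _).smul_right _)
      rw [← mul_assoc, this.eq, mul_assoc]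

theorem Path.unique (h : Sys δ m D) (hr : r ≤ m) (hp : Path u m D r S w) :
    ∀ w', Path u m D r S w' → w' = w := by
  induction hp with
  | base =>
    intro w' h'
    generalize hS : Finset.range r = S at h'
    cases h' with
    | base => rfl
    | step S w j hw h1 h2 h3 =>
      have i1 : j ∉ up S j := by simp [mem_up]
      have i2 : j + 1 ∈ up S j := by simp [mem_up]
      rw [← hS, Finset.mem_range] at i1 i2
      omega
  | step S w j hw h1 h2 h3 ih =>
    intro w' h'
    obtain ⟨w'', hw'', rfl⟩ := h'.last h hr j (by simp [mem_up]) (by simp [mem_up])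
    rw [dn_up_eq h1 h2] at hw''
    rw [ih w'' hw'']

theorem card_up {S : Finset ℕ} {j : ℕ} (h1 : j ∈ S) (h2 : j + 1 ∉ S) :
    (up S j).card = S.card := by
  unfold up
  rw [Finset.card_insert_of_notMem (fun h => h2 (Finset.mem_of_mem_erase h)),
    Finset.card_erase_of_mem h1]
  have := Finset.card_pos.mpr ⟨j, h1⟩
  omega

theorem card_dn {S : Finset ℕ} {j : ℕ} (h1 : j ∉ S) (h2 : j + 1 ∈ S) :
    (dn S j).card = S.card := by
  unfold dn
  rw [Finset.card_insert_of_notMem (fun h => h1 (Finset.mem_of_mem_erase h)),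
    Finset.card_erase_of_mem h2]
  have := Finset.card_pos.mpr ⟨_, h2⟩
  omega

theorem Path.card (hp : Path u m D r S w) : S.card = r := by
  induction hp with
  | base => exact Finset.card_range r
  | step S w j hw h1 h2 h3 ih => rw [card_up h1 h2, ih]

theorem Path.exists (u : ℕ → F) (D : ℕ → A) (s : ℕ) : ∀ S : Finset ℕ, S.sum id = s →
    S ⊆ Finset.range m → ∃ w, Path u m D S.card S w := by
  induction s using Nat.strong_induction_on with
  | _ s ih =>
    intro S hs hS
    by_cases hex : ∃ j, j ∉ S ∧ j + 1 ∈ S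
    · obtain ⟨j, h1, h2⟩ := hex
      have hlt : (dn S j).sum id < s := by
        unfold dn
        rw [Finset.sum_insert (fun h => h1 (Finset.mem_of_mem_erase h))]
        have := Finset.add_sum_erase S id h2
        simp only [id] at this ⊢
        have hs' : ∑ x ∈ S, x = s := hs
        omega
      have hjm := Finset.mem_range.mp (hS h2)
      have hsub : dn S j ⊆ Finset.range m := by
        intro k hk
        rcases mem_dn.mp hk with h' | h'
        · rw [h']; exact Finset.mem_range.mpr (by omega)
        · exact hS h'.2
      obtain ⟨w, hw⟩ := ih _ hlt (dn S j) rfl hsub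
      rw [card_dn h1 h2] at hw
      have := Path.step _ _ j hw (by simp [mem_dn]) (by simp [mem_dn]) hjm
      rw [up_dn_eq h1 h2] at this
      exact ⟨_, this⟩
    · push Not at hex
      have hlow : ∀ k j, j + k ∈ S → j ∈ S := by
        intro k
        induction k with
        | zero => intro j hj; exact hj
        | succ k ihk =>
          intro j hj
          by_contra hn
          exact hex j hn (ihk (j + 1) (by rwa [show j + 1 + k = j + (k + 1) by ring]))
      have hSr : S = Finset.range S.card := by
        symm
        apply Finset.eq_of_subset_of_card_le
        · intro k hk
          by_contra hn
          have : S ⊆ Finset.range k := by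
            intro i hi
            rw [Finset.mem_range]
            by_contra hle
            exact hn (hlow (i - k) k (by rwa [show k + (i - k) = i by omega]))
          have := Finset.card_le_card this
          rw [Finset.card_range] at this
          rw [Finset.mem_range] at hk
          omega
        · simp
      have hb : Path u m D S.card (Finset.range S.card) (1 : A) := Path.base
      rw [← hSr] at hb
      exact ⟨1, hb⟩

/-- the word of `S` -/
def W (u : ℕ → F) (m : ℕ) (D : ℕ → A) (S : Finset ℕ) : A :=
  if h : ∃ w, Path u m D S.card S w then h.choose else 0

theorem W_path (hS : S ⊆ Finset.range m) : Path u m D S.card S (W u m D S) := by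
  have h : ∃ w, Path u m D S.card S w := Path.exists u D _ S rfl hS
  rw [W, dif_pos h]
  exact h.choose_spec

/-- the subalgebra generated by the `D k` -/
def genD (F : Type*) [Field F] [Algebra F A] (m : ℕ) (D : ℕ → A) : Subalgebra F A :=
  Algebra.adjoin F {a | ∃ k < m, a = D k}

theorem D_mem {k : ℕ} (hk : k < m) : D k ∈ genD F m D :=
  Algebra.subset_adjoin ⟨k, hk, rfl⟩

theorem Path.inv (hs : Scal l u δ) (h : Sys δ m D) (hp : Path u m D r S w) :
    w ∈ genD F m D ∧ (∀ x : M, Wt l u m D (Finset.range r) x → Wt l u m D S (w • x)) ∧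
    ∃ w', w' ∈ genD F m D ∧ w' * w = 1 ∧ w * w' = 1 ∧
      ∀ x : M, Wt l u m D S x → Wt l u m D (Finset.range r) (w' • x) := by
  induction hp with
  | base =>
    exact ⟨Subalgebra.one_mem _, fun x hx => by rwa [one_smul], 1, Subalgebra.one_mem _, one_mul _,
      one_mul _, fun x hx => by rwa [one_smul]⟩
  | step S w j hw h1 h2 h3 ih =>
    obtain ⟨a1, a2, w', b1, b2, b3, b4⟩ := ih
    have g1 : ∀ c : F, D (j + 1) - c • 1 ∈ genD F m D := fun c =>
      Subalgebra.sub_mem _ (D_mem h3) (Subalgebra.smul_mem _ (Subalgebra.one_mem _) _)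
    have hne : l (j + 1) * u (j + 1) ≠ 0 := mul_ne_zero (hs.lne _) (hs.une _)
    refine ⟨Subalgebra.mul_mem _ (g1 _) a1, fun x hx => ?_,
      (l (j + 1) * u (j + 1))⁻¹ • (w' * (D (j + 1) - l (j + 1) • 1)),
      Subalgebra.smul_mem _ (Subalgebra.mul_mem _ b1 (g1 _)) _, ?_, ?_, fun x hx => ?_⟩
    · have := (a2 x hx).D_up hs h h3 h1 h2
      rwa [mul_smul, sub_smul, smul_assoc, one_smul]
    · rw [smul_mul_assoc, mul_assoc, ← mul_assoc _ _ w, up_dn hs h h3, smul_mul_assoc, one_mul,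
        mul_smul_comm, smul_smul, inv_mul_cancel₀ hne, one_smul, b2]
    · rw [mul_smul_comm, mul_assoc, ← mul_assoc w, b3, one_mul, dn_up hs h h3, smul_smul,
        inv_mul_cancel₀ hne, one_smul]
    · have := hx.D_dn hs h h3 (by simp [mem_up]) (by simp [mem_up])
      rw [dn_up_eq h1 h2] at this
      rw [smul_assoc, mul_smul, sub_smul, smul_assoc, one_smul]
      exact (b4 _ this).smul _

theorem D_closed (hs : Scal l u δ) (h : Sys δ m D) (hr : r ≤ m) {x : M}
    (hx : Wt l u m D (Finset.range r) x) {k : ℕ} (hk : k < m) (hp : Path u m D r S w) :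
    D k • (w • x) ∈ Submodule.span F {y | ∃ S w, Path u m D r S w ∧ y = w • x} := by
  set Sp := Submodule.span F {y | ∃ S w, Path u m D r S w ∧ y = w • x} with hSp
  have hmem : ∀ S w, Path u m D r S w → w • x ∈ Sp := fun S w hp =>
    Submodule.subset_span ⟨S, w, hp, rfl⟩
  have hw := (hp.inv (M := M) hs h).2.1 x hx
  rcases k with _ | j
  · rw [hw.D_zero hs h hk]
    split_ifs
    · exact Sp.smul_mem _ (hmem _ _ hp)
    · exact Sp.zero_mem
  by_cases h1 : j ∈ S <;> by_cases h2 : j + 1 ∈ S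
  · rw [hw.D_11 hs h hk h1 h2]
    exact Sp.smul_mem _ (hmem _ _ hp)
  · have := hmem _ _ (Path.step _ _ j hp h1 h2 hk)
    rw [mul_smul, sub_smul, smul_assoc, one_smul] at this
    have := Sp.add_mem this (Sp.smul_mem (u (j + 1)) (hmem _ _ hp))
    rwa [sub_add_cancel] at this
  · obtain ⟨w', hw', rfl⟩ := hp.last h hr j h1 h2
    have e : D (j + 1) • (((D (j + 1) - u (j + 1) • 1) * w') • x)
        = (l (j + 1) * u (j + 1)) • (w' • x)
          + l (j + 1) • (((D (j + 1) - u (j + 1) • 1) * w') • x) := by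
      have e1 := congrArg (fun a => (a * w') • x) (up_dn hs h hk)
      simp only [smul_mul_assoc, one_mul, smul_assoc] at e1
      rw [← e1]
      simp only [sub_mul, mul_smul, sub_smul, smul_assoc, one_smul, one_mul, smul_mul_assoc]
      abel
    rw [e]
    exact Sp.add_mem (Sp.smul_mem _ (hmem _ _ hw')) (Sp.smul_mem _ (hmem _ _ hp))
  · rw [hw.D_00 hs h hk h1 h2]
    exact Sp.zero_mem

theorem gen_closed (hs : Scal l u δ) (h : Sys δ m D) (hr : r ≤ m) {x : M}
    (hx : Wt l u m D (Finset.range r) x) {a : A} (ha : a ∈ genD F m D) :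
    ∀ y ∈ Submodule.span F {y | ∃ S w, Path u m D r S w ∧ y = w • x},
      a • y ∈ Submodule.span F {y | ∃ S w, Path u m D r S w ∧ y = w • x} := by
  induction ha using Algebra.adjoin_induction with
  | mem a ha =>
    obtain ⟨k, hk, rfl⟩ := ha
    intro y hy
    induction hy using Submodule.span_induction with
    | mem y hy =>
      obtain ⟨S, w, hp, rfl⟩ := hy
      exact D_closed hs h hr hx hk hp
    | zero => rw [smul_zero]; exact Submodule.zero_mem _
    | add y z _ _ hy hz => rw [smul_add]; exact Submodule.add_mem _ hy hz
    | smul c y _ hy => rw [smul_comm_alg]; exact Submodule.smul_mem _ _ hy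
  | algebraMap c =>
    intro y hy
    rw [algebraMap_smul]; exact Submodule.smul_mem _ _ hy
  | add a b _ _ ha hb => intro y hy; rw [add_smul]; exact Submodule.add_mem _ (ha y hy) (hb y hy)
  | mul a b _ _ ha hb => intro y hy; rw [mul_smul]; exact ha _ (hb y hy)

theorem gen_expand (hs : Scal l u δ) (h : Sys δ m D) (hr : r ≤ m) {x : M}
    (hx : Wt l u m D (Finset.range r) x) {a : A} (ha : a ∈ genD F m D) :
    ∃ c : Finset ℕ → F, a • x = ∑ S ∈ (Finset.range m).powersetCard r, c S • (W u m D S • x) := by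
  have h1 := gen_closed hs h hr hx ha x
    (Submodule.subset_span ⟨_, 1, Path.base, (one_smul _ _).symm⟩)
  have h2 : {y | ∃ S w, Path u m D r S w ∧ y = w • x}
      ⊆ (fun S => W u m D S • x) '' ((Finset.range m).powersetCard r : Set (Finset ℕ)) := by
    rintro y ⟨S, w, hp, rfl⟩
    have hS := hp.sub hr
    refine ⟨S, ?_, ?_⟩
    · simp only [Finset.mem_coe, Finset.mem_powersetCard]
      exact ⟨hS, hp.card⟩
    · have := W_path (u := u) (D := D) hS
      rw [hp.card] at this
      simp only [hp.unique h hr _ this]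
  have h3 := Submodule.span_mono h2 h1
  obtain ⟨c, hc⟩ := (Submodule.mem_span_image_finset_iff_exists_fun' F).mp h3
  exact ⟨c, hc.symm⟩

end paths
end STLaux

namespace STLaux
section proj
variable {F : Type*} [Field F] {A : Type*} [Ring A] [Algebra F A]
variable {l u : ℕ → F} {δ : F} {m : ℕ} {D : ℕ → A}
variable {M : Type*} [AddCommGroup M] [Module A M] [Module F M] [IsScalarTower F A M]

/-- projectors to weight spaces -/
def eT (l u : ℕ → F) (D : ℕ → A) (T : Finset ℕ) : ℕ → A
  | 0 => 1
  | k + 1 => (if k ∈ T then Nop l u D (k + 1) else 1 - Nop l u D (k + 1)) * eT l u D T k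

theorem eT_comm (hs : Scal l u δ) (h : Sys δ m D) (T : Finset ℕ) {j k : ℕ} (hj : j ≤ m)
    (hk : k ≤ m) : Commute (Nop l u D j) (eT l u D T k) := by
  induction k with
  | zero => exact Commute.one_right _
  | succ k ih =>
    refine Commute.mul_right ?_ (ih (by omega))
    split_ifs
    · exact h.comm_N hs hj hk
    · exact (Commute.one_right _).sub_right (h.comm_N hs hj hk)

theorem eT_wt' (hs : Scal l u δ) (h : Sys δ m D) (T : Finset ℕ) {j k : ℕ} (hj : j < k)
    (hk : k ≤ m) : Nop l u D (j + 1) * eT l u D T k = if j ∈ T then eT l u D T k else 0 := by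
  induction k with
  | zero => omega
  | succ k ih =>
    rcases Nat.lt_or_ge j k with h1 | h1
    · have c : Commute (Nop l u D (j + 1))
          (if k ∈ T then Nop l u D (k + 1) else 1 - Nop l u D (k + 1)) := by
        split_ifs
        · exact h.comm_N hs (by omega) hk
        · exact (Commute.one_right _).sub_right (h.comm_N hs (by omega) hk)
      rw [eT, ← mul_assoc, c.eq, mul_assoc, ih h1 (by omega)]
      split_ifs <;> simp
    · obtain rfl : j = k := by omega
      have := h.idem hs (i := j) hk
      rw [eT, ← mul_assoc]
      split_ifs
      · rw [this]
      · rw [mul_sub, mul_one, this, sub_self, zero_mul]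

theorem eT_wt (hs : Scal l u δ) (h : Sys δ m D) (T : Finset ℕ) :
    Wt l u m D T (eT l u D T m) := fun k hk => eT_wt' hs h T hk le_rfl

theorem eT_self {T : Finset ℕ} {x : M} (hx : Wt l u m D T x) {k : ℕ} (hk : k ≤ m) :
    eT l u D T k • x = x := by
  induction k with
  | zero => exact one_smul _ _
  | succ k ih =>
    rw [eT, mul_smul, ih (by omega)]
    have := hx k hk
    split_ifs at this ⊢
    · exact this
    · rw [sub_smul, this, one_smul, sub_zero]

theorem eT_ne (hs : Scal l u δ) (h : Sys δ m D) {S T : Finset ℕ} {x : M} (hx : Wt l u m D S x)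
    (hS : S ⊆ Finset.range m) (hT : T ⊆ Finset.range m) (hST : S ≠ T) :
    eT l u D T m • x = 0 := by
  have : ∃ k < m, ¬ (k ∈ S ↔ k ∈ T) := by
    by_contra hn
    push Not at hn
    apply hST
    ext k
    by_cases hk : k < m
    · exact hn k hk
    · constructor
      · intro h'; exact absurd (Finset.mem_range.mp (hS h')) hk
      · intro h'; exact absurd (Finset.mem_range.mp (hT h')) hk
  obtain ⟨k, hk, hne⟩ := this
  have h1 := congrArg (· • x) (eT_wt' hs h T hk le_rfl)
  have h2 := (eT_comm hs h T (j := k + 1) hk (k := m) le_rfl).eq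
  simp only [h2, mul_smul, hx k hk] at h1
  by_cases a : k ∈ S <;> by_cases b : k ∈ T <;> simp_all

theorem eT_congr {S T : Finset ℕ} {k : ℕ} (h : ∀ j < k, j ∈ S ↔ j ∈ T) :
    eT l u D S k = eT l u D T k := by
  induction k with
  | zero => rfl
  | succ k ih =>
    rw [eT, eT, ih (fun j hj => h j (by omega))]
    simp only [h k (by omega)]

theorem eT_sum (k : ℕ) : ∑ T ∈ (Finset.range k).powerset, eT l u D T k = 1 := by
  induction k with
  | zero => simp [eT]
  | succ k ih =>
    rw [Finset.range_add_one, Finset.sum_powerset_insert (by simp)]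
    have h1 : ∀ T ∈ (Finset.range k).powerset,
        eT l u D T (k + 1) = (1 - Nop l u D (k + 1)) * eT l u D T k := by
      intro T hT
      have : k ∉ T := fun h => by simpa using Finset.mem_powerset.mp hT h
      rw [eT, if_neg this]
    have h2 : ∀ T ∈ (Finset.range k).powerset,
        eT l u D (insert k T) (k + 1) = Nop l u D (k + 1) * eT l u D T k := by
      intro T hT
      rw [eT, if_pos (by simp), eT_congr (S := insert k T) (T := T)]
      intro j hj
      simp [hj.ne]
    rw [Finset.sum_congr rfl h1, Finset.sum_congr rfl h2, ← Finset.mul_sum, ← Finset.mul_sum, ih]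
    simp

theorem indep (hs : Scal l u δ) (h : Sys δ m D) {I : Finset (Finset ℕ)}
    (hI : ∀ S ∈ I, S ⊆ Finset.range m) {v : Finset ℕ → M} (hv : ∀ S ∈ I, Wt l u m D S (v S))
    (hv0 : ∀ S ∈ I, v S ≠ 0) (c : Finset ℕ → F) (hc : ∑ S ∈ I, c S • v S = 0) :
    ∀ S ∈ I, c S = 0 := by
  intro T hT
  have h1 := congrArg (eT l u D T m • ·) hc
  simp only [smul_zero, Finset.smul_sum] at h1
  rw [Finset.sum_eq_single T] at h1
  · rw [smul_comm_alg, eT_self (hv T hT) le_rfl] at h1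
    exact (smul_eq_zero.mp h1).resolve_right (hv0 T hT)
  · intro S hS hne
    rw [smul_comm_alg, eT_ne hs h (hv S hS) (hI S hS) (hI T hT) hne, smul_zero]
  · intro h'; exact absurd hT h'

theorem W_ne (hs : Scal l u δ) (h : Sys δ m D) {S : Finset ℕ} (hS : S ⊆ Finset.range m) {x : M}
    (hx : x ≠ 0) : W u m D S • x ≠ 0 := by
  obtain ⟨_, _, w', _, b, _⟩ := (W_path (u := u) (D := D) hS).inv (M := M) hs h
  intro h0
  apply hx
  rw [← one_smul A x, ← b, mul_smul, h0, smul_zero]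

theorem faithful (hs : Scal l u δ) (h : Sys δ m D) (hgen : genD F m D = ⊤)
    (hv : ∀ r ≤ m, ∃ v : M, v ≠ 0 ∧ Wt l u m D (Finset.range r) v) (a : A)
    (ha : ∀ x : M, a • x = 0) : a = 0 := by
  rw [← mul_one a, ← eT_sum (l := l) (u := u) (D := D) m, Finset.mul_sum]
  refine Finset.sum_eq_zero fun T hT => ?_
  have hT' := Finset.mem_powerset.mp hT
  have hr : T.card ≤ m := by simpa using Finset.card_le_card hT'
  obtain ⟨v, hv0, hvw⟩ := hv T.card hr
  obtain ⟨a1, a2, w', b1, b2, b3, b4⟩ := (W_path (u := u) (D := D) hT').inv (M := A) hs h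
  have hx0 := b4 _ (eT_wt hs h T)
  have e1 := eT_self hx0 le_rfl
  obtain ⟨c, hc⟩ := gen_expand hs h hr (eT_wt hs h (Finset.range T.card))
    (a := a * W u m D T) (by rw [hgen]; trivial)
  have e2 := congrArg (· • v) hc
  simp only [Finset.sum_smul, smul_eq_mul, mul_smul, smul_assoc, eT_self hvw le_rfl, ha] at e2
  have hI : ∀ S ∈ (Finset.range m).powersetCard T.card, S ⊆ Finset.range m := fun S hS =>
    (Finset.mem_powersetCard.mp hS).1
  have hc0 := indep hs h hI (v := fun S => W u m D S • v) (fun S hS => by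
      have hp := W_path (u := u) (D := D) (hI S hS)
      rw [(Finset.mem_powersetCard.mp hS).2] at hp
      exact (hp.inv (M := M) hs h).2.1 v hvw)
    (fun S hS => W_ne hs h (hI S hS) hv0) c e2.symm
  have hz : (a * W u m D T) • eT l u D (Finset.range T.card) m = 0 := by
    rw [hc]
    exact Finset.sum_eq_zero fun S hS => by rw [hc0 S hS, zero_smul]
  simp only [smul_eq_mul] at hz e1
  calc a * eT l u D T m = a * (W u m D T * w') * eT l u D T m := by rw [b3, mul_one]
    _ = a * W u m D T * (eT l u D (Finset.range T.card) m * (w' * eT l u D T m)) := by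
        rw [e1]; simp only [mul_assoc]
    _ = 0 := by rw [← mul_assoc, hz, zero_mul]

theorem Nop_mem (k : ℕ) (hk : k ≤ m) : Nop l u D k ∈ genD F m D := by
  induction k with
  | zero => exact Subalgebra.zero_mem _
  | succ k ih =>
    have h1 := ih (by omega)
    have h2 := Subalgebra.sub_mem _ (Subalgebra.one_mem _) h1
    have h3 : D k ∈ genD F m D := D_mem hk
    exact Subalgebra.smul_mem _ (Subalgebra.sub_mem _ (Subalgebra.add_mem _
      (Subalgebra.mul_mem _ (Subalgebra.mul_mem _ h2 h3) h2)
      (Subalgebra.mul_mem _ (Subalgebra.mul_mem _ h1 h3) h1)) (Subalgebra.smul_mem _ h1 _)) _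

theorem eT_mem (T : Finset ℕ) (k : ℕ) (hk : k ≤ m) : eT l u D T k ∈ genD F m D := by
  induction k with
  | zero => exact Subalgebra.one_mem _
  | succ k ih =>
    refine Subalgebra.mul_mem _ ?_ (ih (by omega))
    split_ifs
    · exact Nop_mem _ hk
    · exact Subalgebra.sub_mem _ (Subalgebra.one_mem _) (Nop_mem _ hk)

end proj

section surj
variable {F : Type*} [Field F] {M : Type*} [AddCommGroup M] [Module F M] [FiniteDimensional F M]
variable {l u : ℕ → F} {δ : F} {m : ℕ} {D : ℕ → Module.End F M}

theorem surj (hs : Scal l u δ) (h : Sys δ m D) (hdim : Module.finrank F M = 2 * 2 ^ m)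
    (v : ℕ → M) (hv0 : ∀ r ≤ m, v r ≠ 0) (hvw : ∀ r ≤ m, Wt l u m D (Finset.range r) (v r))
    (E Fo Ko : Module.End F M) (κ c : F) (hκ : Function.Injective (fun k : ℕ => κ ^ k))
    (hc : c ≠ 0)
    (hEF : E * Fo + Fo * E = c • 1) (hEv : ∀ r ≤ m, E (v r) = 0)
    (hKv : ∀ r ≤ m, Ko (v r) = κ ^ r • v r)
    (hDE : ∀ k < m, Commute (D k) E) (hDF : ∀ k < m, Commute (D k) Fo)
    (hDK : ∀ k < m, Commute (D k) Ko) (X : Module.End F M)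
    (hXE : Commute X E) (hXF : Commute X Fo) (hXK : Commute X Ko) : X ∈ genD F m D := by
  have hcomm : ∀ Y : Module.End F M, (∀ k < m, Commute (D k) Y) → ∀ a ∈ genD F m D,
      Commute a Y := by
    intro Y hY a ha
    induction ha using Algebra.adjoin_induction with
    | mem a ha => obtain ⟨k, hk, rfl⟩ := ha; exact hY k hk
    | algebraMap c => exact Algebra.commutes c Y
    | add a b _ _ ha hb => exact ha.add_left hb
    | mul a b _ _ ha hb => exact ha.mul_left hb
  set P := (Finset.range m).powerset with hP
  have hPs : ∀ S ∈ P, S ⊆ Finset.range m := fun S hS => Finset.mem_powerset.mp hS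
  have hPc : ∀ S ∈ P, S.card ≤ m := fun S hS => by
    simpa using Finset.card_le_card (hPs S hS)
  have hinv := fun S (hS : S ∈ P) =>
    (W_path (u := u) (D := D) (hPs S hS)).inv (M := M) hs h
  set vS : Finset ℕ → M := fun S => W u m D S (v S.card) with hvS
  have hvS0 : ∀ S ∈ P, vS S ≠ 0 := fun S hS => W_ne hs h (hPs S hS) (hv0 _ (hPc S hS))
  have hvSw : ∀ S ∈ P, Wt l u m D S (vS S) := fun S hS =>
    (hinv S hS).2.1 _ (hvw _ (hPc S hS))
  have hE : ∀ S ∈ P, E (vS S) = 0 := fun S hS => by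
    have := congrArg (· (v S.card)) (hcomm E hDE _ (hinv S hS).1).eq
    simp only [Module.End.mul_apply, hEv _ (hPc S hS), map_zero] at this
    exact this.symm
  have hK : ∀ S ∈ P, Ko (vS S) = κ ^ S.card • vS S := fun S hS => by
    have := congrArg (· (v S.card)) (hcomm Ko hDK _ (hinv S hS).1).eq
    simp only [Module.End.mul_apply, hKv _ (hPc S hS), map_smul] at this
    exact this.symm
  have hEFv : ∀ S ∈ P, E (Fo (vS S)) = c • vS S := fun S hS => by
    have := congrArg (· (vS S)) hEF
    simp only [LinearMap.add_apply, Module.End.mul_apply, hE S hS, map_zero, add_zero,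
      LinearMap.smul_apply, Module.End.one_apply] at this
    exact this
  have hind := indep (M := M) hs h hPs hvSw hvS0
  -- the basis
  let b : P ⊕ P → M := Sum.elim (fun S => vS S) (fun S => Fo (vS S))
  have hb : LinearIndependent F b := by
    rw [Fintype.linearIndependent_iff]
    intro g hg
    rw [Fintype.sum_sum_type] at hg
    simp only [b, Sum.elim_inl, Sum.elim_inr] at hg
    have h1 := congrArg E hg
    rw [map_add, map_sum, map_sum, map_zero] at h1
    simp only [map_smul, fun S : P => hE S.1 S.2, fun S : P => hEFv S.1 S.2, smul_zero,
      Finset.sum_const_zero, zero_add] at h1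
    have key : ∀ g : P → F, ∑ S : P, g S • vS S = 0 → ∀ S, g S = 0 := by
      intro g hg S
      have := hind (fun S => if hS : S ∈ P then g ⟨S, hS⟩ else 0) (by
        rw [← Finset.sum_coe_sort P]
        rw [← hg]
        refine Finset.sum_congr rfl fun S _ => ?_
        rw [dif_pos S.2]) S.1 S.2
      rwa [dif_pos S.2] at this
    have h2 := key (fun S => g (Sum.inr S) * c) (by rw [← h1]; simp only [smul_smul])
    have h3 : ∀ S, g (Sum.inr S) = 0 := fun S => (mul_eq_zero.mp (h2 S)).resolve_right hc
    simp only [h3, zero_smul, Finset.sum_const_zero, add_zero] at hg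
    rintro (S | S)
    · exact key (fun S => g (Sum.inl S)) hg S
    · exact h3 S
  have hspan : ⊤ ≤ Submodule.span F (Set.range b) := by
    rw [hb.span_eq_top_of_card_eq_finrank']
    rw [hdim, Fintype.card_sum, Fintype.card_coe, hP, Finset.card_powerset, Finset.card_range]
    ring
  have hexp : ∀ T : Finset ℕ, ∃ x : Finset ℕ → F, T ∈ P →
      X (vS T) = ∑ S ∈ P.filter (fun S => S.card = T.card), x S • vS S := by
    intro T
    by_cases hT : T ∈ P
    swap
    · exact ⟨0, fun h' => absurd h' hT⟩
    have hm := hspan (Submodule.mem_top (x := X (vS T)))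
    obtain ⟨g, hg⟩ := (Submodule.mem_span_range_iff_exists_fun F).mp hm
    rw [Fintype.sum_sum_type] at hg
    simp only [b, Sum.elim_inl, Sum.elim_inr] at hg
    let a : Finset ℕ → F := fun S => if hS : S ∈ P then g (Sum.inl ⟨S, hS⟩) else 0
    let d : Finset ℕ → F := fun S => if hS : S ∈ P then g (Sum.inr ⟨S, hS⟩) else 0
    have ga : ∑ S : P, g (Sum.inl S) • vS S = ∑ S ∈ P, a S • vS S := by
      rw [← Finset.sum_coe_sort P]
      refine Finset.sum_congr rfl fun S _ => ?_
      simp only [a]; rw [dif_pos S.2]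
    have gd : ∑ S : P, g (Sum.inr S) • Fo (vS S) = ∑ S ∈ P, d S • Fo (vS S) := by
      rw [← Finset.sum_coe_sort P]
      refine Finset.sum_congr rfl fun S _ => ?_
      simp only [d]; rw [dif_pos S.2]
    rw [ga, gd] at hg
    have h1 : E (X (vS T)) = 0 := by
      have := congrArg (· (vS T)) hXE.eq
      simp only [Module.End.mul_apply, hE T hT, map_zero] at this
      exact this.symm
    rw [← hg, map_add, map_sum, map_sum] at h1
    have h2 : ∑ S ∈ P, (d S * c) • vS S = 0 := by
      rw [← h1, Finset.sum_eq_zero (f := fun S => E (a S • vS S)), zero_add]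
      · refine Finset.sum_congr rfl fun S hS => ?_
        rw [map_smul, hEFv S hS, smul_smul]
      · intro S hS
        rw [map_smul, hE S hS, smul_zero]
    have h3 := hind _ h2
    have h4 : ∑ S ∈ P, d S • Fo (vS S) = 0 := Finset.sum_eq_zero fun S hS => by
      rw [(mul_eq_zero.mp (h3 S hS)).resolve_right hc, zero_smul]
    rw [h4, add_zero] at hg
    have h5 : Ko (X (vS T)) = κ ^ T.card • X (vS T) := by
      have := congrArg (· (vS T)) hXK.eq
      simp only [Module.End.mul_apply, hK T hT, map_smul] at this
      exact this.symm
    rw [← hg, map_sum, Finset.smul_sum, ← sub_eq_zero, ← Finset.sum_sub_distrib] at h5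
    have h6 := hind (fun S => a S * (κ ^ S.card - κ ^ T.card)) (by
      rw [← h5]
      refine Finset.sum_congr rfl fun S hS => ?_
      rw [map_smul, hK S hS]
      module)
    refine ⟨a, fun _ => ?_⟩
    rw [← hg, Finset.sum_filter]
    refine Finset.sum_congr rfl fun S hS => ?_
    split_ifs with hcd
    · rfl
    · have : κ ^ S.card - κ ^ T.card ≠ 0 := fun h0 => hcd (hκ (sub_eq_zero.mp h0))
      rw [(mul_eq_zero.mp (h6 S hS)).resolve_right this, zero_smul]
  choose x hx using hexp
  choose! w' hw' using fun S hS => (hinv S hS).2.2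
  set X' : Module.End F M := ∑ T ∈ P, ∑ S ∈ P.filter (fun S => S.card = T.card),
    x T S • (W u m D S * w' T * eT l u D T m) with hX'
  have hX'mem : X' ∈ genD F m D := by
    refine Subalgebra.sum_mem _ fun T hT => Subalgebra.sum_mem _ fun S hS => ?_
    exact Subalgebra.smul_mem _ (Subalgebra.mul_mem _ (Subalgebra.mul_mem _
      (hinv S (Finset.mem_filter.mp hS).1).1 (hw' T hT).1) (eT_mem _ _ le_rfl)) _
  have hX'v : ∀ T ∈ P, X' (vS T) = X (vS T) := by
    intro T hT
    rw [hx T hT, hX', LinearMap.sum_apply, Finset.sum_eq_single T]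
    · rw [LinearMap.sum_apply]
      refine Finset.sum_congr rfl fun S hS => ?_
      have e1 : eT l u D T m (vS T) = vS T := eT_self (hvSw T hT) le_rfl
      have e2 : w' T (vS T) = v T.card := by
        have := congrArg (· (v T.card)) (hw' T hT).2.1
        simpa only [Module.End.mul_apply, Module.End.one_apply] using this
      rw [LinearMap.smul_apply, Module.End.mul_apply, Module.End.mul_apply, e1, e2, hvS]
      simp only [(Finset.mem_filter.mp hS).2]
    · intro S hS hne
      rw [LinearMap.sum_apply]
      refine Finset.sum_eq_zero fun S' hS' => ?_
      have e1 : eT l u D S m (vS T) = 0 :=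
        eT_ne hs h (hvSw T hT) (hPs T hT) (hPs S hS) (Ne.symm hne)
      rw [LinearMap.smul_apply, Module.End.mul_apply, e1, map_zero, smul_zero]
    · intro h'; exact absurd hT h'
  have hXX : X' = X := by
    apply LinearMap.ext_on (top_le_iff.mp hspan)
    rintro _ ⟨S | S, rfl⟩
    · exact hX'v S.1 S.2
    · have c1 := congrArg (· (vS S)) (hcomm Fo hDF X' hX'mem).eq
      have c2 := congrArg (· (vS S)) hXF.eq
      simp only [Module.End.mul_apply] at c1 c2
      simp only [b, Sum.elim_inr]
      rw [c1, c2, hX'v S.1 S.2]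
  rw [← hXX]
  exact hX'mem

end surj
end STLaux

namespace STLaux
section fock
variable {n : ℕ}

/-- Koszul sign -/
def sg (γ : Fin n → Fin 2) (i : Fin n) : K := (-1) ^ onesBefore γ i

theorem sg_prod (γ : Fin n → Fin 2) (i : Fin n) :
    sg γ i = ∏ k : Fin n, if k < i ∧ γ k = 1 then (-1 : K) else 1 := by
  rw [sg, onesBefore, Finset.prod_ite]
  simp

theorem sg_sq (γ : Fin n → Fin 2) (i : Fin n) : sg γ i * sg γ i = 1 := by
  rw [sg, ← mul_pow]; simp

theorem sg_update (γ : Fin n → Fin 2) (i j : Fin n) :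
    sg (Function.update γ i (γ i + 1)) j = if i < j then - sg γ j else sg γ j := by
  rw [sg_prod, sg_prod, ← Finset.mul_prod_erase _ _ (Finset.mem_univ i),
    ← Finset.mul_prod_erase (a := i) Finset.univ
      (fun k => if k < j ∧ γ k = 1 then (-1 : K) else 1) (Finset.mem_univ i)]
  have : ∏ x ∈ Finset.univ.erase i, (if x < j ∧ Function.update γ i (γ i + 1) x = 1 then (-1 : K) else 1)
      = ∏ x ∈ Finset.univ.erase i, (if x < j ∧ γ x = 1 then (-1 : K) else 1) := by
    refine Finset.prod_congr rfl fun x hx => ?_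
    rw [Function.update_of_ne (Finset.ne_of_mem_erase hx)]
  rw [this]
  have h2 : γ i = 0 ∨ γ i = 1 := by
    generalize γ i = t; revert t; decide
  rcases h2 with h2 | h2 <;> simp [h2] <;> split_ifs <;> simp

/-- elementary creation (`t = 1`) and annihilation (`t = 0`) operators -/
def op (t : Fin 2) (i : Fin n) : Module.End K (V n) where
  toFun f := fun γ => if γ i = t then sg γ i * f (Function.update γ i (t + 1)) else 0
  map_add' f g := by
    funext γ
    simp only [Pi.add_apply]
    split_ifs <;> ring
  map_smul' c f := by
    funext γ
    simp only [Pi.smul_apply, smul_eq_mul, RingHom.id_apply]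
    split_ifs <;> ring

theorem op_apply (t : Fin 2) (i : Fin n) (f : V n) (γ : Fin n → Fin 2) :
    op t i f γ = if γ i = t then sg γ i * f (Function.update γ i (t + 1)) else 0 := rfl

theorem op_anti (t t' : Fin 2) {i j : Fin n} (hij : i ≠ j) :
    op t i * op t' j + op t' j * op t i = 0 := by
  refine LinearMap.ext fun f => funext fun γ => ?_
  simp only [LinearMap.add_apply, Module.End.mul_apply, Pi.add_apply, op_apply,
    Function.update_of_ne hij, Function.update_of_ne hij.symm, LinearMap.zero_apply, Pi.zero_apply]
  by_cases h1 : γ i = t <;> by_cases h2 : γ j = t' <;> simp only [h1, h2, if_true, if_false]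
  · subst h1 h2
    rw [sg_update, sg_update, Function.update_comm hij]
    rcases lt_or_gt_of_ne hij with h | h
    · rw [if_pos h, if_neg (not_lt.mpr h.le)]; ring
    · rw [if_pos h, if_neg (not_lt.mpr h.le)]; ring
  · simp
  · simp
  · simp

theorem fin2_ne (t : Fin 2) : t + 1 ≠ t := by revert t; decide
theorem fin2_add (t : Fin 2) : t + 1 + 1 = t := by revert t; decide

theorem op_sq (t : Fin 2) (i : Fin n) : op t i * op t i = 0 := by
  refine LinearMap.ext fun f => funext fun γ => ?_
  simp only [Module.End.mul_apply, op_apply, Function.update_self, LinearMap.zero_apply,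
    Pi.zero_apply, if_neg (fin2_ne t), mul_zero, ite_self]

theorem op_mixed (i : Fin n) : op 0 i * op 1 i + op 1 i * op 0 i = 1 := by
  refine LinearMap.ext fun f => funext fun γ => ?_
  have h2 : γ i = 0 ∨ γ i = 1 := by
    generalize γ i = t; revert t; decide
  have e : ∀ t : Fin 2, γ i = t → Function.update γ i t = γ := by
    rintro t rfl; simp
  have s := sg_update γ i i
  rw [if_neg (lt_irrefl _)] at s
  simp only [LinearMap.add_apply, Module.End.mul_apply, Pi.add_apply, op_apply,
    Function.update_self, Function.update_idem, Module.End.one_apply]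
  rcases h2 with h2 | h2
  · rw [h2] at s
    have := e 0 h2
    simp [h2] at s ⊢
    rw [s, this, ← mul_assoc, sg_sq, one_mul]
  · rw [h2] at s
    have := e 1 h2
    simp [h2] at s ⊢
    rw [s, this, ← mul_assoc, sg_sq, one_mul]

/-- creation (`t = 1`) and annihilation (`t = 0`) operators attached to vectors -/
def ff (n : ℕ) (t : Fin 2) (x : ℕ → K) : Module.End K (V n) := ∑ i : Fin n, x i • op t i

/-- the pairing of vectors -/
def dot (n : ℕ) (x y : ℕ → K) : K := ∑ i ∈ Finset.range n, x i * y i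

theorem ff_add (t : Fin 2) (x y : ℕ → K) : ff n t (x + y) = ff n t x + ff n t y := by
  simp [ff, add_smul, Finset.sum_add_distrib]
theorem ff_smul (t : Fin 2) (c : K) (x : ℕ → K) : ff n t (c • x) = c • ff n t x := by
  simp [ff, Finset.smul_sum, mul_smul]

theorem dot_add_left (x y z : ℕ → K) : dot n (x + y) z = dot n x z + dot n y z := by
  simp [dot, add_mul, Finset.sum_add_distrib]
theorem dot_add_right (x y z : ℕ → K) : dot n x (y + z) = dot n x y + dot n x z := by
  simp [dot, mul_add, Finset.sum_add_distrib]
theorem dot_smul_left (c : K) (x z : ℕ → K) : dot n (c • x) z = c * dot n x z := by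
  simp [dot, Finset.mul_sum, mul_assoc]
theorem dot_smul_right (c : K) (x z : ℕ → K) : dot n x (c • z) = c * dot n x z := by
  simp [dot, Finset.mul_sum, mul_left_comm]

theorem ff_mul (t t' : Fin 2) (x y : ℕ → K) :
    ff n t x * ff n t' y + ff n t' y * ff n t x
      = ∑ i : Fin n, (x i * y i) • (op t i * op t' i + op t' i * op t i) := by
  have h1 : ff n t x * ff n t' y = ∑ i : Fin n, ∑ j : Fin n, (x i * y j) • (op t i * op t' j) := by
    rw [ff, ff, Finset.sum_mul]
    refine Finset.sum_congr rfl fun i _ => ?_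
    rw [Finset.mul_sum]
    refine Finset.sum_congr rfl fun j _ => ?_
    rw [smul_mul_assoc, mul_smul_comm, smul_smul]
  have h2 : ff n t' y * ff n t x = ∑ i : Fin n, ∑ j : Fin n, (x i * y j) • (op t' j * op t i) := by
    rw [Finset.sum_comm, ff, ff, Finset.sum_mul]
    refine Finset.sum_congr rfl fun i _ => ?_
    rw [Finset.mul_sum]
    refine Finset.sum_congr rfl fun j _ => ?_
    rw [smul_mul_assoc, mul_smul_comm, smul_smul, mul_comm]
  rw [h1, h2, ← Finset.sum_add_distrib]
  refine Finset.sum_congr rfl fun i _ => ?_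
  rw [← Finset.sum_add_distrib, Finset.sum_eq_single i]
  · rw [smul_add]
  · intro j _ hj
    rw [← smul_add, op_anti t t' (Ne.symm hj), smul_zero]
  · simp

theorem ff_anti (t : Fin 2) (x y : ℕ → K) : ff n t x * ff n t y = - (ff n t y * ff n t x) := by
  rw [eq_neg_iff_add_eq_zero, ff_mul]
  refine Finset.sum_eq_zero fun i _ => ?_
  rw [op_sq, add_zero, smul_zero]

theorem ff_sq (t : Fin 2) (x : ℕ → K) : ff n t x * ff n t x = 0 := by
  have h := ff_anti (n := n) t x x
  have h2 : (2 : K) • (ff n t x * ff n t x) = 0 := by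
    rw [two_smul]; nth_rewrite 1 [h]; simp
  exact (smul_eq_zero_iff_right two_ne_zero).mp h2

theorem ff_car (x y : ℕ → K) : ff n 0 x * ff n 1 y = dot n x y • 1 - ff n 1 y * ff n 0 x := by
  rw [eq_sub_iff_add_eq, ff_mul]
  simp only [op_mixed, ← Finset.sum_smul]
  rw [dot, Finset.sum_range]

theorem op_zero_vac (i : Fin n) : op 0 i (eb (n := n) 0) = 0 := by
  funext γ
  rw [op_apply]
  split_ifs
  · have : Function.update γ i (0 + 1) ≠ 0 := fun h => by
      have := congrFun h i
      simp at this
    rw [eb, if_neg this, mul_zero]; rfl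
  · rfl

theorem ff_vac (x : ℕ → K) : ff n 0 x (eb 0) = 0 := by
  rw [ff, LinearMap.sum_apply]
  exact Finset.sum_eq_zero fun i _ => by rw [LinearMap.smul_apply, op_zero_vac, smul_zero]

theorem vac_ne : (eb 0 : V n) ≠ 0 := fun h => by
  have := congrFun h 0
  simp [eb] at this

theorem q_ne : q ≠ 0 := RatFunc.X_ne_zero

/-- weight exponent -/
def wt (c d : ℤ) (γ : Fin n → Fin 2) : ℤ :=
  ∑ i : Fin n, (if γ i = 0 then c * (one' i : ℤ) else c * ((one' i : ℤ) - 1) + d)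

theorem wt_update (c d : ℤ) (γ : Fin n → Fin 2) (i : Fin n) (h : γ i = 1) :
    wt c d (Function.update γ i 0) = wt c d γ + (c - d) := by
  rw [wt, wt, ← Finset.add_sum_erase _ _ (Finset.mem_univ i),
    ← Finset.add_sum_erase (a := i) Finset.univ
      (fun i => (if γ i = 0 then c * (one' i : ℤ) else c * ((one' i : ℤ) - 1) + d))
      (Finset.mem_univ i)]
  rw [Finset.sum_congr rfl (g := fun i => (if γ i = 0 then c * (one' i : ℤ) else c * ((one' i : ℤ) - 1) + d))]
  · simp [h, one']
    ring
  · intro x hx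
    rw [Function.update_of_ne (Finset.ne_of_mem_erase hx)]

theorem wt_update' (c d : ℤ) (γ : Fin n → Fin 2) (i : Fin n) (h : γ i = 0) :
    wt c d (Function.update γ i 1) = wt c d γ + (d - c) := by
  have := wt_update c d (Function.update γ i 1) i (by simp)
  rw [Function.update_idem] at this
  have e : Function.update γ i 0 = γ := by rw [← h]; simp
  rw [e] at this
  omega

theorem Kop_apply (c d : ℤ) (f : V n) (γ : Fin n → Fin 2) :
    Kop one' n c d f γ = q ^ wt c d γ * f γ := rfl

theorem Kop_op1 (c d : ℤ) (i : Fin n) :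
    Kop one' n c d * op 1 i = q ^ (d - c) • (op 1 i * Kop one' n c d) := by
  refine LinearMap.ext fun f => funext fun γ => ?_
  simp only [Module.End.mul_apply, LinearMap.smul_apply, Pi.smul_apply, Kop_apply, op_apply,
    smul_eq_mul]
  split_ifs with h
  · have : (1 : Fin 2) + 1 = 0 := rfl
    rw [this, wt_update c d γ i h, zpow_add₀ q_ne]
    have h3 : q ^ (d - c) * q ^ (c - d) = 1 := by
      rw [← zpow_add₀ q_ne]; simp
    linear_combination (- q ^ wt c d γ * sg γ i * f (Function.update γ i 0)) * h3
  · simp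

theorem Kop_op0 (c d : ℤ) (i : Fin n) :
    Kop one' n c d * op 0 i = q ^ (c - d) • (op 0 i * Kop one' n c d) := by
  refine LinearMap.ext fun f => funext fun γ => ?_
  simp only [Module.End.mul_apply, LinearMap.smul_apply, Pi.smul_apply, Kop_apply, op_apply,
    smul_eq_mul]
  split_ifs with h
  · have : (0 : Fin 2) + 1 = 1 := rfl
    rw [this, wt_update' c d γ i h, zpow_add₀ q_ne]
    have h3 : q ^ (c - d) * q ^ (d - c) = 1 := by
      rw [← zpow_add₀ q_ne]; simp
    linear_combination (- q ^ wt c d γ * sg γ i * f (Function.update γ i 1)) * h3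
  · simp

theorem Kop_ff1 (c d : ℤ) (x : ℕ → K) :
    Kop one' n c d * ff n 1 x = q ^ (d - c) • (ff n 1 x * Kop one' n c d) := by
  rw [ff, Finset.mul_sum, Finset.sum_mul, Finset.smul_sum]
  refine Finset.sum_congr rfl fun i _ => ?_
  rw [mul_smul_comm, Kop_op1, smul_mul_assoc, smul_comm]

theorem Kop_ff0 (c d : ℤ) (x : ℕ → K) :
    Kop one' n c d * ff n 0 x = q ^ (c - d) • (ff n 0 x * Kop one' n c d) := by
  rw [ff, Finset.mul_sum, Finset.sum_mul, Finset.smul_sum]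
  refine Finset.sum_congr rfl fun i _ => ?_
  rw [mul_smul_comm, Kop_op0, smul_mul_assoc, smul_comm]

theorem Kop_ff (c d : ℤ) (x y : ℕ → K) :
    Commute (ff n 1 x * ff n 0 y) (Kop one' n c d) := by
  have h3 : q ^ (c - d) * q ^ (d - c) = 1 := by
    rw [← zpow_add₀ q_ne]; simp
  symm
  change _ * _ = _ * _
  rw [← mul_assoc, Kop_ff1, smul_mul_assoc, mul_assoc _ (Kop one' n c d), Kop_ff0, mul_smul_comm,
    smul_smul, mul_comm (q ^ (d - c)), h3, one_smul, mul_assoc]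

theorem Kop_vac : Kop one' n 0 1 (eb 0) = eb 0 := by
  funext γ
  rw [Kop_apply, eb]
  split_ifs with h
  · subst h; simp [wt]
  · simp

theorem q_sub_ne : q - q⁻¹ ≠ 0 := by
  intro h
  have h1 : q * q = 1 := by
    have := congrArg (· * q) h
    simp only [sub_mul, inv_mul_cancel₀ q_ne, zero_mul] at this
    linear_combination this
  have h2 : (algebraMap (Polynomial ℂ) K) (Polynomial.X * Polynomial.X) = algebraMap _ _ 1 := by
    rw [map_mul, map_one, RatFunc.algebraMap_X]; exact h1
  have h3 := RatFunc.algebraMap_injective ℂ h2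
  have := congrArg Polynomial.natDegree h3
  simp at this

theorem Fop_eq : Fop one' n = ff n 1 (fun i => q ^ i) := by
  refine LinearMap.ext fun f => funext fun γ => ?_
  rw [ff, LinearMap.sum_apply, Finset.sum_apply]
  change ∑ i : Fin n, _ = _
  refine Finset.sum_congr rfl fun i _ => ?_
  rw [LinearMap.smul_apply, Pi.smul_apply, op_apply, smul_eq_mul]
  have : ∑ j ∈ Finset.univ.filter (fun j => j < i), one' j = i := by
    simp [one', Finset.filter_gt_eq_Iio, Fin.card_Iio]
  rw [this]
  split_ifs
  · rw [sg]; change _ = _ * (_ * f (Function.update γ i 0)); ring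
  · simp

theorem Eop_eq : Eop one' n = ff n 0 (fun i => q⁻¹ ^ (n - 1 - i)) := by
  refine LinearMap.ext fun f => funext fun γ => ?_
  rw [ff, LinearMap.sum_apply, Finset.sum_apply]
  change ∑ i : Fin n, _ = _
  refine Finset.sum_congr rfl fun i _ => ?_
  rw [LinearMap.smul_apply, Pi.smul_apply, op_apply, smul_eq_mul]
  have : ∑ j ∈ Finset.univ.filter (fun j => i < j), one' j = n - 1 - i := by
    simp [one', Finset.filter_lt_eq_Ioi, Fin.card_Ioi]
  rw [this]
  have h1 : qnum (one' i) = 1 := by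
    simp [qnum, one', div_self q_sub_ne]
  rw [h1, zpow_neg, zpow_natCast, ← inv_pow]
  split_ifs
  · rw [sg]; change _ = _ * (_ * f (Function.update γ i 1)); ring
  · simp

end fock
end STLaux

namespace STLaux
section car
variable {F A : Type*} [Field F] [Ring A] [Algebra F A]

theorem ra {x y z : A} (h : x * y = z) (w : A) : x * (y * w) = z * w := by rw [← mul_assoc, h]

theorem car_sq {δ : F} {c a : A} (hc : c * c = 0) (hm : a * c = δ • 1 - c * a) :
    (c * a) * (c * a) = δ • (c * a) := by
  simp only [mul_assoc, ra hm, sub_mul, mul_sub, smul_mul_assoc, mul_smul_comm, ra hc, zero_mul,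
    one_mul, sub_zero]

theorem car_comm {c a c' a' : A} (hc : c' * c = -(c * c')) (ha : a' * a = -(a * a'))
    (h1 : a * c' = -(c' * a)) (h2 : a' * c = -(c * a')) :
    Commute (c * a) (c' * a') := by
  change _ * _ = _ * _
  simp only [mul_assoc, ra h1, ra h2, ra hc, ra ha, ha, neg_mul, mul_neg, neg_neg]

theorem car_braid {δ : F} {c1 a1 c2 a2 : A} (hc1 : c1 * c1 = 0) (hc2 : c2 * c2 = 0)
    (ha1 : a1 * a1 = 0) (ha2 : a2 * a2 = 0)
    (hc : c2 * c1 = -(c1 * c2)) (ha : a2 * a1 = -(a1 * a2))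
    (h11 : a1 * c1 = δ • 1 - c1 * a1) (h22 : a2 * c2 = δ • 1 - c2 * a2)
    (h12 : a1 * c2 = (-1 : F) • 1 - c2 * a1) (h21 : a2 * c1 = (-1 : F) • 1 - c1 * a2) :
    (c1 * a1) * (c2 * a2) * (c1 * a1) - c1 * a1 = (c2 * a2) * (c1 * a1) * (c2 * a2) - c2 * a2 := by
  simp only [mul_assoc, ra h11, ra h22, ra h12, ra h21, ra hc, hc, ra ha, ha, ra hc1, ra hc2, ra ha1,
    ra ha2, hc1, hc2, ha1, ha2, neg_mul, mul_neg, neg_neg, sub_mul, mul_sub, smul_mul_assoc,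
    mul_smul_comm, zero_mul, mul_zero, one_mul, mul_one, sub_zero, smul_zero, neg_zero, smul_neg]
  module

theorem car_z1 {δ : F} {c1 a1 c2 a2 c3 a3 : A}
    (ha1 : a1 * a1 = 0) (ha3 : a3 * a3 = 0)
    (h11 : a1 * c1 = δ • 1 - c1 * a1) (h33 : a3 * c3 = δ • 1 - c3 * a3)
    (h13 : a1 * c3 = - (c3 * a1)) (h31 : c1 * a3 = -(a3 * c1))
    (ha : a2 * a1 = -(a1 * a2)) (ha' : a2 * a3 = -(a3 * a2)) (ha'' : a3 * a1 = -(a1 * a3))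
    (h12 : c2 * a1 = (-1 : F) • 1 - a1 * c2) :
    (c1 * a1) * (c3 * a3) * (c2 * a2) * (δ • 1 - c1 * a1) * (δ • 1 - c3 * a3) = 0 := by
  rw [← h11, ← h33]
  simp only [mul_assoc, ra h13, ra h31, ra ha, ra ha', ra ha'', ra h12, ra ha1, ra ha3,
    neg_mul, mul_neg, neg_neg, sub_mul, mul_sub, smul_mul_assoc,
    mul_smul_comm, zero_mul, mul_zero, one_mul, mul_one, sub_zero, smul_zero, neg_zero, smul_neg]

theorem car_z2 {δ : F} {c1 a1 c2 a2 c3 a3 : A}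
    (hc1 : c1 * c1 = 0) (hc3 : c3 * c3 = 0)
    (h11 : a1 * c1 = δ • 1 - c1 * a1) (h33 : a3 * c3 = δ • 1 - c3 * a3)
    (h13 : a1 * c3 = - (c3 * a1)) (h31 : c1 * a3 = -(a3 * c1))
    (hc : c1 * c2 = -(c2 * c1)) (hc' : c3 * c2 = -(c2 * c3)) (hc'' : c3 * c1 = -(c1 * c3))
    (h12 : c3 * a2 = (-1 : F) • 1 - a2 * c3) :
    (δ • 1 - c1 * a1) * (δ • 1 - c3 * a3) * (c2 * a2) * (c1 * a1) * (c3 * a3) = 0 := by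
  rw [← h11, ← h33]
  simp only [mul_assoc, ra h13, ra h31, ra hc, ra hc', ra hc'', ra h12, ra hc1, ra hc3,
    neg_mul, mul_neg, neg_neg, sub_mul, mul_sub, smul_mul_assoc,
    mul_smul_comm, zero_mul, mul_zero, one_mul, mul_one, sub_zero, smul_zero, neg_zero, smul_neg]

theorem car_anti {c a f : A} (h1 : a * f = -(f * a)) (h2 : c * f = -(f * c)) :
    Commute (c * a) f := by
  change _ * _ = _ * _
  simp only [mul_assoc, h1, mul_neg, ra h2, neg_mul, neg_neg]
end car

section dop
variable {n : ℕ}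

def uv (k : ℕ) : ℕ → K := fun i => if i = k then q else if i = k + 1 then -1 else 0
def ph (k : ℕ) : ℕ → K := fun i => if i = k then 1 else if i = k + 1 then -q⁻¹ else 0

theorem uv_eq (k : ℕ) : uv k = fun i => (if i = k then q else 0) + (if i = k + 1 then -1 else 0) := by
  funext i; unfold uv
  by_cases h : i = k <;> simp [h]
theorem ph_eq (k : ℕ) : ph k = fun i => (if i = k then 1 else 0) + (if i = k + 1 then -q⁻¹ else 0) := by
  funext i; unfold ph
  by_cases h : i = k <;> simp [h]

theorem dot_uv (x : ℕ → K) {k : ℕ} (hk : k + 1 < n) : dot n x (uv k) = q * x k - x (k + 1) := by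
  rw [dot, uv_eq]
  simp only [mul_add, Finset.sum_add_distrib, mul_ite, mul_zero, Finset.sum_ite_eq',
    Finset.mem_range, hk, if_true, show k < n by omega]
  ring

theorem dot_ph (x : ℕ → K) {k : ℕ} (hk : k + 1 < n) : dot n (ph k) x = x k - q⁻¹ * x (k + 1) := by
  rw [dot, ph_eq]
  simp only [add_mul, Finset.sum_add_distrib, ite_mul, zero_mul, Finset.sum_ite_eq',
    Finset.mem_range, hk, if_true, show k < n by omega]
  ring

theorem dot_self {k : ℕ} (hk : k + 1 < n) : dot n (ph k) (uv k) = q + q⁻¹ := by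
  rw [dot_uv _ hk]; simp [ph]
theorem dot_succ {k : ℕ} (hk : k + 2 < n) : dot n (ph k) (uv (k + 1)) = -1 := by
  rw [dot_uv _ (by omega)]; simp [ph, q_ne, show k + 1 + 1 ≠ k by omega]
theorem dot_succ' {k : ℕ} (hk : k + 2 < n) : dot n (ph (k + 1)) (uv k) = -1 := by
  rw [dot_uv _ (by omega)]; simp [ph, show k ≠ k + 1 + 1 by omega]
theorem dot_far {i j : ℕ} (hi : i + 1 < n) (hj : j + 1 < n) (h : i + 1 < j ∨ j + 1 < i) :
    dot n (ph i) (uv j) = 0 := by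
  rw [dot_uv _ (by omega)]; unfold ph
  rw [if_neg (by omega), if_neg (by omega), if_neg (by omega), if_neg (by omega)]; simp

def Dop (n k : ℕ) : Module.End K (V n) := ff n 1 (uv k) * ff n 0 (ph k)

theorem car0 {x y : ℕ → K} (h : dot n x y = 0) : ff n 0 x * ff n 1 y = - (ff n 1 y * ff n 0 x) := by
  rw [ff_car, h, zero_smul, zero_sub]
theorem car0' {x y : ℕ → K} (h : dot n x y = 0) : ff n 1 y * ff n 0 x = - (ff n 0 x * ff n 1 y) := by
  rw [ff_car, h, zero_smul, zero_sub, neg_neg]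
theorem car' (x y : ℕ → K) : ff n 1 y * ff n 0 x = dot n x y • 1 - ff n 0 x * ff n 1 y := by
  rw [ff_car]; abel

theorem Dsys : Sys (q + q⁻¹) (n - 1) (Dop n) where
  sq k hk := by
    refine car_sq (ff_sq _ _) ?_
    rw [ff_car, dot_self (by omega)]
  comm i j hij hj := car_comm (ff_anti _ _ _) (ff_anti _ _ _)
    (car0 (dot_far (by omega) (by omega) (by omega)))
    (car0 (dot_far (by omega) (by omega) (by omega)))
  braid k hk := by
    refine car_braid (δ := q + q⁻¹) (ff_sq _ _) (ff_sq _ _) (ff_sq _ _) (ff_sq _ _) (ff_anti _ _ _)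
      (ff_anti _ _ _) ?_ ?_ ?_ ?_
    · rw [ff_car, dot_self (by omega)]
    · rw [ff_car, dot_self (by omega)]
    · rw [ff_car, dot_succ (by omega)]
    · rw [ff_car, dot_succ' (by omega)]
  z1 k hk := by
    refine car_z1 (ff_sq _ _) (ff_sq _ _) ?_ ?_ (car0 (dot_far (by omega) (by omega) (by omega)))
      (car0' (dot_far (by omega) (by omega) (by omega))) (ff_anti _ _ _) (ff_anti _ _ _)
      (ff_anti _ _ _) ?_
    · rw [ff_car, dot_self (by omega)]
    · rw [ff_car, dot_self (by omega)]
    · rw [car', dot_succ (by omega)]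
  z2 k hk := by
    refine car_z2 (ff_sq _ _) (ff_sq _ _) ?_ ?_ (car0 (dot_far (by omega) (by omega) (by omega)))
      (car0' (dot_far (by omega) (by omega) (by omega))) (ff_anti _ _ _) (ff_anti _ _ _)
      (ff_anti _ _ _) ?_
    · rw [ff_car, dot_self (by omega)]
    · rw [ff_car, dot_self (by omega)]
    · rw [car', dot_succ (by omega)]

theorem Dop_K {k : ℕ} (c d : ℤ) : Commute (Dop n k) (Kop one' n c d) := Kop_ff c d _ _

theorem Dop_F {k : ℕ} (hk : k + 1 < n) : Commute (Dop n k) (Fop one' n) := by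
  have h : dot n (ph k) (fun i => q ^ i) = 0 := by
    rw [dot_ph _ hk, pow_succ']; rw [← mul_assoc, inv_mul_cancel₀ q_ne]; ring
  rw [Fop_eq, Dop]
  exact car_anti (car0 h) (ff_anti _ _ _)

theorem psi_uv {k : ℕ} (hk : k + 1 < n) : dot n (fun i => q⁻¹ ^ (n - 1 - i)) (uv k) = 0 := by
  rw [dot_uv _ hk]
  obtain ⟨j, hj⟩ : ∃ j, n - 1 - k = j + 1 := ⟨n - 2 - k, by omega⟩
  rw [show n - 1 - (k + 1) = j by omega, hj, pow_succ', ← mul_assoc, mul_inv_cancel₀ q_ne]; ring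

theorem Dop_E {k : ℕ} (hk : k + 1 < n) : Commute (Dop n k) (Eop one' n) := by
  rw [Eop_eq, Dop]
  exact car_anti (ff_anti _ _ _) (car0' (psi_uv hk))

theorem ff_uv {k : ℕ} (hk : k + 1 < n) :
    ff n 1 (uv k) = q • op 1 (⟨k, by omega⟩ : Fin n) - op 1 (⟨k + 1, hk⟩ : Fin n) := by
  rw [ff, uv_eq]
  simp only [add_smul, Finset.sum_add_distrib, ite_smul, zero_smul]
  rw [Finset.sum_eq_single (⟨k, by omega⟩ : Fin n), Finset.sum_eq_single (⟨k + 1, hk⟩ : Fin n)]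
  · simp [sub_eq_add_neg]
  · intro b _ hb
    rw [if_neg]; intro h; exact hb (Fin.ext h)
  · simp
  · intro b _ hb
    rw [if_neg]; intro h; exact hb (Fin.ext h)
  · simp

theorem ff_ph {k : ℕ} (hk : k + 1 < n) :
    ff n 0 (ph k) = op 0 (⟨k, by omega⟩ : Fin n) - q⁻¹ • op 0 (⟨k + 1, hk⟩ : Fin n) := by
  rw [ff, ph_eq]
  simp only [add_smul, Finset.sum_add_distrib, ite_smul, zero_smul]
  rw [Finset.sum_eq_single (⟨k, by omega⟩ : Fin n), Finset.sum_eq_single (⟨k + 1, hk⟩ : Fin n)]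
  · simp [sub_eq_add_neg]
  · intro b _ hb
    rw [if_neg]; intro h; exact hb (Fin.ext h)
  · simp
  · intro b _ hb
    rw [if_neg]; intro h; exact hb (Fin.ext h)
  · simp

theorem sg_succ (γ : Fin n → Fin 2) {k : ℕ} (hk : k + 1 < n) :
    sg γ ⟨k + 1, hk⟩ = sg γ ⟨k, by omega⟩ * (if γ ⟨k, by omega⟩ = 1 then -1 else 1) := by
  rw [sg_prod, sg_prod]
  have : (if γ ⟨k, by omega⟩ = 1 then (-1 : K) else 1)
      = ∏ j : Fin n, if j = ⟨k, by omega⟩ then (if γ j = 1 then (-1 : K) else 1) else 1 := by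
    rw [Finset.prod_ite_eq']; simp
  rw [this, ← Finset.prod_mul_distrib]
  refine Finset.prod_congr rfl fun j _ => ?_
  have h1 : j < ⟨k + 1, hk⟩ ↔ (j : ℕ) < k + 1 := Iff.rfl
  have h2 : j < ⟨k, by omega⟩ ↔ (j : ℕ) < k := Iff.rfl
  have h3 : j = ⟨k, by omega⟩ ↔ (j : ℕ) = k := Fin.ext_iff
  simp only [h1, h2, h3]
  rcases lt_trichotomy (j : ℕ) k with h | h | h
  · rw [if_neg (c := (j : ℕ) = k) (by omega), mul_one]
    simp [h, show (j : ℕ) < k + 1 by omega]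
  · simp [h]
  · rw [if_neg (c := (j : ℕ) = k) (by omega), mul_one]
    simp [show ¬ (j : ℕ) < k by omega, show ¬ (j : ℕ) < k + 1 by omega]

theorem swap_eq (γ : Fin n → Fin 2) (a b : Fin n) (s t : Fin 2) (hab : a ≠ b) (ha : γ a = s) (hb : γ b = t) :
    (fun k => γ (Equiv.swap a b k)) = Function.update (Function.update γ a t) b s := by
  funext k
  by_cases h1 : k = b
  · subst h1; simp [ha]
  · rw [Function.update_of_ne h1]
    by_cases h2 : k = a
    · subst h2; simp [hb]
    · rw [Function.update_of_ne h2, Equiv.swap_apply_of_ne_of_ne h2 h1]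

theorem Dop_Hop {k : ℕ} (hk : k + 1 < n) : Dop n k = q⁻¹ • 1 - Hop n k hk := by
  refine LinearMap.ext fun f => funext fun γ => ?_
  set a : Fin n := ⟨k, by omega⟩ with ha
  set b : Fin n := ⟨k + 1, hk⟩ with hb
  have hab : a ≠ b := fun h => by simp [ha, hb] at h
  have hlt : a < b := by change k < k + 1; omega
  have hH : Hop n k hk f γ = if γ a = 0 ∧ γ b = 0 then q⁻¹ * f γ
    else if γ a = 1 ∧ γ b = 1 then (-q) * f γ
    else if γ a = 0 ∧ γ b = 1 then
      f (fun k => γ (Equiv.swap a b k))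
    else (q⁻¹ - q) * f γ + f (fun k => γ (Equiv.swap a b k)) := rfl
  rw [LinearMap.sub_apply, Pi.sub_apply, hH, Dop, ff_uv hk, ff_ph hk, ← ha, ← hb]
  have hs : sg γ b = sg γ a * (if γ a = 1 then -1 else 1) := sg_succ γ hk
  have ea : ∀ t : Fin 2, γ a = t → Function.update γ a t = γ := by
    rintro t rfl; simp
  have eb : ∀ t : Fin 2, γ b = t → Function.update γ b t = γ := by
    rintro t rfl; simp
  have h2 : ∀ t : Fin 2, t = 0 ∨ t = 1 := by decide
  have e10 : (1 : Fin 2) + 1 = 0 := rfl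
  have e01 : (0 : Fin 2) + 1 = 1 := rfl
  have saa := sg_update γ a a
  have sab := sg_update γ a b
  have sba := sg_update γ b a
  have sbb := sg_update γ b b
  rw [if_neg (lt_irrefl _)] at saa sbb
  rw [if_pos hlt] at sab
  rw [if_neg (not_lt.mpr hlt.le)] at sba
  have s2 := sg_sq γ a
  have hq := mul_inv_cancel₀ q_ne
  simp only [Module.End.mul_apply, LinearMap.sub_apply, LinearMap.smul_apply, Pi.sub_apply,
    Pi.smul_apply, op_apply, smul_eq_mul, Module.End.one_apply, e10, e01, zero_add,
    Function.update_self, Function.update_idem, Function.update_of_ne hab,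
    Function.update_of_ne hab.symm, if_true]
  rcases h2 (γ a) with h0 | h0 <;> have h0' := h0 <;> rcases h2 (γ b) with h1 | h1 <;> have h1' := h1 <;>
    rw [h0] at saa sab hs <;> rw [h1] at sbb sba <;>
    simp only [h0, h1, e10, e01, zero_add, if_true, if_false, zero_ne_one, one_ne_zero, mul_zero, and_true, and_false,
      true_and, false_and, sub_zero, zero_sub, and_self] at saa sab hs sbb sba ⊢
  · simp
  · rw [swap_eq γ a b 0 1 hab h0 h1, Function.update_comm hab, sba, sbb, eb 1 h1, hs]
    linear_combination (q⁻¹ * f γ - f (Function.update (Function.update γ b 0) a 1)) * s2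
  · rw [swap_eq γ a b 1 0 hab h0 h1, saa, sab, ea 1 h0, hs]
    linear_combination (q * f γ - q * q⁻¹ * f (Function.update (Function.update γ a 0) b 1)) * s2 - f (Function.update (Function.update γ a 0) b 1) * hq
  · rw [saa, sbb, ea 1 h0, eb 1 h1, hs]
    linear_combination (q * f γ + q⁻¹ * f γ) * s2
end dop
end STLaux

namespace STLaux
section scal

theorem q_eq : q = algebraMap (Polynomial ℂ) K Polynomial.X := (RatFunc.algebraMap_X).symm

def nn (k : ℕ) : K := ∑ i ∈ Finset.range k, q ^ (2 * i)

theorem nn_ne (k : ℕ) : nn (k + 1) ≠ 0 := by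
  intro h
  have h2 : (algebraMap (Polynomial ℂ) K) (∑ i ∈ Finset.range (k + 1), Polynomial.X ^ (2 * i))
      = algebraMap _ _ 0 := by
    rw [map_sum, map_zero, ← h, nn]
    simp only [map_pow, q_eq]
  have h3 := RatFunc.algebraMap_injective ℂ h2
  have := congrArg (Polynomial.eval 1) h3
  simp [Polynomial.eval_finsetSum] at this
  exact Nat.cast_add_one_ne_zero k this

theorem nn_succ (k : ℕ) : nn (k + 1) = 1 + q ^ 2 * nn k := by
  rw [nn, Finset.sum_range_succ', nn, Finset.mul_sum, add_comm]
  simp only [mul_zero, pow_zero]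
  congr 1
  refine Finset.sum_congr rfl fun i _ => ?_
  ring

theorem nn_rec (k : ℕ) : nn (k + 2) + q ^ 2 * nn k = (1 + q ^ 2) * nn (k + 1) := by
  rw [nn_succ (k + 1)]
  linear_combination - nn_succ k

def ls (k : ℕ) : K := q⁻¹ * nn (k + 2) / nn (k + 1)
def us (k : ℕ) : K := q * nn k / nn (k + 1)

theorem nn_zero : nn 0 = 0 := by simp [nn]
theorem nn_one : nn 1 = 1 := by simp [nn]

theorem ls_sum (k : ℕ) : ls k + us k = q + q⁻¹ := by
  rw [ls, us]
  have := nn_ne k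
  have := q_ne
  field_simp
  linear_combination nn_rec k

theorem ls_ne (k : ℕ) : ls k ≠ 0 :=
  div_ne_zero (mul_ne_zero (inv_ne_zero q_ne) (nn_ne _)) (nn_ne _)

theorem us_zero : us 0 = 0 := by rw [us, nn_zero]; simp

theorem scal : Scal ls us (q + q⁻¹) where
  sum := ls_sum
  u0 := us_zero
  ul k := by
    rw [ls, us]
    have := nn_ne k
    have := nn_ne (k + 1)
    have := q_ne
    field_simp
  lne := ls_ne
  dne := by
    have := ls_sum 0
    rw [us_zero, add_zero] at this
    rw [← this]; exact ls_ne 0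

theorem q_inj : Function.Injective (fun k : ℕ => q ^ k) := by
  intro a b h
  simp only [q_eq, ← map_pow] at h
  have h3 := RatFunc.algebraMap_injective ℂ h
  have := congrArg Polynomial.natDegree h3
  simpa using this

end scal

section fnlem
variable {F A : Type*} [Field F] [Ring A] [Algebra F A]

theorem car_fN {l μ : F} {c a c' a' : A} (hl : l ≠ 0) (hc : c * c = 0) (ha : a * a = 0)
    (hcc : c' * c = -(c * c')) (haa : a' * a = -(a * a'))
    (h1 : a * c = (1 : F) • 1 - c * a)
    (h3 : a * c' = -(c' * a)) (h4 : a' * c = -(c * a')) :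
    fN l μ (c * a) ((c' + (-μ) • c) * (l • a' + (-1 : F) • a)) = c' * a' := by
  have e : (1 - c * a) * ((c' + (-μ) • c) * (l • a' + (-1 : F) • a)) * (1 - c * a)
      + (c * a) * ((c' + (-μ) • c) * (l • a' + (-1 : F) • a)) * (c * a) - μ • (c * a)
      = l • (c' * a') := by
    simp only [mul_assoc, mul_add, add_mul, mul_sub, sub_mul, smul_mul_assoc, mul_smul_comm,
      one_mul, mul_one, ra h1, h1, ra h3, h3, ra h4, h4, ra hcc, hcc, ra haa, haa, ra hc, hc,
      ra ha, ha, neg_mul, mul_neg, neg_neg, zero_mul, mul_zero, smul_zero, sub_zero, neg_zero,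
      add_zero, zero_add, smul_neg, zero_sub, smul_add, smul_sub]
    module
  rw [fN, e, smul_smul, inv_mul_cancel₀ hl, one_smul]
end fnlem

section vecs
variable {n : ℕ}

def xx : ℕ → (ℕ → K)
  | 0 => uv 0
  | k + 1 => uv (k + 1) + us (k + 1) • xx k

def yy : ℕ → (ℕ → K)
  | 0 => (ls 0)⁻¹ • ph 0
  | k + 1 => (ls (k + 1))⁻¹ • (ph (k + 1) + yy k)

theorem ph_xx_far (j : ℕ) : ∀ i, j + 2 ≤ i → i + 1 < n → dot n (ph i) (xx j) = 0 := by
  induction j with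
  | zero => intro i h hi; exact dot_far hi (by omega) (by omega)
  | succ j ih =>
    intro i h hi
    rw [xx, dot_add_right, dot_smul_right, ih i (by omega) hi, dot_far hi (by omega) (by omega)]
    ring

theorem ph_xx_succ (j : ℕ) (hj : j + 2 < n) : dot n (ph (j + 1)) (xx j) = -1 := by
  cases j with
  | zero => exact dot_succ' hj
  | succ j =>
    rw [xx, dot_add_right, dot_smul_right, ph_xx_far _ _ (by omega) (by omega), dot_succ' hj]
    ring

theorem yy_uv_far (j : ℕ) : ∀ i, j + 2 ≤ i → i + 1 < n → dot n (yy j) (uv i) = 0 := by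
  induction j with
  | zero => intro i h hi; rw [yy, dot_smul_left, dot_far (by omega) hi (by omega)]; ring
  | succ j ih =>
    intro i h hi
    rw [yy, dot_smul_left, dot_add_left, ih i (by omega) hi, dot_far (by omega) hi (by omega)]
    ring

theorem yy_uv_succ (j : ℕ) (hj : j + 2 < n) : dot n (yy j) (uv (j + 1)) = -(ls j)⁻¹ := by
  cases j with
  | zero => rw [yy, dot_smul_left, dot_succ hj]; ring
  | succ j =>
    rw [yy, dot_smul_left, dot_add_left, yy_uv_far _ _ (by omega) (by omega), dot_succ hj]
    ring

theorem us_succ (k : ℕ) : us (k + 1) = (ls k)⁻¹ := eq_inv_of_mul_eq_one_left (scal.ul k)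

theorem yy_xx_self (j : ℕ) (hj : j + 1 < n) : dot n (yy j) (xx j) = 1 := by
  induction j with
  | zero =>
    have := ls_sum 0
    rw [us_zero, add_zero] at this
    rw [yy, xx, dot_smul_left, dot_self hj, ← this, inv_mul_cancel₀ (ls_ne 0)]
  | succ j ih =>
    have h1 : dot n (yy j) (xx (j + 1)) = 0 := by
      rw [xx, dot_add_right, dot_smul_right, ih (by omega), yy_uv_succ _ (by omega), us_succ]; ring
    have h2 : dot n (ph (j + 1)) (xx (j + 1)) = ls (j + 1) := by
      rw [xx, dot_add_right, dot_smul_right, dot_self hj, ph_xx_succ _ (by omega)]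
      linear_combination - ls_sum (j + 1)
    rw [yy, dot_smul_left, dot_add_left, h1, h2, add_zero, inv_mul_cancel₀ (ls_ne _)]

theorem yy_xx_lt (i j : ℕ) (h : i < j) (hj : j + 1 < n) : dot n (yy i) (xx j) = 0 := by
  induction j with
  | zero => omega
  | succ j ih =>
    rw [xx, dot_add_right, dot_smul_right]
    rcases Nat.lt_succ_iff_lt_or_eq.mp h with h | rfl
    · rw [ih h (by omega), yy_uv_far _ _ (by omega) hj]; ring
    · rw [yy_xx_self _ (by omega), yy_uv_succ _ (by omega), us_succ]; ring

theorem yy_xx_gt (i j : ℕ) (h : j < i) (hi : i + 1 < n) : dot n (yy i) (xx j) = 0 := by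
  induction i with
  | zero => omega
  | succ i ih =>
    rw [yy, dot_smul_left, dot_add_left]
    rcases Nat.lt_succ_iff_lt_or_eq.mp h with h | rfl
    · rw [ih h (by omega), ph_xx_far _ _ (by omega) hi]; ring
    · rw [yy_xx_self _ (by omega), ph_xx_succ _ (by omega)]; ring

theorem yy_xx_ne (i j : ℕ) (h : i ≠ j) (hi : i + 1 < n) (hj : j + 1 < n) :
    dot n (yy i) (xx j) = 0 := by
  rcases lt_or_gt_of_ne h with h | h
  · exact yy_xx_lt i j h hj
  · exact yy_xx_gt i j h hi

theorem psi_xx (j : ℕ) (hj : j + 1 < n) : dot n (fun i => q⁻¹ ^ (n - 1 - i)) (xx j) = 0 := by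
  induction j with
  | zero => exact psi_uv hj
  | succ j ih =>
    rw [xx, dot_add_right, dot_smul_right, psi_uv hj, ih (by omega)]; ring

theorem Nop_eq (k : ℕ) (hk : k + 1 < n) :
    Nop ls us (Dop n) (k + 1) = ff n 1 (xx k) * ff n 0 (yy k) := by
  induction k with
  | zero =>
    rw [Nop, Nop, fN, Dop, xx, yy, ff_smul]
    simp
  | succ k ih =>
    rw [Nop, ih (by omega), Dop]
    have e1 : uv (k + 1) = xx (k + 1) + (- us (k + 1)) • xx k := by
      funext i; simp [xx]
    have e2 : ph (k + 1) = ls (k + 1) • yy (k + 1) + (-1 : K) • yy k := by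
      rw [yy, smul_smul, mul_inv_cancel₀ (ls_ne _)]; funext i; simp
    rw [e1, e2, ff_add, ff_add, ff_smul, ff_smul, ff_smul]
    refine car_fN (ls_ne _) (ff_sq _ _) (ff_sq _ _) (ff_anti _ _ _) (ff_anti _ _ _) ?_ ?_ ?_
    · rw [ff_car, yy_xx_self _ (by omega)]
    · exact car0 (yy_xx_ne _ _ (by omega) (by omega) (by omega))
    · exact car0 (yy_xx_ne _ _ (by omega) (by omega) (by omega))

def vv (n : ℕ) : ℕ → V n
  | 0 => eb 0
  | r + 1 => ff n 1 (xx r) (vv n r)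

theorem neg_ap (X : Module.End K (V n)) (v : V n) : (-X) v = - X v := rfl

theorem ff_vv (x : ℕ → K) (r : ℕ) (h : ∀ j < r, dot n x (xx j) = 0) : ff n 0 x (vv n r) = 0 := by
  induction r with
  | zero => exact ff_vac x
  | succ r ih =>
    rw [vv, ← Module.End.mul_apply, car0 (h r (by omega)), neg_ap, Module.End.mul_apply,
      ih (fun j hj => h j (by omega)), map_zero, neg_zero]

theorem cc_vv (r k : ℕ) (h : k < r) : ff n 1 (xx k) (vv n r) = 0 := by
  induction r with
  | zero => omega
  | succ r ih =>
    rw [vv, ← Module.End.mul_apply]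
    rcases Nat.lt_succ_iff_lt_or_eq.mp h with h | rfl
    · rw [ff_anti, neg_ap, Module.End.mul_apply, ih h, map_zero, neg_zero]
    · rw [ff_sq]; rfl

theorem ca_ap (x y : ℕ → K) (v : V n) :
    ff n 0 x (ff n 1 y v) = dot n x y • v - ff n 1 y (ff n 0 x v) := by
  rw [← Module.End.mul_apply, ff_car]; rfl

theorem vv_ne (r : ℕ) (hr : r ≤ n - 1) : vv n r ≠ 0 := by
  induction r with
  | zero => exact vac_ne
  | succ r ih =>
    intro h
    have h1 : ff n 0 (yy r) (vv n (r + 1)) = vv n r := by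
      rw [vv, ca_ap, yy_xx_self _ (by omega), ff_vv _ _ (fun j hj => yy_xx_ne _ _ (by omega) (by omega) (by omega)), one_smul, map_zero, sub_zero]
    rw [h, map_zero] at h1
    exact ih (by omega) h1.symm

theorem vv_wt (r : ℕ) (hr : r ≤ n - 1) : Wt ls us (n - 1) (Dop n) (Finset.range r) (vv n r) := by
  intro k hk
  rw [Nop_eq k (by omega), Module.End.smul_def, Module.End.mul_apply]
  simp only [Finset.mem_range]
  split_ifs with h
  · have := ca_ap (yy k) (xx k) (vv n r)
    rw [cc_vv r k h, yy_xx_self _ (by omega), map_zero, one_smul] at this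
    exact (sub_eq_zero.mp this.symm).symm
  · rw [ff_vv _ _ (fun j hj => yy_xx_ne _ _ (by omega) (by omega) (by omega)), map_zero]

theorem vv_E (r : ℕ) (hr : r ≤ n - 1) : Eop one' n (vv n r) = 0 := by
  rw [Eop_eq]
  exact ff_vv _ _ fun j hj => psi_xx j (by omega)

theorem vv_K (r : ℕ) : Kop one' n 0 1 (vv n r) = q ^ r • vv n r := by
  induction r with
  | zero => rw [vv, Kop_vac, pow_zero, one_smul]
  | succ r ih =>
    have h := LinearMap.congr_fun (Kop_ff1 (n := n) 0 1 (xx r)) (vv n r)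
    rw [Module.End.mul_apply, LinearMap.smul_apply, Module.End.mul_apply, ih] at h
    rw [vv, h, map_smul, smul_smul]
    congr 1
    simp [pow_succ']

theorem EF : Eop one' (n + 1) * Fop one' (n + 1) + Fop one' (n + 1) * Eop one' (n + 1)
    = (q⁻¹ ^ n * nn (n + 1)) • 1 := by
  rw [Eop_eq, Fop_eq, ff_car, sub_add_cancel]
  congr 1
  rw [dot, nn, Finset.mul_sum]
  refine Finset.sum_congr rfl fun i hi => ?_
  obtain ⟨j, rfl⟩ : ∃ j, n = i + j := ⟨n - i, by have := Finset.mem_range.mp hi; omega⟩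
  rw [show i + j + 1 - 1 - i = j by omega]
  have h := inv_mul_cancel₀ q_ne
  have h2 : q⁻¹ ^ i * q ^ i = 1 := by rw [← mul_pow, h, one_pow]
  rw [two_mul, pow_add, pow_add]
  linear_combination (- q⁻¹ ^ j * q ^ i) * h2

theorem EF_ne : q⁻¹ ^ n * nn (n + 1) ≠ 0 := mul_ne_zero (pow_ne_zero _ (inv_ne_zero q_ne)) (nn_ne n)
end vecs
end STLaux

namespace STLaux
section dual
variable {F A : Type*} [Field F] [Ring A] [Algebra F A] {δ : F} {m : ℕ} {C : ℕ → A}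

theorem Sys.dual (h : Sys δ m C) : Sys δ m (fun k => δ • 1 - C k) where
  sq k hk := by
    have e := h.sq k hk
    simp only [mul_sub, sub_mul, smul_mul_assoc, mul_smul_comm, one_mul, mul_one, e, smul_sub]
    module
  comm i j hij hj := by
    have hc := h.comm i j hij hj
    have hd : ∀ x : A, Commute (δ • (1 : A)) x := fun x => (Commute.one_left x).smul_left δ
    exact ((hd _).sub_right (hd _)).sub_left (((hd _).symm).sub_right hc)
  braid k hk := by
    have e1 := h.sq k (by omega)
    have e2 := h.sq (k + 1) (by omega)
    have e := h.braid k hk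
    simp only [mul_assoc] at e
    have e' := sub_eq_iff_eq_add.mp e
    simp only [mul_assoc, mul_sub, sub_mul, smul_mul_assoc, mul_smul_comm, one_mul, mul_one, e1, e2,
      e', smul_sub]
    module
  z1 k hk := by
    have e1 := h.sq k (by omega)
    have e2 := h.sq (k + 2) (by omega)
    have hc : C (k + 2) * C k = C k * C (k + 2) := (h.comm k (k + 2) (by omega) hk).symm
    have e := h.z2 k hk
    have e0 : (δ • 1 - C k) * (δ • 1 - C (k + 2)) * C k * C (k + 2) = 0 := by
      simp only [mul_assoc, mul_sub, sub_mul, smul_mul_assoc, mul_smul_comm, one_mul, mul_one,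
        ra e1, ra e2, e1, e2, ra hc, hc, smul_sub]
      module
    have e3 : ∀ x : A, δ • 1 - (δ • 1 - x) = x := fun x => by abel
    simp only [e3]
    have e4 : (δ • 1 - C k) * (δ • 1 - C (k + 2)) * (δ • 1 - C (k + 1)) * C k * C (k + 2)
      = δ • ((δ • 1 - C k) * (δ • 1 - C (k + 2)) * C k * C (k + 2))
        - (δ • 1 - C k) * (δ • 1 - C (k + 2)) * C (k + 1) * C k * C (k + 2) := by
      rw [mul_sub ((δ • 1 - C k) * (δ • 1 - C (k + 2))), mul_smul_comm, mul_one, sub_mul, sub_mul,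
        smul_mul_assoc, smul_mul_assoc]
    rw [e4, e0, e, smul_zero, sub_zero]
  z2 k hk := by
    have e1 := h.sq k (by omega)
    have e2 := h.sq (k + 2) (by omega)
    have hc : C (k + 2) * C k = C k * C (k + 2) := (h.comm k (k + 2) (by omega) hk).symm
    have e := h.z1 k hk
    have e0 : C k * C (k + 2) * ((δ • 1 - C k) * (δ • 1 - C (k + 2))) = 0 := by
      simp only [mul_assoc, mul_sub, sub_mul, smul_mul_assoc, mul_smul_comm, one_mul, mul_one,
        ra e1, ra e2, e1, e2, ra hc, hc, smul_sub]
      module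
    have e3 : ∀ x : A, δ • 1 - (δ • 1 - x) = x := fun x => by abel
    simp only [e3]
    have e4 : C k * C (k + 2) * (δ • 1 - C (k + 1)) * (δ • 1 - C k) * (δ • 1 - C (k + 2))
      = δ • (C k * C (k + 2) * ((δ • 1 - C k) * (δ • 1 - C (k + 2))))
        - C k * C (k + 2) * C (k + 1) * (δ • 1 - C k) * (δ • 1 - C (k + 2)) := by
      rw [mul_sub (C k * C (k + 2)), mul_smul_comm, mul_one, sub_mul, sub_mul,
        smul_mul_assoc, smul_mul_assoc, mul_assoc (C k * C (k + 2)) (δ • 1 - C k)]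
    rw [e4, e0, e, smul_zero, sub_zero]

/-- extension of a finite family by zero -/
def extz (c : Fin m → A) (k : ℕ) : A := if h : k < m then c ⟨k, h⟩ else 0

theorem extz_lt (c : Fin m → A) {k : ℕ} (h : k < m) : extz c k = c ⟨k, h⟩ := dif_pos h

theorem gen_top (π : FreeAlgebra F (Fin m) →ₐ[F] A) (hπ : Function.Surjective π) (D : ℕ → A)
    (hD : ∀ i : Fin m, ∃ α : F, π (FreeAlgebra.ι F i) = α • 1 - D i) : genD F m D = ⊤ := by
  rw [eq_top_iff]
  rintro a -
  obtain ⟨b, rfl⟩ := hπ a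
  induction b using FreeAlgebra.induction with
  | grade0 r => rw [AlgHom.commutes]; exact Subalgebra.algebraMap_mem _ r
  | grade1 i =>
    obtain ⟨α, h⟩ := hD i
    rw [h]
    exact Subalgebra.sub_mem _ (Subalgebra.smul_mem _ (Subalgebra.one_mem _) α)
      (Algebra.subset_adjoin ⟨i, i.isLt, rfl⟩)
  | mul a b ha hb => rw [map_mul]; exact Subalgebra.mul_mem _ ha hb
  | add a b ha hb => rw [map_add]; exact Subalgebra.add_mem _ ha hb

theorem Nop_map {B : Type*} [Ring B] [Algebra F B] (ρ : A →ₐ[F] B) (l u : ℕ → F) (D : ℕ → A)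
    (D' : ℕ → B) (h : ∀ k < m, ρ (D k) = D' k) (k : ℕ) (hk : k ≤ m) :
    ρ (Nop l u D k) = Nop l u D' k := by
  induction k with
  | zero => simp [Nop]
  | succ k ih =>
    simp only [Nop, fN, map_smul, map_add, map_sub, map_mul, map_one, ih (by omega), h k (by omega)]
end dual

section final
variable {n : ℕ}

theorem inj_of {A : Type*} [Ring A] [Algebra K A] (ρ : A →ₐ[K] Module.End K (V n)) (D : ℕ → A)
    (h : Sys (q + q⁻¹) (n - 1) D) (hgen : genD K (n - 1) D = ⊤)
    (hD : ∀ k < n - 1, ρ (D k) = Dop n k) (a : A) (ha : ρ a = 0) : a = 0 := by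
  let _ : Module A (V n) := Module.compHom (V n) ρ.toRingHom
  have hsm : ∀ (a : A) (x : V n), a • x = ρ a x := fun a x => rfl
  have : IsScalarTower K A (V n) := ⟨fun c a x => by
    rw [hsm, hsm, map_smul]; rfl⟩
  refine faithful (M := V n) scal h hgen (fun r hr => ⟨vv n r, vv_ne r hr, ?_⟩) a ?_
  · intro k hk
    have := vv_wt r hr k hk
    rw [hsm, Nop_map ρ ls us D (Dop n) hD (k + 1) (by omega)]
    exact this
  · intro x
    rw [hsm, ha]; rfl

theorem Hop_C {k : ℕ} (hk : k + 1 < n) : Hop n k hk + q • 1 = (q + q⁻¹) • 1 - Dop n k := by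
  rw [Dop_Hop hk, add_smul]; abel

theorem Csys : Sys (q + q⁻¹) (n - 1) (fun k => (q + q⁻¹) • 1 - Dop n k) := Dsys.dual

def stlLift (n : ℕ) : STL n →ₐ[K] Module.End K (V n) :=
  RingQuot.liftAlgHom K ⟨FreeAlgebra.lift K
    (fun i : Fin (n - 1) => (q + q⁻¹) • (1 : Module.End K (V n)) - Dop n i), by
    intro x y hxy
    have S := Csys (n := n)
    induction hxy with
    | sq i =>
      simp only [map_mul, map_smul, FreeAlgebra.lift_ι_apply]
      exact S.sq i i.isLt
    | comm i j h =>
      simp only [map_mul, FreeAlgebra.lift_ι_apply]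
      rcases h with h | h
      · exact S.comm i j h j.isLt
      · exact (S.comm j i h i.isLt).symm
    | braid i j h =>
      simp only [map_mul, map_sub, FreeAlgebra.lift_ι_apply]
      rw [h]
      exact S.braid i (by have := j.isLt; omega)
    | z1 a b c hb hc =>
      simp only [map_mul, map_sub, map_smul, map_one, map_zero, FreeAlgebra.lift_ι_apply]
      rw [hb, hc]
      exact S.z1 a (by have := c.isLt; omega)
    | z2 a b c hb hc =>
      simp only [map_mul, map_sub, map_smul, map_one, map_zero, FreeAlgebra.lift_ι_apply]
      rw [hb, hc]
      exact S.z2 a (by have := c.isLt; omega)⟩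

theorem stlLift_C (i : Fin (n - 1)) : stlLift n (Cgen n i) = (q + q⁻¹) • 1 - Dop n i := by
  rw [stlLift, Cgen, RingQuot.liftAlgHom_mkAlgHom_apply, FreeAlgebra.lift_ι_apply]

theorem stlSys : Sys (q + q⁻¹) (n - 1) (extz (Cgen n)) where
  sq k hk := by
    rw [extz_lt _ hk]
    have e := RingQuot.mkAlgHom_rel K (stlRel.sq (n := n) ⟨k, hk⟩)
    simp only [map_mul, map_sub, map_smul, map_one, map_zero] at e
    exact e
  comm i j hij hj := by
    rw [extz_lt _ hj, extz_lt _ (by omega)]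
    have e := RingQuot.mkAlgHom_rel K (stlRel.comm (n := n) ⟨i, by omega⟩ ⟨j, hj⟩ (Or.inl hij))
    simp only [map_mul, map_sub, map_smul, map_one, map_zero] at e
    exact e
  braid k hk := by
    rw [extz_lt _ hk, extz_lt _ (by omega)]
    have e := RingQuot.mkAlgHom_rel K (stlRel.braid (n := n) ⟨k, by omega⟩ ⟨k + 1, hk⟩ rfl)
    simp only [map_mul, map_sub, map_smul, map_one, map_zero] at e
    exact e
  z1 k hk := by
    rw [extz_lt _ hk, extz_lt (k := k + 1) _ (by omega), extz_lt (k := k) _ (by omega)]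
    have e := RingQuot.mkAlgHom_rel K
      (stlRel.z1 (n := n) ⟨k, by omega⟩ ⟨k + 1, by omega⟩ ⟨k + 2, hk⟩ rfl rfl)
    simp only [map_mul, map_sub, map_smul, map_one, map_zero] at e
    exact e
  z2 k hk := by
    rw [extz_lt _ hk, extz_lt (k := k + 1) _ (by omega), extz_lt (k := k) _ (by omega)]
    have e := RingQuot.mkAlgHom_rel K
      (stlRel.z2 (n := n) ⟨k, by omega⟩ ⟨k + 1, by omega⟩ ⟨k + 2, hk⟩ rfl rfl)
    simp only [map_mul, map_sub, map_smul, map_one, map_zero] at e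
    exact e

theorem stlLift_inj : Function.Injective (stlLift n) := by
  rw [injective_iff_map_eq_zero]
  refine inj_of (stlLift n) (fun k => (q + q⁻¹) • 1 - extz (Cgen n) k) stlSys.dual ?_ ?_
  · refine gen_top (RingQuot.mkAlgHom K (stlRel n)) (RingQuot.mkAlgHom_surjective K _) _
      fun i => ⟨q + q⁻¹, ?_⟩
    rw [extz_lt _ i.isLt, sub_sub_cancel]; rfl
  · intro k hk
    rw [map_sub, map_smul, map_one, extz_lt _ hk, stlLift_C, sub_sub_cancel]

theorem Dop_mem (i : ℕ) (hi : i + 1 < n) : Dop n i ∈ EndUq n := by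
  rw [EndUq, Subalgebra.mem_centralizer_iff]
  rintro X ((rfl | rfl) | ⟨c, d, rfl⟩)
  · exact (Dop_E hi).symm
  · exact (Dop_F hi).symm
  · exact (Dop_K c d).symm

theorem genD_le_range : genD K (n - 1) (Dop n) ≤ (stlLift n).range := by
  refine Algebra.adjoin_le ?_
  rintro a ⟨k, hk, rfl⟩
  refine ⟨(q + q⁻¹) • 1 - Cgen n ⟨k, hk⟩, ?_⟩
  change stlLift n _ = _
  rw [map_sub, map_smul, map_one, stlLift_C, sub_sub_cancel]

theorem stlLift_mem (x : STL n) : stlLift n x ∈ EndUq n := by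
  obtain ⟨b, rfl⟩ := RingQuot.mkAlgHom_surjective K (stlRel n) x
  induction b using FreeAlgebra.induction with
  | grade0 r => rw [AlgHom.commutes, AlgHom.commutes]; exact Subalgebra.algebraMap_mem _ r
  | grade1 i =>
    change stlLift n (Cgen n i) ∈ _
    rw [stlLift_C]
    exact Subalgebra.sub_mem _ (Subalgebra.smul_mem _ (Subalgebra.one_mem _) _)
      (Dop_mem _ (by have := i.isLt; omega))
  | mul a b ha hb => rw [map_mul, map_mul]; exact Subalgebra.mul_mem _ ha hb
  | add a b ha hb => rw [map_add, map_add]; exact Subalgebra.add_mem _ ha hb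

theorem EndUq_range (X : Module.End K (V n)) (hX : X ∈ EndUq n) : X ∈ (stlLift n).range := by
  rw [EndUq, Subalgebra.mem_centralizer_iff] at hX
  have hXE : Commute X (Eop one' n) := (hX _ (Or.inl (Or.inl rfl))).symm
  have hXF : Commute X (Fop one' n) := (hX _ (Or.inl (Or.inr rfl))).symm
  have hXK : Commute X (Kop one' n 0 1) := (hX _ (Or.inr ⟨0, 1, rfl⟩)).symm
  rcases n with _ | n
  · have : X = algebraMap K _ (X (eb 0) 0) := by
      refine LinearMap.ext fun f => funext fun γ => ?_
      have e : γ = 0 := Subsingleton.elim _ _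
      have ef : f = f 0 • eb 0 := by
        funext γ'
        have e' : γ' = 0 := Subsingleton.elim _ _
        subst e'
        simp [eb]
      subst e
      rw [Module.algebraMap_end_apply]
      nth_rewrite 1 [ef]
      rw [map_smul, Pi.smul_apply, Pi.smul_apply, smul_eq_mul, smul_eq_mul, mul_comm]
    rw [this]
    exact Subalgebra.algebraMap_mem _ _
  · refine genD_le_range ?_
    refine surj (m := n) (D := Dop (n + 1)) scal (Dsys (n := n + 1)) ?_ (vv (n + 1)) (fun r hr => vv_ne (n := n + 1) r hr)
      (fun r hr => vv_wt (n := n + 1) r hr) (Eop one' (n + 1)) (Fop one' (n + 1)) (Kop one' (n + 1) 0 1)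
      q _ q_inj EF_ne EF (fun r hr => vv_E (n := n + 1) r hr) (fun r _ => vv_K r)
      (fun k hk => Dop_E (by omega)) (fun k hk => Dop_F (by omega)) (fun k hk => Dop_K 0 1)
      X hXE hXF hXK
    rw [Module.finrank_fintype_fun_eq_card]
    simp [pow_succ']

theorem ltn (i : Fin (n - 1)) : (i : ℕ) + 1 < n := Nat.add_lt_of_lt_sub i.isLt

theorem part1 (n : ℕ) : ∃ e : STL n ≃ₐ[K] EndUq n,
      ∀ i : Fin (n - 1),
        (e (Cgen n i) : Module.End K (V n))
          = Hop n (i : ℕ) (ltn i) + q • 1 := by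
  refine ⟨AlgEquiv.ofBijective ((stlLift n).codRestrict (EndUq n) stlLift_mem) ⟨?_, ?_⟩, ?_⟩
  · exact (AlgHom.injective_codRestrict _ _ _).mpr stlLift_inj
  · rintro ⟨X, hX⟩
    obtain ⟨x, hx⟩ := EndUq_range X hX
    exact ⟨x, Subtype.ext hx⟩
  · intro i
    rw [Hop_C]
    exact stlLift_C i
end final
end STLaux

namespace STLaux
section hecke
variable {F A : Type*} [Field F] [Ring A] [Algebra F A]

theorem hecke_sq {p : F} (hp : p ≠ 0) {H : A} (h : H * H = (p⁻¹ - p) • H + 1) :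
    (H + p • 1) * (H + p • 1) = (p + p⁻¹) • (H + p • 1) := by
  have e : (p + p⁻¹) * p = p * p + 1 := by rw [add_mul, inv_mul_cancel₀ hp]
  simp only [mul_add, add_mul, h, smul_mul_assoc, mul_smul_comm, one_mul, mul_one, smul_add,
    smul_smul, e]
  module

theorem hecke_braid {p : F} (hp : p ≠ 0) {H H' : A} (h : H * H = (p⁻¹ - p) • H + 1)
    (h' : H' * H' = (p⁻¹ - p) • H' + 1) (hb : H * H' * H = H' * H * H') :
    (H + p • 1) * (H' + p • 1) * (H + p • 1) - (H + p • 1)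
      = (H' + p • 1) * (H + p • 1) * (H' + p • 1) - (H' + p • 1) := by
  have e : p * (p⁻¹ - p) = 1 - p * p := by rw [mul_sub, mul_inv_cancel₀ hp]
  rw [mul_assoc, mul_assoc] at hb
  simp only [mul_add, add_mul, h, h', hb, smul_mul_assoc, mul_smul_comm, one_mul, mul_one, smul_add,
    smul_smul, e, mul_assoc]
  module
end hecke

section final
variable {n : ℕ}

theorem H_quad (i : Fin (n - 1)) : Hgen n i * Hgen n i = (q⁻¹ - q) • Hgen n i + 1 := by
  have e := RingQuot.mkAlgHom_rel K (heckeRel.quad (n := n) i)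
  simp only [map_mul, map_add, map_smul, map_one] at e
  exact e

theorem H_comm (i j : Fin (n - 1)) (h : (i : ℕ) + 1 < j) : Commute (Hgen n i) (Hgen n j) := by
  have e := RingQuot.mkAlgHom_rel K (heckeRel.comm (n := n) i j (Or.inl h))
  simp only [map_mul] at e
  exact e

theorem H_braid (i j : Fin (n - 1)) (h : (j : ℕ) = (i : ℕ) + 1) :
    Hgen n i * Hgen n j * Hgen n i = Hgen n j * Hgen n i * Hgen n j := by
  have e := RingQuot.mkAlgHom_rel K (heckeRel.braid (n := n) i j h)
  simp only [map_mul] at e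
  exact e

theorem C_comm (i j : Fin (n - 1)) (h : (i : ℕ) + 1 < j) : Commute (CH n i) (CH n j) := by
  have hd : ∀ x : HeckeAlg n, Commute (q • (1 : HeckeAlg n)) x :=
    fun x => (Commute.one_left x).smul_left q
  exact ((H_comm i j h).add_right (hd _).symm).add_left ((hd _).add_right (hd _))

/-- the generators of the ideal -/
def gset (n : ℕ) : Set (HeckeAlg n) := {g | ∃ a b c : Fin (n - 1), (b : ℕ) = (a : ℕ) + 1 ∧ (c : ℕ) = (a : ℕ) + 2 ∧
            (g = CH n a * CH n c * CH n b
                  * ((q + q⁻¹) • 1 - CH n a) * ((q + q⁻¹) • 1 - CH n c) ∨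
             g = ((q + q⁻¹) • 1 - CH n a) * ((q + q⁻¹) • 1 - CH n c)
                  * CH n b * CH n a * CH n c)}

def JJ (n : ℕ) : Ideal (HeckeAlg n) :=
  Ideal.span {y : HeckeAlg n | ∃ u v g : HeckeAlg n, g ∈ gset n ∧ y = u * g * v}

theorem JJ_two : (JJ n).IsTwoSided := ⟨fun {a} b ha => by
  refine Submodule.span_induction (p := fun x _ => x * b ∈ JJ n) ?_ ?_ ?_ ?_ ha
  · rintro x ⟨u, v, g, hg, rfl⟩
    exact Ideal.subset_span ⟨u, v * b, g, hg, by simp only [mul_assoc]⟩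
  · rw [zero_mul]; exact Ideal.zero_mem _
  · intro x y _ _ hx hy
    rw [add_mul]; exact Ideal.add_mem _ hx hy
  · intro c x _ hx
    rw [smul_eq_mul, mul_assoc]; exact Ideal.mul_mem_left _ _ hx⟩

theorem gset_mem {g : HeckeAlg n} (h : g ∈ gset n) : g ∈ JJ n :=
  Ideal.subset_span ⟨1, 1, g, h, by simp⟩

theorem rho_C (ρ : HeckeAlg n →ₐ[K] Module.End K (V n))
    (hρ : ∀ i : Fin (n - 1), ρ (Hgen n i) = Hop n (i : ℕ) (ltn i))
    (i : Fin (n - 1)) : ρ (CH n i) = (q + q⁻¹) • 1 - Dop n i := by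
  rw [CH, map_add, map_smul, map_one, hρ, Hop_C]

theorem rho_J (ρ : HeckeAlg n →ₐ[K] Module.End K (V n))
    (hρ : ∀ i : Fin (n - 1), ρ (Hgen n i) = Hop n (i : ℕ) (ltn i)) :
    ∀ x ∈ JJ n, ρ x = 0 := by
  intro x hx
  have S := Csys (n := n)
  have hg : ∀ g ∈ gset n, ρ g = 0 := by
    rintro g ⟨a, b, c, hb, hc, rfl | rfl⟩
    · simp only [map_mul, map_sub, map_smul, map_one, rho_C ρ hρ]
      rw [hb, hc]
      exact S.z1 a (by have := c.isLt; omega)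
    · simp only [map_mul, map_sub, map_smul, map_one, rho_C ρ hρ]
      rw [hb, hc]
      exact S.z2 a (by have := c.isLt; omega)
  refine Submodule.span_induction (p := fun x _ => ρ x = 0) ?_ ?_ ?_ ?_ hx
  · rintro x ⟨u, v, g, h, rfl⟩
    rw [map_mul, map_mul, hg g h, mul_zero, zero_mul]
  · exact map_zero ρ
  · intro x y _ _ hx hy
    rw [map_add, hx, hy, add_zero]
  · intro c x _ hx
    rw [smul_eq_mul, map_mul, hx, mul_zero]

theorem part2 (ρ : HeckeAlg n →ₐ[K] Module.End K (V n))
    (hρ : ∀ i : Fin (n - 1), ρ (Hgen n i) = Hop n (i : ℕ) (ltn i)) :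
    RingHom.ker ρ.toRingHom = JJ n := by
  refine le_antisymm ?_ (fun x hx => rho_J ρ hρ x hx)
  have two : (JJ n).IsTwoSided := JJ_two
  intro x hx
  have hx' : ρ x = 0 := hx
  rw [← Ideal.Quotient.eq_zero_iff_mem]
  let π : HeckeAlg n →ₐ[K] (HeckeAlg n ⧸ JJ n) := Ideal.Quotient.mkₐ K (JJ n)
  have hπ : Function.Surjective π := Ideal.Quotient.mkₐ_surjective K (JJ n)
  have hπ0 : ∀ g ∈ gset n, π g = 0 := fun g hg =>
    Ideal.Quotient.eq_zero_iff_mem.mpr (gset_mem hg)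
  let σ : (HeckeAlg n ⧸ JJ n) →ₐ[K] Module.End K (V n) :=
    Ideal.Quotient.liftₐ (JJ n) ρ (rho_J ρ hρ)
  have hσ : ∀ y, σ (π y) = ρ y := fun y => rfl
  have S : Sys (q + q⁻¹) (n - 1) (extz (fun i => π (CH n i))) := by
    constructor
    · intro k hk
      rw [extz_lt _ hk, ← map_mul, ← map_smul]
      exact congrArg π (hecke_sq q_ne (H_quad _))
    · intro i j hij hj
      rw [extz_lt _ hj, extz_lt _ (by omega)]
      exact (C_comm ⟨i, by omega⟩ ⟨j, hj⟩ hij).map π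
    · intro k hk
      rw [extz_lt _ hk, extz_lt (k := k) _ (by omega)]
      simp only [← map_mul, ← map_sub]
      exact congrArg π (hecke_braid q_ne (H_quad _) (H_quad _) (H_braid _ _ rfl))
    · intro k hk
      rw [extz_lt _ hk, extz_lt (k := k + 1) _ (by omega), extz_lt (k := k) _ (by omega)]
      have := hπ0 _ ⟨⟨k, by omega⟩, ⟨k + 1, by omega⟩, ⟨k + 2, hk⟩, rfl, rfl, Or.inl rfl⟩
      simpa only [map_mul, map_sub, map_smul, map_one] using this
    · intro k hk
      rw [extz_lt _ hk, extz_lt (k := k + 1) _ (by omega), extz_lt (k := k) _ (by omega)]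
      have := hπ0 _ ⟨⟨k, by omega⟩, ⟨k + 1, by omega⟩, ⟨k + 2, hk⟩, rfl, rfl, Or.inr rfl⟩
      simpa only [map_mul, map_sub, map_smul, map_one] using this
  refine inj_of σ (fun k => (q + q⁻¹) • 1 - extz (fun i => π (CH n i)) k) S.dual ?_ ?_ (π x) hx'
  · refine gen_top (π.comp (RingQuot.mkAlgHom K (heckeRel n)))
      (hπ.comp (RingQuot.mkAlgHom_surjective K _)) _ fun i => ⟨q⁻¹, ?_⟩
    rw [extz_lt _ i.isLt, CH, map_add, map_smul, map_one]
    change π (Hgen n i) = _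
    rw [add_smul]
    abel
  · intro k hk
    rw [map_sub, map_smul, map_one, extz_lt _ hk, hσ, rho_C ρ hρ, sub_sub_cancel]
end final
end STLaux

theorem statement8 (n : ℕ) :
    -- the assignment C_i ↦ Ȟ_i + q·id defines an isomorphism STL_n ≅ End_{U_q}(V^{⊗n})
    (∃ e : STL n ≃ₐ[K] EndUq n,
      ∀ i : Fin (n - 1),
        (e (Cgen n i) : Module.End K (V n))
          = Hop n (i : ℕ) (by have := i.isLt; omega) + q • 1) ∧
    -- the kernel of H_n → End_{U_q}(V^{⊗n}), H_i ↦ Ȟ_i, is the two-sided ideal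
    -- generated by the listed elements
    (∀ ρ : HeckeAlg n →ₐ[K] Module.End K (V n),
      (∀ i : Fin (n - 1),
        ρ (Hgen n i) = Hop n (i : ℕ) (by have := i.isLt; omega)) →
      RingHom.ker ρ.toRingHom =
        Ideal.span {y : HeckeAlg n | ∃ u v g : HeckeAlg n,
          (∃ a b c : Fin (n - 1), (b : ℕ) = (a : ℕ) + 1 ∧ (c : ℕ) = (a : ℕ) + 2 ∧
            (g = CH n a * CH n c * CH n b
                  * ((q + q⁻¹) • 1 - CH n a) * ((q + q⁻¹) • 1 - CH n c) ∨
             g = ((q + q⁻¹) • 1 - CH n a) * ((q + q⁻¹) • 1 - CH n c)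
                  * CH n b * CH n a * CH n c)) ∧
          y = u * g * v}) := by
  exact ⟨STLaux.part1 n, fun ρ hρ => STLaux.part2 ρ hρ⟩
end
end

section
/- Let 0 ≤ k ≤ n, let W_q = <s_1,...,s_{k-1}> and W_p = <s_{k+1},...,s_{n-1}> as parabolic subgroups of S_n, and let (V^{⊗n})_k be the ℂ(q)-span of the standard basis vectors v_η (η ∈ {0,1}^n) with exactly k entries of η equal to 0. Then the map Ψ : M^p_q → (V^{⊗n})_k sending N_w to v_{η_min·w}, where η_min = (0,...,0,1,...,1) (k zeros followed by n-k ones) and S_n acts on {0,1}^n from the right by permuting entries, is an isomorphism of right H_n-modules, where H_n acts on V^{⊗n} by H_i ↦ Ȟ_i. -/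
open scoped Classical

set_option maxHeartbeats 1000000
set_option synthInstance.maxHeartbeats 200000

noncomputable section

def s (n : ℕ) (i : Fin (n - 1)) : Equiv.Perm (Fin n) :=
  Equiv.swap ⟨(i : ℕ), by have := i.isLt; omega⟩ ⟨(i : ℕ) + 1, by have := i.isLt; omega⟩

def wordProd (n : ℕ) (l : List (Fin (n - 1))) : Equiv.Perm (Fin n) :=
  (l.map (s n)).prod

def len (n : ℕ) (w : Equiv.Perm (Fin n)) : ℕ :=
  sInf {k | ∃ l : List (Fin (n - 1)), l.length = k ∧ wordProd n l = w}

def bruhatLE (n : ℕ) (u w : Equiv.Perm (Fin n)) : Prop :=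
  ∃ l : List (Fin (n - 1)), l.length = len n w ∧ wordProd n l = w ∧
    ∃ t : List (Fin (n - 1)), t.Sublist l ∧ wordProd n t = u

def bruhatLT (n : ℕ) (u w : Equiv.Perm (Fin n)) : Prop :=
  bruhatLE n u w ∧ u ≠ w

/-- The parabolic subgroup of `S_n` generated by the simple transpositions indexed by `P`. -/
def parab (n : ℕ) (P : Finset (Fin (n - 1))) : Subgroup (Equiv.Perm (Fin n)) :=
  Subgroup.closure {σ | ∃ i ∈ P, σ = s n i}

/-- `w` is a shortest coset representative for `W_P \ S_n`. -/
def IsShort (n : ℕ) (P : Finset (Fin (n - 1))) (w : Equiv.Perm (Fin n)) : Prop :=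
  ∀ x ∈ parab n P, len n w ≤ len n (x * w)

/-- The indices of the simple reflections generating `W_q = ⟨s_1,…,s_{k-1}⟩` (0-based). -/
def Qset (n k : ℕ) : Finset (Fin (n - 1)) :=
  Finset.univ.filter (fun i => (i : ℕ) + 1 < k)

/-- The indices of the simple reflections generating `W_p = ⟨s_{k+1},…,s_{n-1}⟩` (0-based). -/
def Pset (n k : ℕ) : Finset (Fin (n - 1)) :=
  Finset.univ.filter (fun i => k ≤ (i : ℕ))

/-- The minimal `{0,1}`-sequence `η_min = (0,…,0,1,…,1)` with `k` zeros. -/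
def etaMin (n k : ℕ) : Fin n → Fin 2 := fun i => if (i : ℕ) < k then 0 else 1

/-- The weight space `(V^{⊗n})_k`: the span of the standard basis vectors `v_η` with
exactly `k` entries of `η` equal to `0`. -/
noncomputable def weightSpace (n k : ℕ) : Submodule K (V n) :=
  Submodule.span K (eb '' {η : Fin n → Fin 2 | (Finset.univ.filter (fun i => η i = 0)).card = k})

def invs (n : ℕ) (w : Equiv.Perm (Fin n)) : Finset (Fin n × Fin n) :=
  Finset.univ.filter (fun p => p.1 < p.2 ∧ w p.2 < w p.1)

lemma mem_invs (n : ℕ) (w : Equiv.Perm (Fin n)) (a b : Fin n) :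
    (a, b) ∈ invs n w ↔ a < b ∧ w b < w a := by
  unfold invs
  rw [Finset.mem_filter]
  exact ⟨fun h => h.2, fun h => ⟨Finset.mem_univ _, h⟩⟩

def lo {n : ℕ} (i : Fin (n - 1)) : Fin n := ⟨(i : ℕ), by have := i.isLt; omega⟩
def hi {n : ℕ} (i : Fin (n - 1)) : Fin n := ⟨(i : ℕ) + 1, by have := i.isLt; omega⟩

lemma s_def {n : ℕ} (i : Fin (n - 1)) : s n i = Equiv.swap (lo i) (hi i) := rfl
lemma lo_lt_hi {n : ℕ} (i : Fin (n - 1)) : lo i < hi i := by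
  simp [lo, hi, Fin.lt_def]
@[simp] lemma s_lo {n : ℕ} (i : Fin (n - 1)) : s n i (lo i) = hi i := by simp [s_def]
@[simp] lemma s_hi {n : ℕ} (i : Fin (n - 1)) : s n i (hi i) = lo i := by simp [s_def]
@[simp] lemma s_s {n : ℕ} (i : Fin (n - 1)) (a : Fin n) : s n i (s n i a) = a := by simp [s_def]
@[simp] lemma s_mul_s {n : ℕ} (i : Fin (n - 1)) : s n i * s n i = 1 := by simp [s_def]
@[simp] lemma s_inv {n : ℕ} (i : Fin (n - 1)) : (s n i)⁻¹ = s n i := by simp [s_def]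

lemma s_lt {n : ℕ} (i : Fin (n - 1)) (a b : Fin n) (h : ¬ (a = lo i ∧ b = hi i)) (hab : a < b) :
    s n i a < s n i b := by
  have h1 := lo_lt_hi i
  rw [s_def, Equiv.swap_apply_def, Equiv.swap_apply_def]
  simp only [lo, hi, Fin.lt_def, Fin.ext_iff] at *
  split_ifs <;> simp_all <;> omega

lemma inv_up (n : ℕ) (w : Equiv.Perm (Fin n)) (i : Fin (n - 1)) (h : w (lo i) < w (hi i)) :
    (invs n (w * s n i)).card = (invs n w).card + 1 := by
  have hl := lo_lt_hi i
  have : invs n (w * s n i) = insert (lo i, hi i)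
      ((invs n w).map (Equiv.prodCongr (s n i) (s n i)).toEmbedding) := by
    ext ⟨a, b⟩
    simp only [mem_invs, Finset.mem_insert,
      Finset.mem_map, Prod.exists, Equiv.coe_toEmbedding, Equiv.prodCongr_apply, Prod.map,
      Prod.mk.injEq, Equiv.Perm.mul_apply]
    constructor
    · rintro ⟨h1, h2⟩
      by_cases hc : a = lo i ∧ b = hi i
      · exact Or.inl hc
      · exact Or.inr ⟨s n i a, s n i b, ⟨s_lt i a b hc h1, h2⟩, by simp, by simp⟩
    · rintro (⟨rfl, rfl⟩ | ⟨a, b, ⟨h1, h2⟩, rfl, rfl⟩)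
      · exact ⟨hl, by simpa using h⟩
      · refine ⟨s_lt i a b ?_ h1, by simpa using h2⟩
        rintro ⟨rfl, rfl⟩
        exact absurd h2 (not_lt.2 h.le)
  rw [this, Finset.card_insert_of_notMem, Finset.card_map]
  simp only [mem_invs,
      Finset.mem_map, Prod.exists, Equiv.coe_toEmbedding, Equiv.prodCongr_apply, Prod.map,
      Prod.mk.injEq, not_exists, not_and]
  rintro a b ⟨h1, h2⟩ h3 h4
  have h3' : a = hi i := by rw [← s_s i a, h3, s_lo]
  have h4' : b = lo i := by rw [← s_s i b, h4, s_hi]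
  subst h3' h4'
  exact absurd h1 (not_lt.2 hl.le)

lemma inv_down (n : ℕ) (w : Equiv.Perm (Fin n)) (i : Fin (n - 1)) (h : w (hi i) < w (lo i)) :
    (invs n w).card = (invs n (w * s n i)).card + 1 := by
  have := inv_up n (w * s n i) i (by simpa using h)
  rwa [mul_assoc, s_mul_s, mul_one] at this

lemma w_ne {n : ℕ} (w : Equiv.Perm (Fin n)) (i : Fin (n - 1)) : w (lo i) ≠ w (hi i) :=
  fun h => (lo_lt_hi i).ne (w.injective h)

lemma strictMono_perm {n : ℕ} (w : Equiv.Perm (Fin n)) (h : StrictMono w) : w = 1 := by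
  have := (StrictMono.range_inj (f := w) (g := (id : Fin n → Fin n)) h strictMono_id).1
    (by simp [w.surjective.range_eq])
  ext x; simp [this]

lemma exists_descent (n : ℕ) (w : Equiv.Perm (Fin n)) (h : w ≠ 1) :
    ∃ i : Fin (n - 1), w (hi i) < w (lo i) := by
  by_contra! hc
  apply h
  apply strictMono_perm
  cases n with
  | zero => intro a; exact a.elim0
  | succ m =>
    rw [Fin.strictMono_iff_lt_succ]
    intro i
    exact lt_of_le_of_ne (hc i) (w_ne w i)

lemma invs_one (n : ℕ) : (invs n 1).card = 0 := by
  simp only [invs, Finset.card_eq_zero, Finset.filter_eq_empty_iff]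
  rintro ⟨a, b⟩ _ ⟨h1, h2⟩
  exact absurd h1 (not_lt.2 (le_of_lt h2))

lemma inv_word (n : ℕ) (l : List (Fin (n - 1))) : (invs n (wordProd n l)).card ≤ l.length := by
  induction l using List.reverseRecOn with
  | nil => simp [wordProd, invs_one]
  | append_singleton l i ih =>
    have e : wordProd n (l ++ [i]) = wordProd n l * s n i := by simp [wordProd]
    rw [e, List.length_append, List.length_singleton]
    rcases lt_or_gt_of_ne (w_ne (wordProd n l) i) with h | h
    · rw [inv_up n _ i h]; omega
    · have := inv_down n _ i h; omega

lemma exists_word (n m : ℕ) : ∀ w : Equiv.Perm (Fin n), (invs n w).card = m →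
    ∃ l : List (Fin (n - 1)), l.length = m ∧ wordProd n l = w := by
  induction m with
  | zero =>
    intro w hw
    refine ⟨[], rfl, ?_⟩
    by_contra hne
    obtain ⟨i, hi⟩ := exists_descent n w (fun h => hne (by simp [wordProd, h]))
    have := inv_down n w i hi
    omega
  | succ m ih =>
    intro w hw
    have hne : w ≠ 1 := by rintro rfl; rw [invs_one] at hw; omega
    obtain ⟨i, hi⟩ := exists_descent n w hne
    have := inv_down n w i hi
    obtain ⟨l, hl, hw'⟩ := ih (w * s n i) (by omega)
    refine ⟨l ++ [i], by simp [hl], ?_⟩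
    have e : wordProd n (l ++ [i]) = wordProd n l * s n i := by simp [wordProd]
    rw [e, hw', mul_assoc, s_mul_s, mul_one]

lemma len_eq (n : ℕ) (w : Equiv.Perm (Fin n)) : len n w = (invs n w).card := by
  apply le_antisymm
  · exact Nat.sInf_le (exists_word n _ w rfl)
  · obtain ⟨l, hl, hw⟩ := Nat.sInf_mem (s := {k | ∃ l : List (Fin (n - 1)), l.length = k ∧ wordProd n l = w})
      ⟨_, exists_word n _ w rfl⟩
    change _ ≤ sInf _
    rw [← hl, ← hw]
    exact inv_word n l

lemma len_up (n : ℕ) (w : Equiv.Perm (Fin n)) (i : Fin (n - 1)) (h : w (lo i) < w (hi i)) :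
    len n (w * s n i) = len n w + 1 := by
  rw [len_eq, len_eq, inv_up n w i h]

lemma len_down (n : ℕ) (w : Equiv.Perm (Fin n)) (i : Fin (n - 1)) (h : w (hi i) < w (lo i)) :
    len n w = len n (w * s n i) + 1 := by
  rw [len_eq, len_eq, inv_down n w i h]

lemma len_inv (n : ℕ) (w : Equiv.Perm (Fin n)) : len n w⁻¹ = len n w := by
  rw [len_eq, len_eq]
  refine Finset.card_bij' (fun p _ => (w⁻¹ p.2, w⁻¹ p.1)) (fun p _ => (w p.2, w p.1)) ?_ ?_ ?_ ?_
  all_goals simp +contextual [invs]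

lemma len_left_le (n : ℕ) (w : Equiv.Perm (Fin n)) (j : Fin (n - 1)) :
    len n (s n j * w) ≤ len n w + 1 := by
  rw [← len_inv, ← len_inv n w, mul_inv_rev, s_inv]
  rcases lt_or_gt_of_ne (w_ne w⁻¹ j) with h | h
  · rw [len_up n _ j h]
  · have := len_down n _ j h; omega

lemma H_left (n : ℕ) {A : Type} [Ring A] 
    (H : Equiv.Perm (Fin n) → A)
    (hone : H 1 = 1)
    (hmul : ∀ (w : Equiv.Perm (Fin n)) (i : Fin (n - 1)),
      len n (w * s n i) = len n w + 1 → H (w * s n i) = H w * H (s n i))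
    (j : Fin (n - 1)) (m : ℕ) : ∀ w, len n w = m → len n (s n j * w) = len n w + 1 →
      H (s n j * w) = H (s n j) * H w := by
  induction m with
  | zero =>
    intro w hw _
    have : w = 1 := by
      by_contra hne
      obtain ⟨i, hi⟩ := exists_descent n w hne
      have := len_down n w i hi
      omega
    simp [this, hone]
  | succ m ih =>
    intro w hw h
    have hne : w ≠ 1 := by rintro rfl; rw [len_eq, invs_one] at hw; omega
    obtain ⟨i, hi⟩ := exists_descent n w hne
    have h1 := len_down n w i hi
    obtain ⟨u, rfl⟩ : ∃ u, w = u * s n i := ⟨w * s n i, by rw [mul_assoc, s_mul_s, mul_one]⟩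
    rw [mul_assoc, s_mul_s, mul_one] at h1
    have h2 := len_left_le n u j
    have h3 : len n (s n j * u * s n i) ≤ len n (s n j * u) + 1 := by
      rcases lt_or_gt_of_ne (w_ne (s n j * u) i) with h | h
      · rw [len_up n _ i h]
      · have := len_down n _ i h; omega
    rw [← mul_assoc] at h ⊢
    rw [hmul _ i (by omega), hmul u i h1, ih u (by omega) (by omega), mul_assoc]

lemma parab_eta (n k : ℕ) (x : Equiv.Perm (Fin n)) (hx : x ∈ parab n (Pset n k ∪ Qset n k)) :
    ∀ a, etaMin n k (x a) = etaMin n k a := by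
  induction hx using Subgroup.closure_induction with
  | mem x hx =>
    obtain ⟨i, hi, rfl⟩ := hx
    intro a
    simp only [Finset.mem_union, Pset, Qset, Finset.mem_filter, Finset.mem_univ, true_and] at hi
    rw [s_def, Equiv.swap_apply_def]
    split_ifs with h1 h2 <;> simp only [etaMin, lo, _root_.hi, *] <;> congr 1 <;> apply propext <;> omega
  | one => simp
  | mul x y _ _ hx hy => intro a; simp [hx, hy]
  | inv x _ hx => intro a; rw [← hx (x⁻¹ a)]; simp

lemma s_mem (n k : ℕ) (j : Fin (n - 1)) (h : etaMin n k (lo j) = etaMin n k (hi j)) :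
    (j ∈ Pset n k ∧ etaMin n k (lo j) = 1) ∨ (j ∈ Qset n k ∧ etaMin n k (lo j) = 0) := by
  simp only [Pset, Qset, Finset.mem_filter, Finset.mem_univ, true_and, etaMin, lo, hi] at *
  by_cases h1 : (j : ℕ) < k
  · by_cases h2 : (j : ℕ) + 1 < k
    · right; exact ⟨h2, if_pos h1⟩
    · exact absurd ((if_pos h1).symm.trans (h.trans (if_neg h2))) (by decide)
  · left; exact ⟨not_lt.1 h1, if_neg h1⟩

lemma eta_mono (n k : ℕ) (a b : Fin n) (h : a ≤ b) : etaMin n k a ≤ etaMin n k b := by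
  simp only [etaMin, Fin.le_def] at *
  split_ifs <;> first | omega | decide

lemma lt_of_eta (n k : ℕ) (a b : Fin n) (h : etaMin n k a < etaMin n k b) : a < b := by
  by_contra hc
  exact absurd h (not_lt.2 (eta_mono n k b a (not_lt.1 hc)))

lemma short_iff (n k : ℕ) (w : Equiv.Perm (Fin n)) : IsShort n (Pset n k ∪ Qset n k) w ↔
    ∀ a b, a < b → etaMin n k (w a) = etaMin n k (w b) → w a < w b := by
  constructor
  · intro h
    have hadj : ∀ j : Fin (n - 1), etaMin n k (lo j) = etaMin n k (hi j) →
        w⁻¹ (lo j) < w⁻¹ (hi j) := by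
      intro j hj
      by_contra hc
      have h1 := len_down n w⁻¹ j (lt_of_le_of_ne (not_lt.1 hc) (w_ne w⁻¹ j).symm)
      have h2 := h (s n j) (Subgroup.subset_closure ⟨j, by
        rcases s_mem n k j hj with h | h <;> simp [h.1], rfl⟩)
      rw [← len_inv n w, ← len_inv n (s n j * w), mul_inv_rev, s_inv] at h2
      omega
    have key : ∀ d : ℕ, ∀ a b : Fin n, (b : ℕ) = a + d + 1 → etaMin n k a = etaMin n k b →
        w⁻¹ a < w⁻¹ b := by
      intro d
      induction d with
      | zero =>
        intro a b hab he
        have := b.isLt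
        have e1 : a = lo ⟨a, by omega⟩ := rfl
        have e2 : b = hi (n := n) ⟨a, by omega⟩ := by ext; simp [hi, hab]
        rw [e2] at he ⊢
        exact hadj ⟨a, by omega⟩ he
      | succ d ih =>
        intro a b hab he
        have hb := b.isLt
        let c : Fin n := ⟨a + d + 1, by omega⟩
        have e1 : c = lo (n := n) ⟨a + d + 1, by omega⟩ := rfl
        have e2 : b = hi (n := n) ⟨a + d + 1, by omega⟩ := by ext; simp [hi, hab]; omega
        have hac : etaMin n k a ≤ etaMin n k c :=
          eta_mono n k _ _ (by rw [Fin.le_def]; simp only [c]; omega)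
        have hcb : etaMin n k c ≤ etaMin n k b :=
          eta_mono n k _ _ (by rw [Fin.le_def]; simp only [c]; omega)
        have hac' : etaMin n k a = etaMin n k c := le_antisymm hac (he ▸ hcb)
        refine (ih a c rfl hac').trans ?_
        have hcb' : etaMin n k c = etaMin n k b := hac' ▸ he
        rw [e2] at hcb' ⊢
        exact hadj ⟨a + d + 1, by omega⟩ hcb'
    intro a b hab he
    by_contra hc
    have hlt : w b < w a := lt_of_le_of_ne (not_lt.1 hc) (fun h => hab.ne' (w.injective h))
    have := key (w a - w b - 1) (w b) (w a) (by rw [Fin.lt_def] at hlt; omega) he.symm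
    simp at this
    exact absurd hab (not_lt.2 this.le)
  · intro h x hx
    rw [len_eq, len_eq]
    apply Finset.card_le_card
    rintro ⟨a, b⟩
    simp only [mem_invs, Equiv.Perm.mul_apply]
    rintro ⟨h1, h2⟩
    refine ⟨h1, lt_of_eta n k _ _ ?_⟩
    rw [parab_eta n k x hx, parab_eta n k x hx]
    refine lt_of_le_of_ne (eta_mono n k _ _ h2.le) fun he => ?_
    exact absurd h2 (not_lt.2 (h a b h1 he.symm).le)

lemma short_inj (n k : ℕ) (w w' : Equiv.Perm (Fin n)) (hw : IsShort n (Pset n k ∪ Qset n k) w)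
    (hw' : IsShort n (Pset n k ∪ Qset n k) w')
    (h : ∀ i, etaMin n k (w i) = etaMin n k (w' i)) : w = w' := by
  rw [short_iff] at hw hw'
  have : w' * w⁻¹ = 1 := by
    apply strictMono_perm
    intro a b hab
    obtain ⟨a, rfl⟩ := w.surjective a
    obtain ⟨b, rfl⟩ := w.surjective b
    simp only [Equiv.Perm.mul_apply, show ∀ x, w⁻¹ (w x) = x from fun x => by simp]
    by_cases he : etaMin n k (w a) = etaMin n k (w b)
    · apply hw' a b _ (by rw [← h, ← h, he])
      by_contra hc
      have hba : b < a := lt_of_le_of_ne (not_lt.1 hc) (by rintro rfl; exact lt_irrefl _ hab)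
      exact absurd hab (not_lt.2 (hw b a hba he.symm).le)
    · apply lt_of_eta n k
      rw [← h, ← h]
      exact lt_of_le_of_ne (eta_mono n k _ _ hab.le) he
  exact (mul_inv_eq_one.1 this).symm

lemma eta_card (n k : ℕ) (hk : k ≤ n) :
    (Finset.univ.filter (fun i => etaMin n k i = 0)).card = k := by
  have : (Finset.univ.filter (fun i => etaMin n k i = 0)) =
      (Finset.univ.filter (fun i : Fin n => (i : ℕ) < k)) := by
    ext i; simp [etaMin]
  rw [this, Fin.card_filter_val_lt]; omega

lemma exists_short (n k : ℕ) (hk : k ≤ n) (η : Fin n → Fin 2)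
    (hη : (Finset.univ.filter (fun i => η i = 0)).card = k) :
    ∃ w, IsShort n (Pset n k ∪ Qset n k) w ∧ (fun i => etaMin n k (w i)) = η := by
  have hc : Fintype.card {i // η i = 0} = Fintype.card {i // etaMin n k i = 0} := by
    rw [Fintype.card_subtype, Fintype.card_subtype, hη, eta_card n k hk]
  let e : {i // η i = 0} ≃ {i // etaMin n k i = 0} := Fintype.equivOfCardEq hc
  have h01 : ∀ a b : Fin 2, (a = 0 ↔ b = 0) → a = b := by decide
  have hw0 : ∃ w : Equiv.Perm (Fin n), ∀ i, etaMin n k (w i) = η i := by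
    refine ⟨e.extendSubtype, fun i => h01 _ _ ?_⟩
    constructor
    · intro h
      by_contra hc
      exact e.extendSubtype_not_mem i hc h
    · intro h
      exact e.extendSubtype_mem i h
  obtain ⟨w, hw, hmin⟩ := Set.exists_min_image
    {w : Equiv.Perm (Fin n) | ∀ i, etaMin n k (w i) = η i} (len n) (Set.toFinite _) hw0
  refine ⟨w, fun x hx => hmin _ fun i => ?_, funext hw⟩
  rw [Equiv.Perm.mul_apply, parab_eta n k x hx]
  exact hw i

lemma hop_00 {n : ℕ} (η : Fin n → Fin 2) (i : Fin (n - 1)) (p) (h0 : η (lo i) = 0)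
    (h1 : η (hi i) = 0) : Hop n i p (eb η) = q⁻¹ • eb η := by
  funext γ
  have hs : (fun k => γ (s n i k)) = η → γ = η := by
    rintro rfl
    simp only [s_lo, s_hi] at h0 h1
    funext x
    rw [s_def, Equiv.swap_apply_def]; split_ifs with h h'
    · rw [h, h0, h1]
    · rw [h', h0, h1]
    · rfl
  change (if γ (lo i) = 0 ∧ γ (hi i) = 0 then q⁻¹ * eb η γ
    else if γ (lo i) = 1 ∧ γ (hi i) = 1 then (-q) * eb η γ
    else if γ (lo i) = 0 ∧ γ (hi i) = 1 then eb η (fun k => γ (s n i k))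
    else (q⁻¹ - q) * eb η γ + eb η (fun k => γ (s n i k))) = q⁻¹ * eb η γ
  by_cases hγ : γ = η
  · subst hγ; simp [h0, h1]
  · have : ¬ (fun k => γ (s n i k)) = η := fun h => hγ (hs h)
    simp [eb, hγ, this]

lemma hop_11 {n : ℕ} (η : Fin n → Fin 2) (i : Fin (n - 1)) (p) (h0 : η (lo i) = 1)
    (h1 : η (hi i) = 1) : Hop n i p (eb η) = (-q) • eb η := by
  funext γ
  have hs : (fun k => γ (s n i k)) = η → γ = η := by
    rintro rfl
    simp only [s_lo, s_hi] at h0 h1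
    funext x
    rw [s_def, Equiv.swap_apply_def]; split_ifs with h h'
    · rw [h, h0, h1]
    · rw [h', h0, h1]
    · rfl
  change (if γ (lo i) = 0 ∧ γ (hi i) = 0 then q⁻¹ * eb η γ
    else if γ (lo i) = 1 ∧ γ (hi i) = 1 then (-q) * eb η γ
    else if γ (lo i) = 0 ∧ γ (hi i) = 1 then eb η (fun k => γ (s n i k))
    else (q⁻¹ - q) * eb η γ + eb η (fun k => γ (s n i k))) = (-q) * eb η γ
  by_cases hγ : γ = η
  · subst hγ; simp [h0, h1]
  · have : ¬ (fun k => γ (s n i k)) = η := fun h => hγ (hs h)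
    simp [eb, hγ, this]

lemma comp_s_iff {n : ℕ} (γ η : Fin n → Fin 2) (i : Fin (n - 1)) :
    (fun k => γ (s n i k)) = η ↔ γ = fun k => η (s n i k) := by
  constructor
  · rintro rfl; simp
  · rintro rfl; simp

lemma hop_01 {n : ℕ} (η : Fin n → Fin 2) (i : Fin (n - 1)) (p) (h0 : η (lo i) = 0)
    (h1 : η (hi i) = 1) : Hop n i p (eb η) = eb (fun k => η (s n i k)) := by
  funext γ
  change (if γ (lo i) = 0 ∧ γ (hi i) = 0 then q⁻¹ * eb η γ
    else if γ (lo i) = 1 ∧ γ (hi i) = 1 then (-q) * eb η γ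
    else if γ (lo i) = 0 ∧ γ (hi i) = 1 then eb η (fun k => γ (s n i k))
    else (q⁻¹ - q) * eb η γ + eb η (fun k => γ (s n i k))) = _
  simp only [eb, comp_s_iff]
  by_cases hγ : γ = η
  · subst hγ
    have : ¬ γ = fun k => γ (s n i k) := fun h => by
      have := congrFun h (lo i); simp [h0, h1] at this
    simp [h0, h1, this]
  · by_cases h2 : γ = fun k => η (s n i k)
    · subst h2; simp [h0, h1, hγ]
    · simp [hγ, h2]

lemma hop_10 {n : ℕ} (η : Fin n → Fin 2) (i : Fin (n - 1)) (p) (h0 : η (lo i) = 1)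
    (h1 : η (hi i) = 0) :
    Hop n i p (eb η) = (q⁻¹ - q) • eb η + eb (fun k => η (s n i k)) := by
  funext γ
  change (if γ (lo i) = 0 ∧ γ (hi i) = 0 then q⁻¹ * eb η γ
    else if γ (lo i) = 1 ∧ γ (hi i) = 1 then (-q) * eb η γ
    else if γ (lo i) = 0 ∧ γ (hi i) = 1 then eb η (fun k => γ (s n i k))
    else (q⁻¹ - q) * eb η γ + eb η (fun k => γ (s n i k))) =
      (q⁻¹ - q) * eb η γ + eb (fun k => η (s n i k)) γ
  simp only [eb, comp_s_iff]
  by_cases hγ : γ = η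
  · subst hγ
    simp [h0, h1]
  · by_cases h2 : γ = fun k => η (s n i k)
    · subst h2; simp [h0, h1, hγ]
    · simp [hγ, h2]

lemma eb_li (n : ℕ) : LinearIndependent K (eb : (Fin n → Fin 2) → V n) := by
  have : (eb : (Fin n → Fin 2) → V n) = Pi.basisFun K (Fin n → Fin 2) := by
    funext η γ
    simp [eb, Pi.single_apply]
  rw [this]
  exact (Pi.basisFun K (Fin n → Fin 2)).linearIndependent

/-!
STATEMENT 9: The map `Ψ : M^p_q → (V^{⊗n})_k`, `N_w ↦ v_{η_min·w}`, is an isomorphism of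
right `H_n`-modules, where `W_q = ⟨s_1,…,s_{k-1}⟩`, `W_p = ⟨s_{k+1},…,s_{n-1}⟩`,
`η_min = (0,…,0,1,…,1)` (`k` zeros), `S_n` acts on `{0,1}^n` from the right by permuting
entries, and `H_n` acts on `V^{⊗n}` by `H_i ↦ Ȟ_i`.
-/

theorem statement9 (n k : ℕ) (hk : k ≤ n)
    (A : Type) [Ring A] [Algebra K A]
    (H : Equiv.Perm (Fin n) → A)
    (hHLI : LinearIndependent K H)
    (hHspan : Submodule.span K (Set.range H) = ⊤)
    (hone : H 1 = 1)
    (hmul : ∀ (w : Equiv.Perm (Fin n)) (i : Fin (n - 1)),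
      len n (w * s n i) = len n w + 1 → H (w * s n i) = H w * H (s n i))
    (hquad : ∀ i : Fin (n - 1),
      H (s n i) * H (s n i) = (q⁻¹ - q) • H (s n i) + 1)
    (M : Type) [AddCommGroup M] [Module K M]
    (act : M → A → M)
    (hact_addl : ∀ (m m' : M) (a : A), act (m + m') a = act m a + act m' a)
    (hact_addr : ∀ (m : M) (a b : A), act m (a + b) = act m a + act m b)
    (hact_smull : ∀ (c : K) (m : M) (a : A), act (c • m) a = c • act m a)
    (hact_smulr : ∀ (c : K) (m : M) (a : A), act m (c • a) = c • act m a)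
    (hact_one : ∀ m : M, act m 1 = m)
    (hact_mul : ∀ (m : M) (a b : A), act m (a * b) = act (act m a) b)
    (N : Equiv.Perm (Fin n) → M)
    (hN : ∀ w, N w = act (N 1) (H w))
    (hgenP : ∀ i ∈ Pset n k, act (N 1) (H (s n i)) = (-q) • N 1)
    (hgenQ : ∀ i ∈ Qset n k, act (N 1) (H (s n i)) = q⁻¹ • N 1)
    (hNLI : LinearIndependent K
      (fun w : {w : Equiv.Perm (Fin n) // IsShort n (Pset n k ∪ Qset n k) w} => N w))
    (hNspan : Submodule.span K (N '' {w | IsShort n (Pset n k ∪ Qset n k) w}) = ⊤)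
 :
    ∃ Ψ : M →ₗ[K] V n,
      (∀ w : Equiv.Perm (Fin n), IsShort n (Pset n k ∪ Qset n k) w →
        Ψ (N w) = eb (fun i => etaMin n k (w i))) ∧
      Function.Injective Ψ ∧
      LinearMap.range Ψ = weightSpace n k ∧
      (∀ (m : M) (i : Fin (n - 1)),
        Ψ (act m (H (s n i))) = Hop n (i : ℕ) (by have := i.isLt; omega) (Ψ m)) := by
  let v : {w : Equiv.Perm (Fin n) // IsShort n (Pset n k ∪ Qset n k) w} → V n :=
    fun w => eb (fun i => etaMin n k (w.1 i))
  have hv : LinearIndependent K v := by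
    refine (eb_li n).comp (fun w : {w : Equiv.Perm (Fin n) //
      IsShort n (Pset n k ∪ Qset n k) w} => (fun i => etaMin n k (w.1 i))) ?_
    intro w w' h
    exact Subtype.ext (short_inj n k w w' w.2 w'.2 (congrFun h))
  have hspan : ⊤ ≤ Submodule.span K (Set.range
      (fun w : {w : Equiv.Perm (Fin n) // IsShort n (Pset n k ∪ Qset n k) w} => N w)) := by
    rw [← hNspan]
    apply Submodule.span_mono
    rintro _ ⟨w, hw, rfl⟩
    exact ⟨⟨w, hw⟩, rfl⟩
  let b := Module.Basis.mk hNLI hspan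
  let Ψ : M →ₗ[K] V n := (Finsupp.linearCombination K v).comp b.repr.toLinearMap
  have hΨ : ∀ w : Equiv.Perm (Fin n), IsShort n (Pset n k ∪ Qset n k) w →
        Ψ (N w) = eb (fun i => etaMin n k (w i)) := by
    intro w hw
    have : N w = b ⟨w, hw⟩ := by simp [b]
    rw [this]
    simp only [Ψ, LinearMap.comp_apply, LinearEquiv.coe_coe, Module.Basis.repr_self,
      Finsupp.linearCombination_single, one_smul, v]
  refine ⟨Ψ, hΨ, ?_, ?_, ?_⟩
  · have hv' : Function.Injective (Finsupp.linearCombination K v) := hv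
    intro x y hxy
    exact b.repr.injective (hv' hxy)
  · have : LinearMap.range Ψ = LinearMap.range (Finsupp.linearCombination K v) :=
      LinearMap.range_comp_of_range_eq_top _ b.repr.range
    rw [this, Finsupp.range_linearCombination, weightSpace]
    congr 1
    ext f
    constructor
    · rintro ⟨w, rfl⟩
      refine ⟨_, ?_, rfl⟩
      refine Eq.trans ?_ (eta_card n k hk)
      refine Finset.card_bij' (fun i _ => w.1 i) (fun i _ => w.1⁻¹ i) ?_ ?_ ?_ ?_ <;> simp
    · rintro ⟨η, hη, rfl⟩
      obtain ⟨w, hw, rfl⟩ := exists_short n k hk η hη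
      exact ⟨⟨w, hw⟩, rfl⟩
  · intro m i
    let L : M →ₗ[K] M :=
      { toFun := fun m => act m (H (s n i))
        map_add' := fun a c => hact_addl a c _
        map_smul' := fun c a => hact_smull c a _ }
    have key : Ψ.comp L = (Hop n (i : ℕ) (by have := i.isLt; omega)).comp Ψ := by
      refine b.ext ?_
      rintro ⟨w, hw⟩
      have hb : b ⟨w, hw⟩ = N w := by simp [b]
      rw [hb]
      change Ψ (act (N w) (H (s n i))) = Hop n i _ (Ψ (N w))
      rw [hΨ w hw]
      have h01 : ∀ a : Fin 2, a = 0 ∨ a = 1 := by decide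
      have hsh := (short_iff n k w).1 hw
      have hl := lo_lt_hi i
      by_cases he : etaMin n k (w (lo i)) = etaMin n k (w (hi i))
      · have hlt := hsh _ _ hl he
        -- the two values are adjacent
        have hadj : (w (hi i) : ℕ) = w (lo i) + 1 := by
          by_contra hne
          have hlt' := hlt
          rw [Fin.lt_def] at hlt'
          have hbd := (w (hi i)).isLt
          obtain ⟨c, hc⟩ := w.surjective ⟨(w (lo i) : ℕ) + 1, by omega⟩
          have h1 : w (lo i) < w c := by rw [hc, Fin.lt_def]; simp
          have h2 : w c < w (hi i) := by rw [hc, Fin.lt_def]; simp; omega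
          have e1 := eta_mono n k _ _ h1.le
          have e2 := eta_mono n k _ _ h2.le
          have e3 : etaMin n k (w (lo i)) = etaMin n k (w c) := le_antisymm e1 (he ▸ e2)
          have g1 : lo i < c := by
            by_contra hcc
            have : c < lo i := lt_of_le_of_ne (not_lt.1 hcc) (by rintro rfl; exact lt_irrefl _ h1)
            exact absurd h1 (not_lt.2 (hsh _ _ this e3.symm).le)
          have g2 : c < hi i := by
            by_contra hcc
            have : hi i < c := lt_of_le_of_ne (not_lt.1 hcc) (by rintro rfl; exact lt_irrefl _ h2)
            exact absurd h2 (not_lt.2 (hsh _ _ this (he.symm.trans e3)).le)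
          simp only [lo, hi, Fin.lt_def] at g1 g2
          omega
        have hbd := (w (hi i)).isLt
        let j : Fin (n - 1) := ⟨w (lo i), by omega⟩
        have hj1 : lo j = w (lo i) := rfl
        have hj2 : hi j = w (hi i) := by ext; simp [hi, j]; exact hadj.symm
        have hcomm : w * s n i = s n j * w := by
          rw [s_def j, hj1, hj2, s_def i, ← Equiv.mul_swap_eq_swap_mul]
        have hup := len_up n w i hlt
        have hact : act (N w) (H (s n i)) = act (act (N 1) (H (s n j))) (H w) := by
          rw [hN w, ← hact_mul, ← hact_mul, ← hmul w i hup, hcomm,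
            H_left n H hone hmul j _ w rfl (by rw [← hcomm, hup])]
        rw [hact]
        rcases s_mem n k j (by rw [hj1, hj2, he]) with ⟨hP, h1⟩ | ⟨hQ, h1⟩
        · rw [hgenP j hP, hact_smull, ← hN, map_smul, hΨ w hw, hop_11]
          · rw [← hj1, h1]
          · rw [← he, ← hj1, h1]
        · rw [hgenQ j hQ, hact_smull, ← hN, map_smul, hΨ w hw, hop_00]
          · rw [← hj1, h1]
          · rw [← he, ← hj1, h1]
      · have hsh' : IsShort n (Pset n k ∪ Qset n k) (w * s n i) := by
          rw [short_iff]
          intro a c hac hec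
          rw [Equiv.Perm.mul_apply, Equiv.Perm.mul_apply] at *
          refine hsh _ _ (s_lt i a c ?_ hac) hec
          rintro ⟨rfl, rfl⟩
          rw [s_lo, s_hi] at hec
          exact he hec.symm
        rcases lt_or_gt_of_ne (w_ne w i) with hlt | hlt
        · have hη := lt_of_le_of_ne (eta_mono n k _ _ hlt.le) he
          have e0 : etaMin n k (w (lo i)) = 0 ∧ etaMin n k (w (hi i)) = 1 := by
            revert hη
            generalize etaMin n k (w (lo i)) = x
            generalize etaMin n k (w (hi i)) = y
            revert x y; decide
          rw [hN w, ← hact_mul, ← hmul w i (len_up n w i hlt), ← hN, hΨ _ hsh', hop_01]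
          · rfl
          · exact e0.1
          · exact e0.2
        · have hη := lt_of_le_of_ne (eta_mono n k _ _ hlt.le) (Ne.symm he)
          have e0 : etaMin n k (w (lo i)) = 1 ∧ etaMin n k (w (hi i)) = 0 := by
            revert hη
            generalize etaMin n k (w (lo i)) = x
            generalize etaMin n k (w (hi i)) = y
            revert x y; decide
          have hww : w * s n i * s n i = w := by rw [mul_assoc, s_mul_s, mul_one]
          have hHw : H w = H (w * s n i) * H (s n i) := by
            have := hmul (w * s n i) i (by rw [hww]; exact len_down n w i hlt)
            rwa [hww] at this
          have hprod : H w * H (s n i) = (q⁻¹ - q) • H w + H (w * s n i) := by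
            conv_lhs => rw [hHw, mul_assoc, hquad, mul_add, mul_one, mul_smul_comm, ← hHw]
          rw [hN w, ← hact_mul, hprod, hact_addr, hact_smulr, ← hN, ← hN, map_add, map_smul,
            hΨ _ hw, hΨ _ hsh', hop_10]
          · rfl
          · exact e0.1
          · exact e0.2
    exact LinearMap.congr_fun key m
end
end
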